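/- arXiv:1310.0670 — 2 statements merged into one kernel-verified Lean document; each statement's English description precedes it below -/
import Mathlib

section
/- Let Φ : α^ℤ → α^ℤ be a cellular automaton on a finite alphabet α with quiescent state B. The following four conditions are equivalent: (1) Φ is nilpotent; (2) for every x ∈ α^ℤ there exists n ∈ ℕ such that Φ^n(x) = B^∞; (3) for every x ∈ α^ℤ and every i ∈ ℤ there exists n ∈ ℕ such that Φ^m(x)_i = B for all m ≥ n; (4) the limit set satisfies Ω_Φ = {B^∞}. -/
namespace CANil

set_option linter.unusedSectionVars false

variable {α : Type} [Fintype α] [TopologicalSpace α] [DiscreteTopology α]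

/-- the cylinder of configurations agreeing with `x` on `[-k,k]` -/
def Cyl (x : ℤ → α) (k : ℕ) : Set (ℤ → α) := {y | ∀ i : ℤ, |i| ≤ k → y i = x i}


theorem cyl_open (x : ℤ → α) (k : ℕ) : IsOpen (Cyl x k) := by
  have : Cyl x k = ⋂ i ∈ Finset.Icc (-(k : ℤ)) k, {y : ℤ → α | y i = x i} := by
    ext y
    simp only [Cyl, Set.mem_ofPred_eq, Set.mem_iInter, Finset.mem_Icc, abs_le]
  rw [this]
  apply isOpen_biInter_finset
  intro i _
  have h := (isOpen_discrete {x i}).preimage (continuous_apply (A := fun _ : ℤ => α) i)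
  exact h

theorem exists_cyl {U : Set (ℤ → α)} (hU : IsOpen U) {x : ℤ → α} (hx : x ∈ U) :
    ∃ k : ℕ, Cyl x k ⊆ U := by
  obtain ⟨I, u, hu, hsub⟩ := isOpen_pi_iff.1 hU x hx
  refine ⟨∑ i ∈ I, i.natAbs, fun y hy => hsub ?_⟩
  intro i hi
  have h1 : i.natAbs ≤ ∑ i ∈ I, i.natAbs :=
    Finset.single_le_sum (f := fun i : ℤ => i.natAbs) (fun _ _ => Nat.zero_le _) hi
  have : y i = x i := hy i (by rw [Int.abs_eq_natAbs]; exact_mod_cast h1)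
  rw [this]
  exact (hu i hi).2

theorem exists_radius (Φ : (ℤ → α) → (ℤ → α)) (hcont : Continuous Φ)
    (hs : ∀ (a : ℤ) (x : ℤ → α), Φ (fun i => x (i + a)) = fun i => Φ x (i + a)) :
    ∃ r : ℕ, ∀ (x y : ℤ → α) (i : ℤ), (∀ j : ℤ, |j - i| ≤ r → x j = y j) → Φ x i = Φ y i := by
  have h1 : ∀ x : ℤ → α, ∃ k : ℕ, Cyl x k ⊆ {y | Φ y 0 = Φ x 0} := by
    intro x
    apply exists_cyl
    · exact (isOpen_discrete {Φ x 0}).preimage ((continuous_apply 0).comp hcont)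
    · rfl
  choose k hk using h1
  obtain ⟨t, ht⟩ := isCompact_univ.elim_finite_subcover (fun x : ℤ → α => Cyl x (k x))
    (fun x => cyl_open x (k x)) (fun x _ => Set.mem_iUnion.2 ⟨x, fun _ _ => rfl⟩)
  refine ⟨∑ x ∈ t, k x, ?_⟩
  have h0 : ∀ (x y : ℤ → α), (∀ j : ℤ, |j| ≤ (∑ x ∈ t, k x : ℕ) → x j = y j) → Φ x 0 = Φ y 0 := by
    intro x y hxy
    obtain ⟨z, hz⟩ := Set.mem_iUnion.1 (ht (Set.mem_univ x))
    obtain ⟨hzt, hxz⟩ := Set.mem_iUnion.1 hz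
    have hle : k z ≤ ∑ x ∈ t, k x := Finset.single_le_sum (fun _ _ => Nat.zero_le _) hzt
    have hyz : y ∈ Cyl z (k z) := by
      intro i hi
      rw [← hxy i (le_trans hi (by exact_mod_cast hle))]
      exact hxz i hi
    have e1 : Φ x 0 = Φ z 0 := hk z hxz
    have e2 : Φ y 0 = Φ z 0 := hk z hyz
    rw [e1, e2]
  intro x y i hxy
  have := h0 (fun j => x (j + i)) (fun j => y (j + i)) (by
    intro j hj
    exact hxy (j + i) (by simpa using hj))
  rw [hs, hs] at this
  simpa using this

theorem shift_all (Φ : (ℤ → α) → (ℤ → α))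
    (hcomm : ∀ x : ℤ → α, Φ (fun i => x (i + 1)) = fun i => Φ x (i + 1)) :
    ∀ (a : ℤ) (x : ℤ → α), Φ (fun i => x (i + a)) = fun i => Φ x (i + a) := by
  intro a
  induction a with
  | zero => intro x; simp
  | succ n ih =>
    intro x
    have h1 := hcomm (fun i => x (i + n))
    rw [ih x] at h1
    have e : (fun i : ℤ => x (i + (n + 1))) = (fun i : ℤ => x (i + 1 + n)) := by
      funext i; congr 1; ring
    rw [e, h1]
    funext i; ring_nf
  | pred n ih =>
    intro x
    have h1 := hcomm (fun i => x (i + (-n - 1)))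
    have e : (fun i : ℤ => x (i + 1 + (-n - 1))) = (fun i : ℤ => x (i + -n)) := by
      funext i; congr 1; ring
    rw [e, ih x] at h1
    funext i
    have := congrFun h1 (i - 1)
    simp only [sub_add_cancel] at this
    rw [← this]
    congr 1; ring

theorem shift_iter (Φ : (ℤ → α) → (ℤ → α))
    (hs : ∀ (a : ℤ) (x : ℤ → α), Φ (fun i => x (i + a)) = fun i => Φ x (i + a)) (t : ℕ) :
    ∀ (a : ℤ) (x : ℤ → α), Φ^[t] (fun i => x (i + a)) = fun i => Φ^[t] x (i + a) := by
  intro a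
  induction t with
  | zero => intro x; rfl
  | succ n ih =>
    intro x
    rw [Function.iterate_succ_apply, hs, ih, Function.iterate_succ_apply]

theorem radius_iter (Φ : (ℤ → α) → (ℤ → α)) (r : ℕ)
    (hr : ∀ (x y : ℤ → α) (i : ℤ), (∀ j : ℤ, |j - i| ≤ r → x j = y j) → Φ x i = Φ y i) (t : ℕ) :
    ∀ (x y : ℤ → α) (i : ℤ), (∀ j : ℤ, |j - i| ≤ r * t → x j = y j) →
      Φ^[t] x i = Φ^[t] y i := by
  induction t with
  | zero => intro x y i h; exact h i (by simp)
  | succ n ih =>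
    intro x y i h
    rw [Function.iterate_succ_apply', Function.iterate_succ_apply']
    apply hr
    intro j hj
    apply ih
    intro l hl
    apply h
    have : |l - i| ≤ |l - j| + |j - i| := by
      have := abs_add_le (l - j) (j - i)
      simpa using this
    push_cast
    nlinarith

theorem quiet_iter (B : α) (Φ : (ℤ → α) → (ℤ → α)) (hq : Φ (fun _ => B) = fun _ => B) (t : ℕ) :
    Φ^[t] (fun _ => B) = fun _ => B := Function.iterate_fixed hq t

theorem window (B : α) (Φ : (ℤ → α) → (ℤ → α))
    (h3 : ∀ (x : ℤ → α) (i : ℤ), ∃ n : ℕ, ∀ m : ℕ, n ≤ m → Φ^[m] x i = B)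
    (x : ℤ → α) (k : ℕ) : ∃ n : ℕ, ∀ m : ℕ, n ≤ m → ∀ i : ℤ, |i| ≤ k → Φ^[m] x i = B := by
  choose n hn using h3 x
  refine ⟨∑ i ∈ Finset.Icc (-(k : ℤ)) k, n i, fun m hm i hi => hn i m (le_trans ?_ hm)⟩
  exact Finset.single_le_sum (f := n) (fun _ _ => Nat.zero_le _) (by simpa [abs_le] using hi)

/-- Baire category lemma. -/
theorem baire (B : α) (Φ : (ℤ → α) → (ℤ → α)) (hcont : Continuous Φ)
    (h3 : ∀ (x : ℤ → α) (i : ℤ), ∃ n : ℕ, ∀ m : ℕ, n ≤ m → Φ^[m] x i = B)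
    (P : Set (ℤ → α)) (hP : P.Nonempty) (l : ℕ) :
    ∃ x ∈ P, ∃ k T : ℕ, ∀ y ∈ P, y ∈ Cyl x k → ∀ t, T ≤ t → ∀ i : ℤ, |i| ≤ l → Φ^[t] y i = B := by
  by_contra hcon
  push Not at hcon
  let X := closure P
  have : CompactSpace X := isCompact_iff_compactSpace.1 isClosed_closure.isCompact
  let O : ℕ → Set X := fun T => {x | ∃ t, T ≤ t ∧ ∃ i : ℤ, |i| ≤ l ∧ Φ^[t] x.1 i ≠ B}
  have hO : ∀ T, IsOpen (O T) := by
    intro T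
    have : O T = ⋃ t, ⋃ (_ : T ≤ t), ⋃ i : ℤ, ⋃ (_ : |i| ≤ l), {x : X | Φ^[t] x.1 i ∈ ({B}ᶜ : Set α)} := by
      ext x; simp [O]
    rw [this]
    refine isOpen_iUnion fun t => isOpen_iUnion fun _ => isOpen_iUnion fun i => isOpen_iUnion fun _ => ?_
    exact (isOpen_discrete _).preimage
      ((continuous_apply i).comp ((hcont.iterate t).comp continuous_subtype_val))
  have hD : ∀ T, Dense (O T) := by
    intro T
    rw [dense_iff_inter_open]
    rintro U hU ⟨x, hx⟩
    obtain ⟨V, hV, rfl⟩ := isOpen_induced_iff.1 hU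
    obtain ⟨z, hzV, hzP⟩ := mem_closure_iff.1 x.2 V hV hx
    obtain ⟨k, hk⟩ := exists_cyl hV hzV
    obtain ⟨y, hyP, hyz, t, hTt, i, hi, hne⟩ := hcon z hzP k T
    exact ⟨⟨y, subset_closure hyP⟩, hk hyz, t, hTt, i, hi, hne⟩
  have hd := dense_iInter_of_isOpen hO hD
  have : Nonempty X := ⟨⟨hP.some, subset_closure hP.some_mem⟩⟩
  obtain ⟨x, hx⟩ := hd.nonempty
  obtain ⟨n, hn⟩ := window B Φ h3 x.1 l
  obtain ⟨t, ht, i, hi, hne⟩ := Set.mem_iInter.1 hx n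
  exact hne (hn t ht i hi)

/-- finite and mortal configurations -/
def Mort (B : α) (Φ : (ℤ → α) → (ℤ → α)) : Set (ℤ → α) :=
  {x | (∃ s : ℕ, ∀ i : ℤ, (s : ℤ) < |i| → x i = B) ∧ ∃ M, Φ^[M] x = fun _ => B}

theorem lemS (B : α) (Φ : (ℤ → α) → (ℤ → α)) (hcont : Continuous Φ)
    (hq : Φ (fun _ => B) = fun _ => B)
    (h3 : ∀ (x : ℤ → α) (i : ℤ), ∃ n : ℕ, ∀ m : ℕ, n ≤ m → Φ^[m] x i = B) (r : ℕ)
    (hr : ∀ t : ℕ, ∀ (x y : ℤ → α) (i : ℤ), (∀ j : ℤ, |j - i| ≤ r * t → x j = y j) →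
      Φ^[t] x i = Φ^[t] y i) :
    ∃ K : ℕ, ∀ g ∈ Mort B Φ, (∀ i : ℤ, |i| ≤ K → g i = B) → ∀ t, Φ^[t] g 0 = B := by
  by_contra hcon
  push Not at hcon
  obtain ⟨x, ⟨⟨s, hs⟩, M, hM⟩, k, T, hx⟩ := baire B Φ hcont h3 (Mort B Φ)
    ⟨fun _ => B, ⟨0, fun _ _ => rfl⟩, 0, rfl⟩ 0
  obtain ⟨K, hK⟩ : ∃ K : ℕ, K = k + s + 2 * (r * M) + r * (M + T) := ⟨_, rfl⟩
  obtain ⟨g, ⟨⟨s', hs'⟩, M', hM'⟩, hgK, t, hne⟩ := hcon K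
  have hbig : K < r * t := by
    by_contra hle
    push Not at hle
    apply hne
    rw [hr t g (fun _ => B) 0 ?_, quiet_iter B Φ hq]
    intro j hj
    apply hgK
    rw [sub_zero] at hj
    refine le_trans hj (by exact_mod_cast hle)
  have htMT : M + T ≤ t := by
    by_contra hlt
    push Not at hlt
    have := Nat.mul_le_mul_left r hlt.le
    omega
  have key : Φ^[M] (fun i => if |i| ≤ (K : ℤ) then x i else g i) = Φ^[M] g := by
    funext i
    by_cases hi : |i| + r * M ≤ (K : ℤ)
    · have e1 := hr M (fun i => if |i| ≤ (K : ℤ) then x i else g i) x i (by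
        intro j hj
        have : |j| ≤ (K : ℤ) := by
          have := abs_add_le (j - i) i
          rw [sub_add_cancel] at this
          linarith
        simp [this])
      have e2 := hr M g (fun _ => B) i (by
        intro j hj
        apply hgK
        have := abs_add_le (j - i) i
        rw [sub_add_cancel] at this
        linarith)
      rw [e1, e2, hM, quiet_iter B Φ hq]
    · apply hr
      intro j hj
      split_ifs with hjK
      · rw [hgK j hjK]
        apply hs
        have h1 := abs_add_le (i - j) j
        rw [sub_add_cancel, abs_sub_comm] at h1
        have h2 : (K : ℤ) = k + s + 2 * (r * M) + r * (M + T) := by rw [hK]; push_cast; ring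
        have h4 : (0 : ℤ) ≤ r * (M + T) := by positivity
        push Not at hi
        linarith [Int.natCast_nonneg k]
      · rfl
  refine hne ?_
  have hfin := hx (fun i => if |i| ≤ (K : ℤ) then x i else g i) ⟨⟨s + s', ?_⟩, M + M', ?_⟩ ?_ t
    (by omega) 0 (by simp)
  · obtain ⟨d, rfl⟩ : ∃ d, t = d + M := ⟨t - M, by omega⟩
    rw [Function.iterate_add_apply, key, ← Function.iterate_add_apply] at hfin
    exact hfin
  · intro i hi
    push_cast at hi
    have h1 := hs i (by linarith [Int.natCast_nonneg s'])
    have h2 := hs' i (by linarith [Int.natCast_nonneg s])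
    simp [h1, h2]
  · rw [Nat.add_comm, Function.iterate_add_apply, key, ← Function.iterate_add_apply, Nat.add_comm,
      Function.iterate_add_apply, hM', quiet_iter B Φ hq]
  · intro i hi
    have : |i| ≤ (K : ℤ) := le_trans hi (by rw [hK]; push_cast; nlinarith [Int.natCast_nonneg s, Int.natCast_nonneg r, Int.natCast_nonneg M, Int.natCast_nonneg T, mul_nonneg (Int.natCast_nonneg r) (Int.natCast_nonneg M), mul_nonneg (Int.natCast_nonneg r) (Int.natCast_nonneg T)])
    simp [this]

theorem trap (B : α) (Φ : (ℤ → α) → (ℤ → α)) (hq : Φ (fun _ => B) = fun _ => B) (r : ℕ)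
    (hr : ∀ (x y : ℤ → α) (i : ℤ), (∀ j : ℤ, |j - i| ≤ r → x j = y j) → Φ x i = Φ y i)
    (y : ℤ → α) (a b : ℤ) (ha : ∀ m, ∀ i : ℤ, |i - a| ≤ r → Φ^[m] y i = B)
    (hb : ∀ m, ∀ i : ℤ, |i - b| ≤ r → Φ^[m] y i = B) (m : ℕ) :
    Φ^[m] (fun i => if a ≤ i ∧ i ≤ b then y i else B) =
      fun i => if a ≤ i ∧ i ≤ b then Φ^[m] y i else B := by
  induction m with
  | zero => rfl
  | succ m ih =>
    rw [Function.iterate_succ_apply', ih]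
    funext i
    split_ifs with hi
    · rw [Function.iterate_succ_apply']
      apply hr
      intro j hj
      rw [abs_le] at hj
      split_ifs with hj'
      · rfl
      · by_cases hja : j < a
        · rw [ha m j]; rw [abs_le]; constructor <;> omega
        · rw [hb m j]; rw [abs_le]; constructor <;> omega
    · conv_rhs => rw [show B = (fun _ : ℤ => B) i from rfl, ← hq]
      apply hr
      intro j hj
      rw [abs_le] at hj
      split_ifs with hj'
      · by_cases hia : i < a
        · rw [ha m j]; rw [abs_le]; constructor <;> omega
        · rw [hb m j]; rw [abs_le]; constructor <;> omega
      · rfl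

/-- a configuration whose orbit eventually stays in a bounded window is mortal -/
theorem mort_of_bounded (B : α) (Φ : (ℤ → α) → (ℤ → α))
    (h3 : ∀ (x : ℤ → α) (i : ℤ), ∃ n : ℕ, ∀ m : ℕ, n ≤ m → Φ^[m] x i = B)
    (x : ℤ → α) (k n : ℕ) (h : ∀ t, n ≤ t → ∀ i : ℤ, (k : ℤ) < |i| → Φ^[t] x i = B) :
    ∃ M, Φ^[M] x = fun _ => B := by
  obtain ⟨N, hN⟩ := window B Φ h3 x k
  refine ⟨N + n, funext fun i => ?_⟩
  by_cases hi : |i| ≤ (k : ℤ)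
  · exact hN _ (by omega) i hi
  · exact h _ (by omega) i (not_le.1 hi)

/-- two walled finite configurations, far apart, do not send anything to the middle -/
theorem pair (B : α) (Φ : (ℤ → α) → (ℤ → α)) 
    (hq : Φ (fun _ => B) = fun _ => B)
    (h3 : ∀ (x : ℤ → α) (i : ℤ), ∃ n : ℕ, ∀ m : ℕ, n ≤ m → Φ^[m] x i = B) (r : ℕ)
    (hr : ∀ (x y : ℤ → α) (i : ℤ), (∀ j : ℤ, |j - i| ≤ r → x j = y j) → Φ x i = Φ y i)
    (hs : ∀ (t : ℕ) (a : ℤ) (x : ℤ → α),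
      Φ^[t] (fun i => x (i + a)) = fun i => Φ^[t] x (i + a))
    (K : ℕ)
    (hK : ∀ g ∈ Mort B Φ, (∀ i : ℤ, |i| ≤ K → g i = B) → ∀ t, Φ^[t] g 0 = B)
    (w : ℤ → α) (k n : ℕ)
    (hw : ∀ y ∈ Cyl w k, ∀ t, n ≤ t → ∀ i : ℤ, |i| ≤ r → Φ^[t] y i = B)
    (g₁ g₂ : ℤ → α) (s : ℕ) (h1 : g₁ ∈ Cyl w k) (h2 : g₂ ∈ Cyl w k)
    (hs1 : ∀ i : ℤ, (s : ℤ) < |i| → g₁ i = B) (hs2 : ∀ i : ℤ, (s : ℤ) < |i| → g₂ i = B) 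
    (p q : ℤ) (hp : k + s + K + r * n < p) (hqq : k + s + K + r * n < q) :
    ∀ t, n ≤ t → Φ^[t] (fun i : ℤ => if i ≤ 0 then g₁ (i + p) else g₂ (i - q)) 0 = B := by
  have hrn : (0 : ℤ) ≤ r * n := by positivity
  set c : ℤ → α := fun i : ℤ => if i ≤ 0 then g₁ (i + p) else g₂ (i - q) with hc
  have hrt := radius_iter Φ r hr
  -- walls
  have wall1 : ∀ t, n ≤ t → ∀ i : ℤ, |i - (-p)| ≤ r → Φ^[t] c i = B := by
    intro t ht i hi
    have := hw (fun j => c (j + (-p))) (by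
      intro j hj
      rw [← h1 j hj]
      rw [abs_le] at hj
      have : j + -p ≤ 0 := by omega
      simp [hc, this]) t ht (i + p) (by simpa using hi)
    rw [hs] at this
    simpa using this
  have wall2 : ∀ t, n ≤ t → ∀ i : ℤ, |i - q| ≤ r → Φ^[t] c i = B := by
    intro t ht i hi
    have := hw (fun j => c (j + q)) (by
      intro j hj
      rw [← h2 j hj]
      rw [abs_le] at hj
      have : ¬ (j + q ≤ 0) := by omega
      simp only [hc, this, if_false]
      congr 1; ring) t ht (i - q) (by simpa using hi)
    rw [hs] at this
    simpa using this
  have htrap := trap B Φ hq r hr (Φ^[n] c) (-p) q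
    (fun m i hi => by rw [← Function.iterate_add_apply]; exact wall1 _ (by omega) i hi)
    (fun m i hi => by rw [← Function.iterate_add_apply]; exact wall2 _ (by omega) i hi)
  have hb : ∀ i : ℤ, ((p + q).toNat : ℤ) < |i| → ¬ (-p ≤ i ∧ i ≤ q) := by
    intro i hi
    rw [Int.toNat_of_nonneg (by omega), lt_abs] at hi
    omega
  have hm : (fun i => if -p ≤ i ∧ i ≤ q then Φ^[n] c i else B) ∈ Mort B Φ := by
    refine ⟨⟨(p + q).toNat, fun i hi => ?_⟩, ?_⟩
    · simp only [hb i hi, if_false]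
    · apply mort_of_bounded B Φ h3 _ (p + q).toNat 0
      intro t _ i hi
      rw [htrap]
      simp only [hb i hi, if_false]
  have hcB : ∀ i : ℤ, |i| ≤ K → Φ^[n] c i = B := by
    intro i hi
    rw [hrt n c (fun _ => B) i ?_, quiet_iter B Φ hq]
    intro j hj
    rw [abs_le] at hi hj
    simp only [hc]
    split_ifs with hj0
    · apply hs1
      rw [lt_abs]; left
      linarith
    · apply hs2
      rw [lt_abs]; right
      linarith
  intro t ht
  have := hK _ hm (by
    intro i hi
    simp only [hcB i hi, ite_self]) (t - n)
  rw [htrap] at this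
  have h0 : -p ≤ (0 : ℤ) ∧ (0 : ℤ) ≤ q := by constructor <;> linarith
  simp only [h0, and_self, if_true] at this
  rw [← Function.iterate_add_apply, Nat.sub_add_cancel ht] at this
  exact this

theorem walled_mort (B : α) (Φ : (ℤ → α) → (ℤ → α)) 
    (hq : Φ (fun _ => B) = fun _ => B)
    (h3 : ∀ (x : ℤ → α) (i : ℤ), ∃ n : ℕ, ∀ m : ℕ, n ≤ m → Φ^[m] x i = B) (r : ℕ)
    (hr : ∀ (x y : ℤ → α) (i : ℤ), (∀ j : ℤ, |j - i| ≤ r → x j = y j) → Φ x i = Φ y i)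
    (hs : ∀ (t : ℕ) (a : ℤ) (x : ℤ → α),
      Φ^[t] (fun i => x (i + a)) = fun i => Φ^[t] x (i + a))
    (K : ℕ)
    (hK : ∀ g ∈ Mort B Φ, (∀ i : ℤ, |i| ≤ K → g i = B) → ∀ t, Φ^[t] g 0 = B)
    (w : ℤ → α) (k n : ℕ)
    (hw : ∀ y ∈ Cyl w k, ∀ t, n ≤ t → ∀ i : ℤ, |i| ≤ r → Φ^[t] y i = B)
    (g : ℤ → α) (s : ℕ) (h1 : g ∈ Cyl w k) 
    (hs1 : ∀ i : ℤ, (s : ℤ) < |i| → g i = B) : g ∈ Mort B Φ := by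
  refine ⟨⟨s, hs1⟩, mort_of_bounded B Φ h3 g (k + s + K + r * n) n ?_⟩
  intro t ht i hi
  have hrt := radius_iter Φ r hr t
  have hrn : (0 : ℤ) ≤ r * n := by positivity
  have hrt0 : (0 : ℤ) ≤ r * t := by positivity
  push_cast at hi
  rw [lt_abs] at hi
  have P := pair B Φ hq h3 r hr hs K hK w k n hw g g s h1 h1 hs1 hs1
  have sh : Φ^[t] g i = Φ^[t] (fun j => g (j + i)) 0 := by rw [hs]; simp
  rw [sh]
  rcases hi with hi | hi
  · rw [← P i (i + r * t) hi (by linarith) t ht]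
    apply hrt
    intro j hj
    rw [sub_zero, abs_le] at hj
    split_ifs with hj0
    · rfl
    · rw [hs1, hs1]
      · rw [lt_abs]; right; linarith
      · rw [lt_abs]; left; push Not at hj0; linarith
  · rw [← P (-i + r * t) (-i) (by linarith) hi t ht]
    apply hrt
    intro j hj
    rw [sub_zero, abs_le] at hj
    split_ifs with hj0
    · rw [hs1, hs1]
      · rw [lt_abs]; left; linarith
      · rw [lt_abs]; right; linarith
    · congr 1; ring

theorem main (B : α) (Φ : (ℤ → α) → (ℤ → α)) (hcont : Continuous Φ)
    (hcomm : ∀ x : ℤ → α, Φ (fun i => x (i + 1)) = fun i => Φ x (i + 1))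
    (hq : Φ (fun _ => B) = fun _ => B)
    (h3 : ∀ (x : ℤ → α) (i : ℤ), ∃ n : ℕ, ∀ m : ℕ, n ≤ m → Φ^[m] x i = B) :
    ∃ n : ℕ, ∀ x : ℤ → α, Φ^[n] x = fun _ => B := by
  have hs0 := shift_all Φ hcomm
  have hs := shift_iter Φ hs0
  obtain ⟨r, hr⟩ := exists_radius Φ hcont hs0
  have hrt := radius_iter Φ r hr
  obtain ⟨K, hK⟩ := lemS B Φ hcont hq h3 r hrt
  obtain ⟨w, -, k, n, hw⟩ := baire B Φ hcont h3 Set.univ ⟨fun _ => B, trivial⟩ r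
  have hw' : ∀ y ∈ Cyl w k, ∀ t, n ≤ t → ∀ i : ℤ, |i| ≤ r → Φ^[t] y i = B :=
    fun y hy => hw y trivial hy
  -- every configuration vanishing on `[-K,K]` keeps its central cell quiet
  have hall : ∀ x : ℤ → α, (∀ i : ℤ, |i| ≤ K → x i = B) → ∀ t, Φ^[t] x 0 = B := by
    intro x hx t
    -- window size
    obtain ⟨L, hL⟩ : ∃ L : ℕ, L = K + r * t := ⟨_, rfl⟩
    obtain ⟨a, ha⟩ : ∃ a : ℤ, a = k + L + 1 := ⟨_, rfl⟩
    -- wall around `0`, word around `a`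
    let g : ℤ → α := fun i => if |i| ≤ (k : ℤ) then w i else if |i - a| ≤ (L : ℤ) then x (i - a) else B
    have hgs : ∀ i : ℤ, ((k + 2 * L + 1 + k : ℕ) : ℤ) < |i| → g i = B := by
      intro i hi
      push_cast at hi
      have h1 : ¬ |i| ≤ (k : ℤ) := by omega
      have h2 : ¬ |i - a| ≤ (L : ℤ) := by
        rw [abs_le]; rw [lt_abs] at hi; omega
      simp [g, h1, h2]
    have hgm := walled_mort B Φ hq h3 r hr hs K hK w k n hw' g _
      (fun i hi => by simp [g, hi]) hgs
    obtain ⟨-, M, hM⟩ := hgm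
    have hgx : ∀ j : ℤ, |j| ≤ (L : ℤ) → g (j + a) = x j := by
      intro j hj
      have h1 : ¬ |j + a| ≤ (k : ℤ) := by
        rw [abs_le] at hj ⊢; omega
      simp [g, h1, hj]
    have hKg := hK (fun i => g (i + a)) ⟨⟨k + 2 * L + 1 + k + a.natAbs, fun i hi => ?_⟩, M, ?_⟩ ?_ t
    · rw [← hKg]
      apply hrt
      intro j hj
      rw [sub_zero] at hj
      rw [hgx]
      rw [hL]; push_cast; linarith [Int.natCast_nonneg K]
    · apply hgs
      push_cast at hi ⊢
      have := abs_add_le (i + a) (-a)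
      rw [add_neg_cancel_right, abs_neg] at this
      linarith
    · rw [hs, hM]
    · intro i hi
      have hrt0 : (0 : ℤ) ≤ r * t := by positivity
      show g (i + a) = B
      rw [hgx i (by rw [hL]; push_cast; linarith)]
      exact hx i hi
  -- compactness
  obtain ⟨T, hT⟩ := isCompact_univ.elim_finite_subcover
    (fun m : ℕ => Φ^[m] ⁻¹' (Cyl (fun _ => B) K))
    (fun m => (cyl_open _ K).preimage (hcont.iterate m)) (fun x _ => by
      obtain ⟨m, hm⟩ := window B Φ h3 x K
      exact Set.mem_iUnion.2 ⟨m, fun i hi => hm m le_rfl i hi⟩)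
  have h0 : ∀ x : ℤ → α, Φ^[∑ m ∈ T, m] x 0 = B := by
    intro x
    obtain ⟨m, hm⟩ := Set.mem_iUnion.1 (hT (Set.mem_univ x))
    obtain ⟨hmT, hmx⟩ := Set.mem_iUnion.1 hm
    have hle : m ≤ ∑ m ∈ T, m := Finset.single_le_sum (f := fun m : ℕ => m) (fun _ _ => Nat.zero_le _) hmT
    rw [← Nat.sub_add_cancel hle, Function.iterate_add_apply]
    exact hall _ hmx _
  refine ⟨∑ m ∈ T, m, fun x => funext fun i => ?_⟩
  have := h0 (fun j => x (j + i))
  rw [hs] at this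
  simpa using this

theorem limit_nil (B : α) (Φ : (ℤ → α) → (ℤ → α)) (hcont : Continuous Φ)
    (hcomm : ∀ x : ℤ → α, Φ (fun i => x (i + 1)) = fun i => Φ x (i + 1))
    (h4 : (⋂ n : ℕ, Φ^[n] '' Set.univ) = {fun _ => B}) :
    ∃ n : ℕ, ∀ x : ℤ → α, Φ^[n] x = fun _ => B := by
  have hs := shift_iter Φ (shift_all Φ hcomm)
  have hcl : ∀ n, IsCompact (Φ^[n] '' Set.univ) := fun n => isCompact_univ.image (hcont.iterate n)
  have hdir : Directed (· ⊇ ·) (fun n : ℕ => Φ^[n] '' Set.univ) := by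
    apply directed_of_isDirected_le
    intro m n hmn
    rintro _ ⟨x, -, rfl⟩
    refine ⟨Φ^[n - m] x, trivial, ?_⟩
    rw [← Function.iterate_add_apply]
    congr 2
    omega
  obtain ⟨n, hn⟩ := exists_subset_nhds_of_isCompact hdir hcl (U := Cyl (fun _ => B) 0) (by
    intro x hx
    rw [h4] at hx
    rw [Set.mem_singleton_iff.1 hx]
    exact (cyl_open _ 0).mem_nhds fun _ _ => rfl)
  refine ⟨n, fun x => funext fun i => ?_⟩
  have : Φ^[n] (fun j => x (j + i)) 0 = B :=
    hn ⟨fun j => x (j + i), trivial, rfl⟩ 0 (by simp)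
  rw [hs] at this
  simpa using this

end CANil


/-- For a cellular automaton `Φ` on `α^ℤ` (with `α` finite and discrete)
with quiescent state `B`, the following are equivalent:
(1) `Φ` is nilpotent;
(2) every configuration reaches the constant-`B` configuration;
(3) every cell of every configuration is eventually constantly `B`;
(4) the limit set `Ω_Φ = ⋂ₙ Φⁿ(α^ℤ)` equals `{B^∞}`. -/
theorem cellular_automaton_nilpotency_characterizations
    {α : Type} [Fintype α] [TopologicalSpace α] [DiscreteTopology α]
    (B : α) (Φ : (ℤ → α) → (ℤ → α))
    (hcont : Continuous Φ)
    (hcomm : ∀ x : ℤ → α, Φ (fun i => x (i + 1)) = fun i => Φ x (i + 1))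
    (hq : Φ (fun _ => B) = fun _ => B) :
    List.TFAE
      [ ∃ n : ℕ, ∀ x : ℤ → α, Φ^[n] x = fun _ => B,
        ∀ x : ℤ → α, ∃ n : ℕ, Φ^[n] x = fun _ => B,
        ∀ (x : ℤ → α) (i : ℤ), ∃ n : ℕ, ∀ m : ℕ, n ≤ m → Φ^[m] x i = B,
        (⋂ n : ℕ, Φ^[n] '' Set.univ) = {fun _ => B} ] := by
  tfae_have 1 → 2 := fun ⟨n, hn⟩ x => ⟨n, hn x⟩
  tfae_have 2 → 3 := by
    intro h x i
    obtain ⟨n, hn⟩ := h x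
    refine ⟨n, fun m hm => ?_⟩
    rw [← Nat.sub_add_cancel hm, Function.iterate_add_apply, hn, Function.iterate_fixed hq]
  tfae_have 3 → 1 := CANil.main B Φ hcont hcomm hq
  tfae_have 4 → 1 := CANil.limit_nil B Φ hcont hcomm
  tfae_have 1 → 4 := by
    rintro ⟨n, hn⟩
    apply Set.Subset.antisymm
    · intro x hx
      obtain ⟨y, -, rfl⟩ := Set.mem_iInter.1 hx n
      exact hn y
    · rintro _ rfl
      exact Set.mem_iInter.2 fun m => ⟨_, trivial, Function.iterate_fixed hq m⟩
  tfae_finish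
end

section
/- There exist a finite alphabet α, a state B ∈ α, and a cellular automaton Φ : α^ℤ → α^ℤ with quiescent state B such that Φ is uniquely ergodic but not nilpotent. -/
open MeasureTheory

namespace UE

/-- Effects attached to addresses. -/
inductive Ef where
  | none | nop | chk | adv | swap | swapfl
  deriving DecidableEq

/-- Addresses: role, clock, direction flag, effect flag. -/
@[ext] structure Adr where
  r : Bool
  τ : Fin 212
  d : Bool
  e : Ef
  deriving DecidableEq

open Classical

/-- State of a particle: address and payload. -/
abbrev St := Adr × Adr

def dir (a : Adr) : Bool :=
  if a.τ.val < 4 then a.r else if a.τ.val < 8 then !a.r else if a.τ.val < 12 then a.r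
  else if a.τ.val < 208 then a.d else !a.r

def Kact (a : Adr) : Prop := a.e ≠ Ef.none ∧ a.d = !a.r

noncomputable def eff (a : Adr) : Ef :=
  if a.τ = 0 then Ef.adv
  else if a.τ = 8 then (if a.e = Ef.none then Ef.nop else if a.d then a.e else Ef.chk)
  else if a.τ = 4 then (if Kact a then Ef.swap else Ef.none)
  else if a.τ = 12 then (if Kact a then Ef.swapfl else Ef.none)
  else Ef.none

def suc (a : Adr) : Adr := { a with τ := a.τ + 1 }

noncomputable def upd (a b : Adr) : Adr :=
  if a.τ = 0 then { a with d := dir b, e := eff b } else a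

noncomputable def fx (a b : Adr) : Adr := if a.r = false then upd a b else a

def mc (a b : Adr) : Prop :=
  a.τ = b.τ ∧
  (((a.τ = 0 ∨ a.τ = 8) ∧ a.r = false ∧ b.r = true ∧ a.d = b.d ∧ a.e = b.e) ∨
   ((a.τ = 4 ∨ a.τ = 12) ∧ a.r = true ∧ b.r = false ∧ a.d = false ∧ b.d = true ∧
      a.e = b.e ∧ a.e ≠ Ef.none))

noncomputable def act (e : Ef) (b c : Adr) : Option (Adr × Adr) :=
  match e with
  | Ef.none => some (b, c)
  | Ef.nop => some (b, c)
  | Ef.chk => if mc b c then some (b, c) else none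
  | Ef.adv => some (suc (fx b c), c)
  | Ef.swap => some (c, b)
  | Ef.swapfl => some (c, upd b c)

def need (a : Adr) : Prop := eff (suc a) ≠ Ef.none

def nx (s : St) : St := (suc s.1, s.2)

noncomputable def meet (l r : St) : Option (St × St) :=
  if mc (suc l.1) (suc r.1) then
    (act (eff (suc l.1)) l.2 r.2).map
      (fun p => ((upd (suc l.1) p.1, p.1), (upd (suc r.1) p.1, p.2)))
  else none

theorem meet_iff (a b c e : Adr) (l r : St) : meet (a, b) (c, e) = some (l, r) ↔
    mc (suc a) (suc c) ∧ ∃ x y, act (eff (suc a)) b e = some (x, y) ∧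
      l = (upd (suc a) x, x) ∧ r = (upd (suc c) x, y) := by
  unfold meet
  by_cases h : mc (suc a) (suc c)
  · simp only [h, if_true, Option.map_eq_some_iff, Prod.exists, true_and, Prod.mk.injEq]
    constructor
    · rintro ⟨x, y, h1, h2, h3⟩
      exact ⟨x, y, h1, h2.symm, h3.symm⟩
    · rintro ⟨x, y, h1, h2, h3⟩
      exact ⟨x, y, h1, h2.symm, h3.symm⟩
  · simp [h]

def sg (b : Bool) : ℤ := if b then 1 else -1
@[simp] theorem sg_true : sg true = 1 := rfl
@[simp] theorem sg_false : sg false = -1 := rfl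

/-- displacement after `k` steps -/
def ps (r d : Bool) (k : ℕ) : ℤ :=
  if k ≤ 4 then sg r * k else if k ≤ 8 then sg r * (8 - k) else if k ≤ 12 then sg r * (k - 8)
  else if k ≤ 208 then 4 * sg r + sg d * (k - 12) else 4 * sg r + 196 * sg d - sg r * (k - 208)

theorem ps_succ (r d : Bool) (e : Ef) (k : Fin 212) :
    ps r d (k.val + 1) = ps r d k.val + sg (dir ⟨r, k, d, e⟩) := by
  obtain ⟨k, hk⟩ := k
  unfold ps dir
  dsimp only
  push_cast
  split_ifs <;> first | omega | (cases r <;> cases d <;> simp [sg] <;> omega)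

theorem upd_of_ne {a b : Adr} (h : a.τ ≠ 0) : upd a b = a := by simp [upd, h]
theorem fx_of_ne {a b : Adr} (h : a.τ ≠ 0) : fx a b = a := by simp [fx, upd_of_ne h]
theorem dir_upd (a b : Adr) : dir (upd a b) = dir a := by
  unfold upd
  split_ifs with h
  · simp [dir, h]
  · rfl
theorem dir_fx (a b : Adr) : dir (fx a b) = dir a := by
  unfold fx
  split_ifs
  · exact dir_upd a b
  · rfl
theorem upd_r (a b : Adr) : (upd a b).r = a.r := by unfold upd; split_ifs <;> rfl
theorem upd_τ (a b : Adr) : (upd a b).τ = a.τ := by unfold upd; split_ifs <;> rfl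
theorem eff_upd (a b : Adr) : eff (upd a b) = eff a := by
  unfold upd
  split_ifs with h
  · simp [eff, h]
  · rfl
theorem τ_ne_of_eff {a : Adr} (h : eff a = Ef.none) : a.τ ≠ 0 := by
  intro h0; simp [eff, h0] at h
theorem mc_eff {a b : Adr} (h : mc a b) : eff a ≠ Ef.none ∧ eff b ≠ Ef.none := by
  obtain ⟨h1, h2⟩ := h
  rcases h2 with ⟨h2 | h2, h3, h4, h5, h6⟩ | ⟨h2 | h2, h3, h4, h5, h6, h7, h8⟩ <;>
    (rw [h2] at h1; simp only [eff, h2, ← h1, Kact])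
  · simp
  · constructor <;> (simp; split_ifs <;> simp_all)
  · have h9 := h8
    rw [h7] at h9
    simp [h3, h4, h5, h6, h8, h9]
  · have h9 := h8
    rw [h7] at h9
    simp [h3, h4, h5, h6, h8, h9]

/-- Ancestors. -/
def anc (pr : ℤ → ℤ → ℤ) : ℕ → ℤ → ℤ → ℤ
  | 0, _, a => a
  | k + 1, t, a => anc pr k (t - 1) (pr t a)

theorem anc_add (pr : ℤ → ℤ → ℤ) (j k : ℕ) (t a : ℤ) :
    anc pr (k + j) t a = anc pr j (t - k) (anc pr k t a) := by
  induction k generalizing t a with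
  | zero => simp [anc]
  | succ k ih =>
    rw [show k + 1 + j = (k + j) + 1 by ring]
    simp only [anc]
    rw [ih]
    congr 1
    push_cast; ring

/-- What one needs to know about a level of the hierarchy. -/
structure Lev (pr : ℤ → ℤ → ℤ) (W : ℤ → ℤ → ℤ → St → Prop) (q D : ℤ) (T : ℕ)
    (S : ℤ → ℤ → ℤ → Prop) : Prop where
  uniq : ∀ {s t a a' σ σ'}, W s t a σ → W s t a' σ' → dir σ.1 = dir σ'.1 → σ = σ' ∧ a = a'
  step : ∀ {s t a σ'}, W s t a σ' →
    ∃ σ, W (s - q * sg (dir σ'.1)) (t - T) (anc pr T t a) σ ∧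
      ((¬ need σ.1 ∧ σ' = nx σ) ∨
       (∃ σs σs' as, W (s - q * sg (dir σ'.1) + D) (t - T) as σs ∧
          meet σ σs = some (σ', σs') ∧ S (t - T) (anc pr T t a) as) ∨
       (∃ σs σs' as, W (s - q * sg (dir σ'.1) - D) (t - T) as σs ∧
          meet σs σ = some (σs', σ') ∧ S (t - T) as (anc pr T t a)))

namespace Lev
variable {pr : ℤ → ℤ → ℤ} {W : ℤ → ℤ → ℤ → St → Prop} {q D : ℤ} {T : ℕ}
  {S : ℤ → ℤ → ℤ → Prop}

theorem step_solo (L : Lev pr W q D T S) {s t a : ℤ} {σ' : St} (h : W s t a σ')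
    (he : eff σ'.1 = Ef.none) : ∃ σ, W (s - q * sg (dir σ'.1)) (t - T) (anc pr T t a) σ ∧
      σ' = nx σ := by
  obtain ⟨σ, h1, h2⟩ := L.step h
  refine ⟨σ, h1, ?_⟩
  rcases h2 with ⟨_, h2⟩ | ⟨σs, σs', as, _, h3, _⟩ | ⟨σs, σs', as, _, h3, _⟩
  · exact h2
  · obtain ⟨h4, x, y, h5, h6, h7⟩ := (meet_iff _ _ _ _ _ _).1 h3
    rw [h6] at he
    exact absurd (by simpa [eff_upd] using he) (mc_eff h4).1
  · obtain ⟨h4, x, y, h5, h6, h7⟩ := (meet_iff _ _ _ _ _ _).1 h3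
    rw [h7] at he
    exact absurd (by simpa [eff_upd] using he) (mc_eff h4).2

/-- one step back, no event -/
theorem back1 (L : Lev pr W q D T S) {s t a : ℤ} {r d : Bool} {τ τ' : Fin 212} {e : Ef} {b : Adr}
    (h : W s t a (⟨r, τ, d, e⟩, b)) (hτ : τ'.val + 1 = τ.val)
    (he : eff ⟨r, τ, d, e⟩ = Ef.none) :
    W (s - q * sg (dir ⟨r, τ, d, e⟩)) (t - T) (anc pr T t a) (⟨r, τ', d, e⟩, b) := by
  obtain ⟨⟨α, b'⟩, h1, h2⟩ := L.step_solo h he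
  have : α = ⟨r, τ', d, e⟩ ∧ b' = b := by
    simp only [nx, suc, Prod.mk.injEq, Adr.mk.injEq] at h2
    obtain ⟨⟨h3, h4, h5, h6⟩, h7⟩ := h2
    refine ⟨?_, h7.symm⟩
    have h8 : α.τ = τ' := by
      have : τ = τ' + 1 := by
        apply Fin.ext
        rw [Fin.val_add]
        have := τ.isLt
        simp; omega
      rw [h4] at this
      exact add_right_cancel this
    ext1 <;> simp_all
  rw [← this.1, ← this.2]
  exact h1

/-- one step back, clock nonzero, any event -/
theorem back1' (L : Lev pr W q D T S) {s t a : ℤ} {r d : Bool} {τ τ' : Fin 212} {e : Ef} {b : Adr}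
    (h : W s t a (⟨r, τ, d, e⟩, b)) (hτ : τ'.val + 1 = τ.val) :
    ∃ b', W (s - q * sg (dir ⟨r, τ, d, e⟩)) (t - T) (anc pr T t a) (⟨r, τ', d, e⟩, b') := by
  obtain ⟨⟨α, b'⟩, h1, h2⟩ := L.step h
  have h0 : τ = τ' + 1 := by
    apply Fin.ext
    rw [Fin.val_add]
    have := τ.isLt
    simp; omega
  have hne : τ ≠ 0 := by
    intro h; rw [h] at hτ; simp at hτ
  have key : suc α = ⟨r, τ, d, e⟩ := by
    rcases h2 with ⟨_, h2⟩ | ⟨σs, σs', as, _, h3, _⟩ | ⟨σs, σs', as, _, h3, _⟩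
    · simp only [nx, Prod.mk.injEq] at h2; exact h2.1.symm
    · obtain ⟨h4, x, y, h5, h6, h7⟩ := (meet_iff _ _ _ _ _ _).1 h3
      simp only [Prod.mk.injEq] at h6
      have := congrArg Adr.τ h6.1
      rw [upd_τ] at this
      rw [h6.1, upd_of_ne]
      rw [← this]; exact hne
    · obtain ⟨h4, x, y, h5, h6, h7⟩ := (meet_iff _ _ _ _ _ _).1 h3
      simp only [Prod.mk.injEq] at h7
      have := congrArg Adr.τ h7.1
      rw [upd_τ] at this
      rw [h7.1, upd_of_ne]
      rw [← this]; exact hne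
  have : α = ⟨r, τ', d, e⟩ := by
    simp only [suc, Adr.mk.injEq] at key
    obtain ⟨h3, h4, h5, h6⟩ := key
    rw [h0] at h4
    have := add_right_cancel h4
    ext1 <;> simp_all
  exact ⟨b', by rw [← this]; exact h1⟩

/-- several steps back, no event -/
theorem run (L : Lev pr W q D T S) {s t a : ℤ} {r d : Bool} {τ : Fin 212} {e : Ef} {b : Adr}
    (h : W s t a (⟨r, τ, d, e⟩, b)) (k : ℕ) (τ' : Fin 212) (hτ : τ'.val + k = τ.val)
    (he : ∀ j : Fin 212, τ' < j → j ≤ τ → eff ⟨r, j, d, e⟩ = Ef.none) :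
    W (s - q * (ps r d (τ.val + 1) - ps r d (τ'.val + 1))) (t - (k * T : ℕ)) (anc pr (k * T) t a)
      (⟨r, τ', d, e⟩, b) := by
  induction k generalizing τ' with
  | zero =>
    have : τ' = τ := Fin.ext (by simpa using hτ)
    subst this
    simpa [anc] using h
  | succ k ih =>
    have hlt : τ'.val + 1 < 212 := by have := τ.isLt; omega
    have h1 := ih ⟨τ'.val + 1, hlt⟩ (by simp; omega) (fun j hj hj' => he j (by
      rw [Fin.lt_def] at *; simp at hj; omega) hj')
    have h2 := L.back1 h1 (τ' := τ') rfl (he _ (by rw [Fin.lt_def]; simp) (by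
      rw [Fin.le_def]; simp; omega))
    have h3 := ps_succ r d e ⟨τ'.val + 1, hlt⟩
    simp only at h3
    rw [add_mul, one_mul, anc_add]
    convert h2 using 1
    · simp only [h3]; ring
    · push_cast; ring

/-- several steps back, with events -/
theorem run' (L : Lev pr W q D T S) {s t a : ℤ} {r d : Bool} {τ : Fin 212} {e : Ef} {b : Adr}
    (h : W s t a (⟨r, τ, d, e⟩, b)) (k : ℕ) (τ' : Fin 212) (hτ : τ'.val + k = τ.val) :
    ∃ b', W (s - q * (ps r d (τ.val + 1) - ps r d (τ'.val + 1))) (t - (k * T : ℕ))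
      (anc pr (k * T) t a) (⟨r, τ', d, e⟩, b') := by
  induction k generalizing τ' with
  | zero =>
    have : τ' = τ := Fin.ext (by simpa using hτ)
    subst this
    exact ⟨b, by simpa [anc] using h⟩
  | succ k ih =>
    have hlt : τ'.val + 1 < 212 := by have := τ.isLt; omega
    obtain ⟨b1, h1⟩ := ih ⟨τ'.val + 1, hlt⟩ (by simp; omega)
    obtain ⟨b2, h2⟩ := L.back1' h1 (τ' := τ') rfl
    refine ⟨b2, ?_⟩
    have h3 := ps_succ r d e ⟨τ'.val + 1, hlt⟩
    simp only at h3
    rw [add_mul, one_mul, anc_add]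
    convert h2 using 1
    · simp only [h3]; ring
    · push_cast; ring

end Lev
end UE
namespace UE
open Classical

theorem suc_eq {α : Adr} {r d : Bool} {τ : Fin 212} {e : Ef} (h : suc α = ⟨r, τ + 1, d, e⟩) :
    α = ⟨r, τ, d, e⟩ := by
  obtain ⟨r', τ', d', e'⟩ := α
  simp only [suc, Adr.mk.injEq] at h
  obtain ⟨h3, h4, h5, h6⟩ := h
  rw [h3, add_right_cancel h4, h5, h6]

theorem mc_l1 {β : Adr} {τ : Fin 212} {d : Bool} {e : Ef} (h : mc ⟨false, τ, d, e⟩ β) :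
    β = ⟨true, τ, d, e⟩ := by
  obtain ⟨r', τ', d', e'⟩ := β
  simp only [mc] at h
  simp only [Adr.mk.injEq]
  grind

theorem mc_r2 {β : Adr} {τ : Fin 212} {d : Bool} {e : Ef} (h : mc β ⟨true, τ, d, e⟩) :
    β = ⟨false, τ, d, e⟩ := by
  obtain ⟨r', τ', d', e'⟩ := β
  simp only [mc] at h
  simp only [Adr.mk.injEq]
  grind

theorem mc_l2 {β : Adr} {τ : Fin 212} {d : Bool} {e : Ef} (h : mc ⟨true, τ, d, e⟩ β) :
    β = ⟨false, τ, true, e⟩ := by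
  obtain ⟨r', τ', d', e'⟩ := β
  simp only [mc] at h
  simp only [Adr.mk.injEq]
  grind

theorem mc_r1 {β : Adr} {τ : Fin 212} {d : Bool} {e : Ef} (h : mc β ⟨false, τ, d, e⟩) :
    β = ⟨true, τ, false, e⟩ := by
  obtain ⟨r', τ', d', e'⟩ := β
  simp only [mc] at h
  simp only [Adr.mk.injEq]
  grind

theorem mc_τ1 {β : Adr} {τ : Fin 212} {d : Bool} {e : Ef} (h : mc ⟨false, τ, d, e⟩ β) :
    τ = 0 ∨ τ = 8 := by
  simp only [mc] at h; grind
theorem mc_τ2 {β : Adr} {τ : Fin 212} {d : Bool} {e : Ef} (h : mc β ⟨true, τ, d, e⟩) :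
    τ = 0 ∨ τ = 8 := by
  simp only [mc] at h; grind
theorem mc_τ3 {β : Adr} {τ : Fin 212} {d : Bool} {e : Ef} (h : mc ⟨true, τ, d, e⟩ β) :
    (τ = 4 ∨ τ = 12) ∧ d = false ∧ e ≠ Ef.none := by
  simp only [mc] at h; grind
theorem mc_τ4 {β : Adr} {τ : Fin 212} {d : Bool} {e : Ef} (h : mc β ⟨false, τ, d, e⟩) :
    (τ = 4 ∨ τ = 12) ∧ d = true ∧ e ≠ Ef.none := by
  simp only [mc] at h; grind

namespace Lev
variable {pr : ℤ → ℤ → ℤ} {W : ℤ → ℤ → ℤ → St → Prop} {q D : ℤ} {T : ℕ}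
  {S : ℤ → ℤ → ℤ → Prop}

theorem ev (L : Lev pr W q D T S) {s t a : ℤ} {α' b' : Adr} (h : W s t a (α', b'))
    (he : eff α' ≠ Ef.none) :
    (∃ α b αs c as y, W (s - q * sg (dir α')) (t - T) (anc pr T t a) (α, b) ∧
      W (s - q * sg (dir α') + D) (t - T) as (αs, c) ∧ mc (suc α) (suc αs) ∧
      act (eff (suc α)) b c = some (b', y) ∧ α' = upd (suc α) b' ∧
      S (t - T) (anc pr T t a) as) ∨
    (∃ α c αs b as x, W (s - q * sg (dir α')) (t - T) (anc pr T t a) (α, c) ∧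
      W (s - q * sg (dir α') - D) (t - T) as (αs, b) ∧ mc (suc αs) (suc α) ∧
      act (eff (suc αs)) b c = some (x, b') ∧ α' = upd (suc α) x ∧
      S (t - T) as (anc pr T t a)) := by
  obtain ⟨⟨α, b⟩, h1, h2⟩ := L.step h
  rcases h2 with ⟨h3, h2⟩ | ⟨⟨αs, c⟩, σs', as, h2, h3, h8⟩ | ⟨⟨αs, c⟩, σs', as, h2, h3, h8⟩
  · exfalso
    simp only [nx, Prod.mk.injEq] at h2
    rw [h2.1] at he
    exact h3 he
  · left
    obtain ⟨h4, x, y, h5, h6, h7⟩ := (meet_iff _ _ _ _ _ _).1 h3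
    simp only [Prod.mk.injEq] at h6
    obtain ⟨h6, rfl⟩ := h6
    exact ⟨α, b, αs, c, as, y, h1, h2, h4, h5, h6, h8⟩
  · right
    obtain ⟨h4, x, y, h5, h6, h7⟩ := (meet_iff _ _ _ _ _ _).1 h3
    simp only [Prod.mk.injEq] at h7
    obtain ⟨h7, rfl⟩ := h7
    exact ⟨α, b, αs, c, as, x, h1, h2, h4, h5, h7, h8⟩

/-- generic left event at nonzero clock -/
theorem evL (L : Lev pr W q D T S) {s t a : ℤ} {r d : Bool} {τ : Fin 212} {e : Ef} {b' : Adr}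
    (h : W s t a (⟨r, τ + 1, d, e⟩, b')) (he : eff ⟨r, τ + 1, d, e⟩ ≠ Ef.none)
    (h0 : τ + 1 ≠ 0) (hr : r = false ↔ τ + 1 = 8) :
    ∃ b αs c as y, W (s - q * sg (dir ⟨r, τ + 1, d, e⟩)) (t - T) (anc pr T t a) (⟨r, τ, d, e⟩, b) ∧
      W (s - q * sg (dir ⟨r, τ + 1, d, e⟩) + D) (t - T) as (αs, c) ∧
      mc ⟨r, τ + 1, d, e⟩ (suc αs) ∧
      act (eff ⟨r, τ + 1, d, e⟩) b c = some (b', y) ∧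
      S (t - T) (anc pr T t a) as := by
  rcases L.ev h he with ⟨α, b, αs, c, as, y, h1, h2, h3, h4, h5, h6⟩ |
    ⟨α, c, αs, b, as, x, h1, h2, h3, h4, h5, h6⟩
  · have h7 := congrArg Adr.τ h5
    rw [upd_τ] at h7
    rw [upd_of_ne (by rw [← h7]; exact h0)] at h5
    rw [← h5] at h3 h4
    have h8 := suc_eq h5.symm
    subst h8
    exact ⟨b, αs, c, as, y, h1, h2, h3, h4, h6⟩
  · exfalso
    have h7 := congrArg Adr.τ h5
    rw [upd_τ] at h7
    rw [upd_of_ne (by rw [← h7]; exact h0)] at h5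
    rw [← h5] at h3
    cases r
    · have := (mc_τ4 h3).1
      have h9 := hr.1 rfl
      rw [h9] at this
      revert this; decide
    · have := (mc_τ2 h3)
      simp at hr
      tauto

theorem evR (L : Lev pr W q D T S) {s t a : ℤ} {r d : Bool} {τ : Fin 212} {e : Ef} {b' : Adr}
    (h : W s t a (⟨r, τ + 1, d, e⟩, b')) (he : eff ⟨r, τ + 1, d, e⟩ ≠ Ef.none)
    (h0 : τ + 1 ≠ 0) (hr : r = true ↔ τ + 1 = 8) :
    ∃ c αs b as x, W (s - q * sg (dir ⟨r, τ + 1, d, e⟩)) (t - T) (anc pr T t a) (⟨r, τ, d, e⟩, c) ∧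
      W (s - q * sg (dir ⟨r, τ + 1, d, e⟩) - D) (t - T) as (αs, b) ∧
      mc (suc αs) ⟨r, τ + 1, d, e⟩ ∧
      act (eff (suc αs)) b c = some (x, b') ∧
      S (t - T) as (anc pr T t a) := by
  rcases L.ev h he with ⟨α, b, αs, c, as, y, h1, h2, h3, h4, h5, h6⟩ |
    ⟨α, c, αs, b, as, x, h1, h2, h3, h4, h5, h6⟩
  · exfalso
    have h7 := congrArg Adr.τ h5
    rw [upd_τ] at h7
    rw [upd_of_ne (by rw [← h7]; exact h0)] at h5
    rw [← h5] at h3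
    cases r
    · have := (mc_τ1 h3)
      simp at hr
      tauto
    · have := (mc_τ3 h3).1
      have h9 := hr.1 rfl
      rw [h9] at this
      revert this; decide
  · have h7 := congrArg Adr.τ h5
    rw [upd_τ] at h7
    rw [upd_of_ne (by rw [← h7]; exact h0)] at h5
    rw [← h5] at h3
    have h8 := suc_eq h5.symm
    subst h8
    exact ⟨c, αs, b, as, x, h1, h2, h3, h4, h6⟩

theorem eff8 (r d : Bool) (e : Ef) : eff ⟨r, 8, d, e⟩ =
    (if e = Ef.none then Ef.nop else if d then e else Ef.chk) := by
  simp [eff]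

theorem eff8_ne (r d : Bool) (e : Ef) : eff ⟨r, 8, d, e⟩ ≠ Ef.none := by
  rw [eff8]
  split_ifs <;> simp_all

theorem E8L (L : Lev pr W q D T S) {s t a : ℤ} {d : Bool} {e : Ef} {b' : Adr}
    (h : W s t a (⟨false, 8, d, e⟩, b')) :
    ∃ b c as y, W (s + q) (t - T) (anc pr T t a) (⟨false, 7, d, e⟩, b) ∧
      W (s + q + D) (t - T) as (⟨true, 7, d, e⟩, c) ∧
      act (eff ⟨false, 8, d, e⟩) b c = some (b', y) := by
  obtain ⟨b, αs, c, as, y, h1, h2, h3, h4, h5⟩ := L.evL (τ := 7) h (eff8_ne _ _ _)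
    (by decide) (by decide)
  have hd : sg (dir ⟨false, 7 + 1, d, e⟩) = -1 := by simp [dir]
  rw [hd] at h1 h2
  have h6 := suc_eq (mc_l1 h3)
  subst h6
  refine ⟨b, c, as, y, ?_, ?_, h4⟩
  · convert h1 using 1; ring
  · convert h2 using 1; ring

theorem E8R (L : Lev pr W q D T S) {s t a : ℤ} {d : Bool} {e : Ef} {c' : Adr}
    (h : W s t a (⟨true, 8, d, e⟩, c')) :
    ∃ c b as x, W (s - q) (t - T) (anc pr T t a) (⟨true, 7, d, e⟩, c) ∧
      W (s - q - D) (t - T) as (⟨false, 7, d, e⟩, b) ∧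
      act (eff ⟨false, 8, d, e⟩) b c = some (x, c') := by
  obtain ⟨b, αs, c, as, y, h1, h2, h3, h4, h5⟩ := L.evR (τ := 7) h (eff8_ne _ _ _)
    (by decide) (by decide)
  have hd : sg (dir ⟨true, 7 + 1, d, e⟩) = 1 := by simp [dir]
  rw [hd] at h1 h2
  have h7 := mc_r2 h3
  rw [h7] at h4
  have h6 := suc_eq h7
  subst h6
  refine ⟨b, c, as, y, ?_, ?_, h4⟩
  · convert h1 using 1; ring
  · convert h2 using 1; ring

theorem E4L (L : Lev pr W q D T S) {s t a : ℤ} {e : Ef} {b' : Adr} (he : e ≠ Ef.none)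
    (h : W s t a (⟨true, 4, false, e⟩, b')) :
    ∃ b as, W (s + q) (t - T) (anc pr T t a) (⟨true, 3, false, e⟩, b) ∧
      W (s + q + D) (t - T) as (⟨false, 3, true, e⟩, b') ∧ S (t - T) (anc pr T t a) as := by
  have hef : eff ⟨true, 3 + 1, false, e⟩ = Ef.swap := by simp [eff, Kact, he]
  obtain ⟨b, αs, c, as, y, h1, h2, h3, h4, h5⟩ := L.evL (τ := 3) h (by rw [hef]; simp)
    (by decide) (by decide)
  rw [hef] at h4
  simp only [act, Option.some.injEq, Prod.mk.injEq] at h4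
  have hd : sg (dir ⟨true, 3 + 1, false, e⟩) = -1 := by simp [dir]
  rw [hd] at h1 h2
  have h6 := suc_eq (mc_l2 h3)
  subst h6
  refine ⟨b, as, ?_, ?_, h5⟩
  · convert h1 using 1; ring
  · convert h2 using 1
    · ring
    · rw [h4.1]

theorem E4R (L : Lev pr W q D T S) {s t a : ℤ} {e : Ef} {b' : Adr} (he : e ≠ Ef.none)
    (h : W s t a (⟨false, 4, true, e⟩, b')) :
    ∃ c as, W (s - q) (t - T) (anc pr T t a) (⟨false, 3, true, e⟩, c) ∧
      W (s - q - D) (t - T) as (⟨true, 3, false, e⟩, b') := by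
  have hef : eff ⟨false, 3 + 1, true, e⟩ = Ef.swap := by simp [eff, Kact, he]
  have hef' : eff ⟨true, 3 + 1, false, e⟩ = Ef.swap := by simp [eff, Kact, he]
  obtain ⟨b, αs, c, as, y, h1, h2, h3, h4, h5⟩ := L.evR (τ := 3) h (by rw [hef]; simp)
    (by decide) (by decide)
  have h7 := mc_r1 h3
  rw [h7, hef'] at h4
  simp only [act, Option.some.injEq, Prod.mk.injEq] at h4
  have hd : sg (dir ⟨false, 3 + 1, true, e⟩) = 1 := by simp [dir]
  rw [hd] at h1 h2
  have h6 := suc_eq h7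
  subst h6
  refine ⟨b, as, ?_, ?_⟩
  · convert h1 using 1; ring
  · convert h2 using 1
    · ring
    · rw [h4.2]

theorem E12L (L : Lev pr W q D T S) {s t a : ℤ} {e : Ef} {b' : Adr} (he : e ≠ Ef.none)
    (h : W s t a (⟨true, 12, false, e⟩, b')) :
    ∃ b as, W (s + q) (t - T) (anc pr T t a) (⟨true, 11, false, e⟩, b) ∧
      W (s + q + D) (t - T) as (⟨false, 11, true, e⟩, b') := by
  have hef : eff ⟨true, 11 + 1, false, e⟩ = Ef.swapfl := by simp [eff, Kact, he]
  obtain ⟨b, αs, c, as, y, h1, h2, h3, h4, h5⟩ := L.evL (τ := 11) h (by rw [hef]; simp)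
    (by decide) (by decide)
  rw [hef] at h4
  simp only [act, Option.some.injEq, Prod.mk.injEq] at h4
  have hd : sg (dir ⟨true, 11 + 1, false, e⟩) = -1 := by simp [dir]
  rw [hd] at h1 h2
  have h6 := suc_eq (mc_l2 h3)
  subst h6
  refine ⟨b, as, ?_, ?_⟩
  · convert h1 using 1; ring
  · convert h2 using 1
    · ring
    · rw [h4.1]

theorem E12R (L : Lev pr W q D T S) {s t a : ℤ} {e : Ef} {b' : Adr} (he : e ≠ Ef.none)
    (h : W s t a (⟨false, 12, true, e⟩, b')) :
    ∃ y z as, W (s - q) (t - T) (anc pr T t a) (⟨false, 11, true, e⟩, y) ∧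
      W (s - q - D) (t - T) as (⟨true, 11, false, e⟩, z) ∧ b' = upd z y := by
  have hef : eff ⟨false, 11 + 1, true, e⟩ = Ef.swapfl := by simp [eff, Kact, he]
  have hef' : eff ⟨true, 11 + 1, false, e⟩ = Ef.swapfl := by simp [eff, Kact, he]
  obtain ⟨b, αs, c, as, y, h1, h2, h3, h4, h5⟩ := L.evR (τ := 11) h (by rw [hef]; simp)
    (by decide) (by decide)
  have h7 := mc_r1 h3
  rw [h7, hef'] at h4
  simp only [act, Option.some.injEq, Prod.mk.injEq] at h4
  have hd : sg (dir ⟨false, 11 + 1, true, e⟩) = 1 := by simp [dir]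
  rw [hd] at h1 h2
  have h6 := suc_eq h7
  subst h6
  refine ⟨b, c, as, ?_, ?_, h4.2.symm⟩
  · convert h1 using 1; ring
  · convert h2 using 1; ring

theorem E0L (L : Lev pr W q D T S) {s t a : ℤ} {d : Bool} {e : Ef} {A : Adr}
    (h : W s t a (⟨false, 0, d, e⟩, A)) :
    ∃ d' e' A0 b as, W (s + q) (t - T) (anc pr T t a) (⟨false, 211, d', e'⟩, A0) ∧
      W (s + q + D) (t - T) as (⟨true, 211, d', e'⟩, b) ∧ A = suc (fx A0 b) ∧
      d = dir A ∧ e = eff A ∧ S (t - T) (anc pr T t a) as := by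
  have hd : sg (dir ⟨false, 0, d, e⟩) = -1 := by simp [dir]
  have he : eff ⟨false, 0, d, e⟩ ≠ Ef.none := by simp [eff]
  rcases L.ev h he with ⟨⟨r, τ, d', e'⟩, b, αs, c, as, y, h1, h2, h3, h4, h5, h6⟩ |
    ⟨⟨r, τ, d', e'⟩, c, αs, b, as, x, h1, h2, h3, h4, h5, h6⟩
  · have hτ : τ + 1 = 0 := by
      have := congrArg Adr.τ h5
      rw [upd_τ] at this
      simpa [suc] using this.symm
    have hτ' : τ = 211 := by
      have : τ + 1 = 211 + 1 := by rw [hτ]; rfl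
      exact add_right_cancel this
    subst hτ'
    have hr : r = false := by
      have := congrArg Adr.r h5
      rw [upd_r] at this
      exact this.symm
    subst hr
    have h7 := suc_eq (mc_l1 h3)
    subst h7
    have h8 : eff (suc ⟨false, 211, d', e'⟩) = Ef.adv := by simp [eff, suc]
    rw [h8] at h4
    simp only [act, Option.some.injEq, Prod.mk.injEq] at h4
    rw [hd] at h1 h2
    simp only [upd, suc, Adr.mk.injEq, hτ, if_true] at h5
    refine ⟨d', e', b, c, as, ?_, ?_, h4.1.symm, h5.2.2.1, h5.2.2.2, h6⟩
    · convert h1 using 1; ring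
    · convert h2 using 1; ring
  · exfalso
    have hτ : τ + 1 = 0 := by
      have := congrArg Adr.τ h5
      rw [upd_τ] at this
      simpa [suc] using this.symm
    have hr : r = false := by
      have := congrArg Adr.r h5
      rw [upd_r] at this
      exact this.symm
    subst hr
    have := (mc_τ4 h3).1
    rw [hτ] at this
    revert this; decide

theorem E0R (L : Lev pr W q D T S) {s t a : ℤ} {d : Bool} {e : Ef} {b : Adr}
    (h : W s t a (⟨true, 0, d, e⟩, b)) :
    ∃ d' e' A0 as, W (s - q) (t - T) (anc pr T t a) (⟨true, 211, d', e'⟩, b) ∧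
      W (s - q - D) (t - T) as (⟨false, 211, d', e'⟩, A0) ∧
      d = dir (suc (fx A0 b)) ∧ e = eff (suc (fx A0 b)) ∧ S (t - T) as (anc pr T t a) := by
  have hd : sg (dir ⟨true, 0, d, e⟩) = 1 := by simp [dir]
  have he : eff ⟨true, 0, d, e⟩ ≠ Ef.none := by simp [eff]
  rcases L.ev h he with ⟨⟨r, τ, d', e'⟩, b, αs, c, as, y, h1, h2, h3, h4, h5, h6⟩ |
    ⟨⟨r, τ, d', e'⟩, c, αs, b, as, x, h1, h2, h3, h4, h5, h6⟩
  · exfalso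
    have hτ : τ + 1 = 0 := by
      have := congrArg Adr.τ h5
      rw [upd_τ] at this
      simpa [suc] using this.symm
    have hr : r = true := by
      have := congrArg Adr.r h5
      rw [upd_r] at this
      exact this.symm
    subst hr
    have := (mc_τ3 h3).1
    rw [hτ] at this
    revert this; decide
  · have hτ : τ + 1 = 0 := by
      have := congrArg Adr.τ h5
      rw [upd_τ] at this
      simpa [suc] using this.symm
    have hτ' : τ = 211 := by
      have : τ + 1 = 211 + 1 := by rw [hτ]; rfl
      exact add_right_cancel this
    subst hτ'
    have hr : r = true := by
      have := congrArg Adr.r h5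
      rw [upd_r] at this
      exact this.symm
    subst hr
    have h7 := suc_eq (mc_r2 h3)
    subst h7
    have h8 : eff (suc ⟨false, 211, d', e'⟩) = Ef.adv := by simp [eff, suc]
    rw [h8] at h4
    simp only [act, Option.some.injEq, Prod.mk.injEq] at h4
    obtain ⟨rfl, rfl⟩ := h4
    rw [hd] at h1 h2
    simp only [upd, suc, Adr.mk.injEq, hτ, if_true] at h5
    refine ⟨d', e', b, as, ?_, ?_, h5.2.2.1, h5.2.2.2, h6⟩
    · convert h1 using 1; ring
    · convert h2 using 1; ring

end Lev
end UE
namespace UE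
open Classical

/-- `a'` at time `t'` is the ancestor of `a` at time `t`. -/
def An (pr : ℤ → ℤ → ℤ) (t a t' a' : ℤ) : Prop := ∃ k : ℕ, t = t' + k ∧ anc pr k t a = a'

theorem An.refl (pr : ℤ → ℤ → ℤ) (t a : ℤ) : An pr t a t a := ⟨0, by simp, rfl⟩
theorem An.trans {pr : ℤ → ℤ → ℤ} {t a t' a' t'' a'' : ℤ} (h : An pr t a t' a')
    (h' : An pr t' a' t'' a'') : An pr t a t'' a'' := by
  obtain ⟨k, hk, h1⟩ := h
  obtain ⟨j, hj, h2⟩ := h'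
  refine ⟨k + j, by push_cast; linarith, ?_⟩
  rw [anc_add, h1, show t - (k : ℤ) = t' by linarith, h2]
theorem An.eq {pr : ℤ → ℤ → ℤ} {t a t' a' : ℤ} (h : An pr t a t' a') (k : ℕ) (hk : t' = t - k) :
    anc pr k t a = a' := by
  obtain ⟨j, hj, h1⟩ := h
  have : j = k := by omega
  rw [← this, h1]
theorem An.mk' {pr : ℤ → ℤ → ℤ} {t a t' : ℤ} (k : ℕ) (hk : t - k = t') :
    An pr t a t' (anc pr k t a) := ⟨k, by omega, rfl⟩
theorem An.unique {pr : ℤ → ℤ → ℤ} {t a t' a' a'' : ℤ} (h : An pr t a t' a')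
    (h' : An pr t a t' a'') : a' = a'' := by
  obtain ⟨k, hk, h1⟩ := h
  obtain ⟨j, hj, h2⟩ := h'
  have : j = k := by omega
  rw [← h1, ← h2, this]

theorem effn {r d : Bool} {e : Ef} {j : Fin 212} (h : j.val ≠ 0 ∧ j.val ≠ 4 ∧ j.val ≠ 8 ∧ j.val ≠ 12) :
    eff ⟨r, j, d, e⟩ = Ef.none := by
  obtain ⟨h0, h4, h8, h12⟩ := h
  have h0 : j ≠ 0 := fun h => h0 (by rw [h]; rfl)
  have h4 : j ≠ 4 := fun h => h4 (by rw [h]; rfl)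
  have h8 : j ≠ 8 := fun h => h8 (by rw [h]; rfl)
  have h12 : j ≠ 12 := fun h => h12 (by rw [h]; rfl)
  simp [eff, h0, h4, h8, h12]

theorem effn' {r d : Bool} {e : Ef} {j : Fin 212} (h : j.val ≠ 0 ∧ j.val ≠ 8)
    (hd : e = Ef.none ∨ d = r) :
    eff ⟨r, j, d, e⟩ = Ef.none := by
  obtain ⟨h0, h8⟩ := h
  have h0 : j ≠ 0 := fun h => h0 (by rw [h]; rfl)
  have h8 : j ≠ 8 := fun h => h8 (by rw [h]; rfl)
  have hk : ¬ Kact ⟨r, j, d, e⟩ := by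
    unfold Kact
    simp only
    rcases hd with h | h
    · simp [h]
    · rw [h]; simp
  simp [eff, h0, h8, hk]

/-- next level of the hierarchy -/
def up (W : ℤ → ℤ → ℤ → St → Prop) (D : ℤ) (s t a : ℤ) (σ : St) : Prop :=
  ∃ A d e a2, W s t a (⟨false, 211, d, e⟩, A) ∧ W (s + D) t a2 (⟨true, 211, d, e⟩, σ.2) ∧
    σ.1 = fx A σ.2

def upS (pr : ℤ → ℤ → ℤ) (W : ℤ → ℤ → ℤ → St → Prop) (T : ℕ) (S : ℤ → ℤ → ℤ → Prop)
    (t a as : ℤ) : Prop :=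
  ∃ a2 a' as', S t a a2 ∧ S (t + 4 * T) a' as' ∧ An pr (t + 4 * T) a' t a2 ∧
    An pr (t + 4 * T) as' t as ∧ (∃ s σ, W s (t + 4 * T) a' σ) ∧ (∃ s σ, W s (t + 4 * T) as' σ)

namespace Lev
variable {pr : ℤ → ℤ → ℤ} {W : ℤ → ℤ → ℤ → St → Prop} {q D : ℤ} {T : ℕ}
  {S : ℤ → ℤ → ℤ → Prop}

theorem runN (L : Lev pr W q D T S) {s t a : ℤ} {r d : Bool} {τ : Fin 212} {e : Ef} {b : Adr}
    (h : W s t a (⟨r, τ, d, e⟩, b)) (n n' : ℕ) (τ' : Fin 212) (hn : τ.val = n) (hn' : τ'.val = n')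
    (hk : n' ≤ n)
    (he : ∀ j : Fin 212, n' < j.val → j.val ≤ n → eff ⟨r, j, d, e⟩ = Ef.none)
    (s' t' : ℤ) (hs : s' = s - q * (ps r d (n + 1) - ps r d (n' + 1)))
    (ht : t' = t - (n - n') * T) :
    ∃ a', W s' t' a' (⟨r, τ', d, e⟩, b) ∧ An pr t a t' a' := by
  subst hn hn'
  have h1 := L.run h (τ.val - τ'.val) τ' (by omega) (fun j h1 h2 => he j h1 h2)
  have h2 : t - (((τ.val - τ'.val) * T : ℕ) : ℤ) = t' := by
    rw [ht]; push_cast [hk]; ring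
  rw [← hs, h2] at h1
  exact ⟨_, h1, An.mk' _ h2⟩

theorem uniq' (L : Lev pr W q D T S) {s t a s' t' a' : ℤ} {α b α' b' : Adr}
    (h : W s t a (α, b)) (h' : W s' t' a' (α', b')) (hs : s = s') (ht : t = t')
    (hd : dir α = dir α') : α = α' ∧ b = b' ∧ a = a' := by
  subst hs ht
  have := L.uniq h h' hd
  simp only [Prod.mk.injEq] at this
  tauto

theorem int0 (L : Lev pr W q D T S) {s t a s2 a2 : ℤ} {d d' : Bool} {e e' : Ef} {A b : Adr}
    (h : W s t a (⟨false, 0, d, e⟩, A)) (h2 : W s2 t a2 (⟨true, 0, d', e'⟩, b))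
    (hs : s2 = s + 2 * q + D) (s' t' : ℤ) (hs' : s' = s + q) (ht' : t' = t - T) :
    ∃ A0 a0 a20, up W D s' t' a0 (fx A0 b, b) ∧ A = suc (fx A0 b) ∧ d = dir A ∧ e = eff A ∧
      An pr t a t' a0 ∧ An pr t a2 t' a20 ∧ S t' a0 a20 := by
  obtain ⟨d1, e1, A0, b1, as, k1, k2, k3, k4, k5, k6⟩ := L.E0L h
  obtain ⟨d3, e3, A3, as3, m1, m2, m3, m4, m5⟩ := L.E0R h2
  obtain ⟨u1, u2, u3⟩ := L.uniq' k2 m1 (by rw [hs]; ring) rfl (by simp [dir])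
  subst u2
  subst hs' ht'
  refine ⟨A0, _, _, ⟨A0, d1, e1, as, k1, k2, rfl⟩, k3, k4, k5, An.mk' T rfl, An.mk' T rfl, ?_⟩
  rw [← u3]; exact k6

theorem diamond (L : Lev pr W q D T S) {s t a2 a1 s' : ℤ} {e : Ef} {z y : Adr} (he : e ≠ Ef.none)
    (h2 : W s t a2 (⟨true, 11, false, e⟩, z)) (h1 : W s' t a1 (⟨false, 11, true, e⟩, y))
    (hs : s' = s + D) :
    ∃ A0 b0 X0 z0 Z A aP aQ a17 a1' a2',
      up W D (s - 4 * q - D) (t - 12 * T) aP (fx A0 b0, b0) ∧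
      up W D (s + D + 4 * q) (t - 12 * T) aQ (fx X0 z0, z0) ∧
      A = suc (fx A0 b0) ∧ z = suc (fx X0 z0) ∧ mc A z ∧ eff A = e ∧ dir A = false ∧
      eff z = e ∧ dir z = true ∧ act e b0 z0 = some (y, Z) ∧
      W (s - 4 * q - D) (t - 4 * T) a17 (⟨false, 7, false, e⟩, A) ∧
      An pr (t - 4 * T) a17 (t - 12 * T) aP ∧
      W (s + D + 4 * q) (t - 4 * T) a1' (⟨false, 7, true, e⟩, b0) ∧
      W (s + 2 * D + 4 * q) (t - 4 * T) a2' (⟨true, 7, true, e⟩, z0) ∧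
      An pr t a1 (t - 12 * T) aQ ∧
      upS pr W T S (t - 12 * T) aP aQ := by
  subst hs
  -- the chain of the second
  obtain ⟨x1, g1, n1⟩ := L.runN h2 11 8 8 rfl rfl (by norm_num) (fun j _ _ => effn (by omega))
    (s - 3 * q) (t - 3 * T) (by simp [ps]; ring) (by push_cast; ring)
  obtain ⟨c, A, a17, x, g2, g3, g4⟩ := L.E8R g1
  have hchk : eff ⟨false, 8, false, e⟩ = Ef.chk := by simp [eff8, he]
  rw [hchk] at g4
  have hmc : mc A c ∧ c = z := by
    simp only [act] at g4
    split_ifs at g4 with h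
    simp only [Option.some.injEq, Prod.mk.injEq] at g4
    exact ⟨h, g4.2⟩
  obtain ⟨hmc, rfl⟩ := hmc
  have n2 := An.mk' (pr := pr) (a := x1) T (rfl : t - 3 * (T : ℤ) - T = _)
  obtain ⟨x3, g5, n3⟩ := L.runN g2 7 4 4 rfl rfl (by norm_num) (fun j _ _ => effn (by omega))
    (s - q) (t - 7 * T) (by simp [ps]; ring) (by push_cast; ring)
  obtain ⟨b0, as, g6, g7, g8⟩ := L.E4L he g5
  have n4 := An.mk' (pr := pr) (a := x3) T (rfl : t - 7 * (T : ℤ) - T = _)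
  obtain ⟨x5, g9, n5⟩ := L.runN g6 3 0 0 rfl rfl (by norm_num) (fun j _ _ => effn (by omega))
    (s - 3 * q) (t - 11 * T) (by simp [ps]; ring) (by push_cast; ring)
  obtain ⟨x6, g10, n6⟩ := L.runN g3 7 0 0 rfl rfl (by norm_num)
    (fun j _ _ => effn' (by omega) (Or.inr rfl))
    (s - 5 * q - D) (t - 11 * T) (by simp [ps]; ring) (by push_cast; ring)
  obtain ⟨A0, aP, aP2, g11, g12, g13, g14, n7, n8, g15⟩ := L.int0 g10 g9 (by ring)
    (s - 4 * q - D) (t - 12 * T) (by ring) (by ring)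
  -- the chain of the first
  obtain ⟨y1, k1, o1⟩ := L.runN h1 11 8 8 rfl rfl (by norm_num) (fun j _ _ => effn (by omega))
    (s + D + 3 * q) (t - 3 * T) (by simp [ps]; ring) (by push_cast; ring)
  obtain ⟨b1, z0, a27, Z, k2, k3, k4⟩ := L.E8L k1
  have heff : eff ⟨false, 8, true, e⟩ = e := by simp [eff8, he]
  rw [heff] at k4
  have o2 := An.mk' (pr := pr) (a := y1) T (rfl : t - 3 * (T : ℤ) - T = _)
  obtain ⟨y3, k5, o3⟩ := L.runN k2 7 4 4 rfl rfl (by norm_num) (fun j _ _ => effn (by omega))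
    (s + D + q) (t - 7 * T) (by simp [ps]; ring) (by push_cast; ring)
  obtain ⟨c', as', k6, k7⟩ := L.E4R he k5
  have o4 := An.mk' (pr := pr) (a := y3) T (rfl : t - 7 * (T : ℤ) - T = _)
  obtain ⟨-, u2, u3⟩ := L.uniq' g6 k7 (by ring) rfl rfl
  subst u2
  obtain ⟨-, v2, v3⟩ := L.uniq' g7 k6 (by ring) rfl rfl
  subst v2
  obtain ⟨y5, k9, o5⟩ := L.runN k6 3 0 0 rfl rfl (by norm_num) (fun j _ _ => effn (by omega))
    (s + D + 3 * q) (t - 11 * T) (by simp [ps]; ring) (by push_cast; ring)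
  obtain ⟨y6, k10, o6⟩ := L.runN k3 7 0 0 rfl rfl (by norm_num)
    (fun j _ _ => effn' (by omega) (Or.inr rfl))
    (s + 2 * D + 5 * q) (t - 11 * T) (by simp [ps]; ring) (by push_cast; ring)
  obtain ⟨X0, aQ, aQ2, k11, k12, k13, k14, o7, o8, k15⟩ := L.int0 k9 k10 (by ring)
    (s + D + 4 * q) (t - 12 * T) (by ring) (by ring)
  refine ⟨A0, b0, X0, z0, Z, A, aP, aQ, a17, anc pr T (t - 3 * T) y1, a27, g11, k11, g12, k12, hmc, g14.symm, g13.symm,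
    k14.symm, k13.symm, k4, ?_, ?_, ?_, ?_, ?_, ?_⟩
  · convert g3 using 1 <;> ring
  · have : t - 4 * (T : ℤ) = t - 3 * T - T := by ring
    rw [this]
    exact n6.trans n7
  · convert k2 using 1 <;> ring
  · convert k3 using 1 <;> ring
  · exact (o1.trans (o2.trans (o3.trans (o4.trans (o5.trans o7)))))
  · have e1 : t - 12 * (T : ℤ) + 4 * T = t - 7 * T - T := by ring
    unfold upS
    rw [e1]
    exact ⟨aP2, _, _, g15, g8, n5.trans n8, v3 ▸ o5.trans o7, ⟨_, _, g6⟩, ⟨_, _, g7⟩⟩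

theorem ps_end (r d : Bool) : ps r d 212 = 196 * sg d := by
  simp [ps]; ring

theorem next (L : Lev pr W q D T S) :
    Lev pr (up W D) (196 * q) (2 * D + 8 * q) (212 * T) (upS pr W T S) where
  uniq := by
    rintro s t a a' ⟨x, b⟩ ⟨x', b'⟩ ⟨A, d, e, a2, h1, h2, h3⟩ ⟨A', d', e', a2', h1', h2', h3'⟩ _
    obtain ⟨u1, u2, u3⟩ := L.uniq' h1 h1' rfl rfl (by simp [dir])
    obtain ⟨v1, v2, v3⟩ := L.uniq' h2 h2' rfl rfl (by simp [dir])
    simp only at h3 h3' v2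
    subst u2 u3 v2
    rw [h3, h3']
    exact ⟨rfl, rfl⟩
  step := by
    rintro s t a ⟨x, b⟩ ⟨A, d, e, a2, h1, h2, h3⟩
    simp only at h2 h3
    subst h3
    simp only [dir_fx]
    by_cases he : e = Ef.none
    · -- no coarse event
      subst he
      obtain ⟨x1, g1, n1⟩ := L.runN h1 211 8 8 rfl rfl (by norm_num)
        (fun j _ _ => effn' (by omega) (Or.inl rfl))
        (s - q * (196 * sg d + 1)) (t - 203 * T) (by simp [ps_end]; simp [ps]) (by push_cast; ring)
      obtain ⟨b1, c1, as1, y1, g2, g3, g4⟩ := L.E8L g1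
      have hn : eff ⟨false, 8, d, Ef.none⟩ = Ef.nop := by simp [eff8]
      rw [hn] at g4
      simp only [act, Option.some.injEq, Prod.mk.injEq] at g4
      obtain ⟨rfl, -⟩ := g4
      have n2 := An.mk' (pr := pr) (a := x1) T (rfl : t - 203 * (T : ℤ) - T = _)
      obtain ⟨x3, g5, n3⟩ := L.runN g2 7 0 0 rfl rfl (by norm_num)
        (fun j _ _ => effn' (by omega) (Or.inl rfl))
        (s - q * (196 * sg d + 1)) (t - 211 * T) (by simp [ps]) (by push_cast; ring)
      obtain ⟨z1, k1, o1⟩ := L.runN h2 211 8 8 rfl rfl (by norm_num)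
        (fun j _ _ => effn' (by omega) (Or.inl rfl))
        (s + D - q * (196 * sg d - 1)) (t - 203 * T) (by simp [ps_end]; simp [ps])
          (by push_cast; ring)
      obtain ⟨b2, c2, as2, y2, k2, k3, k4⟩ := L.E8R k1
      rw [hn] at k4
      simp only [act, Option.some.injEq, Prod.mk.injEq] at k4
      obtain ⟨-, rfl⟩ := k4
      obtain ⟨z3, k5, o3⟩ := L.runN k2 7 0 0 rfl rfl (by norm_num)
        (fun j _ _ => effn' (by omega) (Or.inl rfl))
        (s + D - q * (196 * sg d - 1)) (t - 211 * T) (by simp [ps]) (by push_cast; ring)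
      obtain ⟨A0, aP, aP2, g11, g12, g13, g14, n7, n8, g15⟩ := L.int0 g5 k5 (by ring)
        (s - q * (196 * sg d)) (t - 212 * T) (by ring) (by ring)
      have ha := (n1.trans (n2.trans (n3.trans n7))).eq (212 * T) (by push_cast; ring)
      refine ⟨(fx A0 b2, b2), ?_, Or.inl ⟨?_, ?_⟩⟩
      · rw [ha, ← g13]
        convert g11 using 1
        · ring
        · push_cast; ring
      · simp only [need, ← g12, ← g14]; simp
      · simp only [nx, ← g12]
        rw [fx_of_ne (τ_ne_of_eff g14.symm)]
    cases d with
    | false =>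
      obtain ⟨x1, g1, n1⟩ := L.runN h2 211 12 12 rfl rfl (by norm_num)
        (fun j _ _ => effn (by omega))
        (s + D + 199 * q) (t - 199 * T) (by simp [ps]; ring) (by push_cast; ring)
      obtain ⟨z, a1, g2, g3⟩ := L.E12L he g1
      obtain ⟨A0, b0, X0, z0, Z, A', aP, aQ, a17, a1', a2', k1, k2, k3, k4, k5, k6, k7, k8, k9, k10,
        k11, k12, k13, k14, k15, k16⟩ := L.diamond he g2 g3 (by ring)
      obtain ⟨x2, m1, o1⟩ := L.runN h1 211 8 8 rfl rfl (by norm_num)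
        (fun j _ _ => effn' (by omega) (Or.inr rfl))
        (s + 195 * q) (t - 203 * T) (by simp [ps]; ring) (by push_cast; ring)
      obtain ⟨b1, c1, as1, y1, m2, m3, m4⟩ := L.E8L m1
      have hchk : eff ⟨false, 8, false, e⟩ = Ef.chk := by simp [eff8, he]
      rw [hchk] at m4
      have hmc : b1 = A := by
        simp only [act] at m4
        split_ifs at m4 with h
        simp only [Option.some.injEq, Prod.mk.injEq] at m4
        exact m4.1
      subst hmc
      have o2 := An.mk' (pr := pr) (a := x2) T (rfl : t - 203 * (T : ℤ) - T = _)
      obtain ⟨-, u2, u3⟩ := L.uniq' m2 k11 (by ring) (by ring) rfl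
      subst u2
      have e1 : t - 199 * (T : ℤ) - T - 4 * T = t - 203 * T - T := by ring
      rw [e1, ← u3] at k12
      have ha := (o1.trans (o2.trans k12)).eq (212 * T) (by push_cast; ring)
      have hf : fx b1 b = upd b1 b := by
        unfold fx
        split_ifs with hr
        · rfl
        · rw [upd_of_ne]
          intro h0
          have := k5.2
          rw [h0] at this
          rcases this with ⟨_, h, _⟩ | ⟨h, _⟩
          · exact hr h
          · revert h; decide
      refine ⟨(fx A0 b0, b0), ?_, Or.inr (Or.inl ⟨(fx X0 z0, z0), (upd z b, Z), aQ, ?_, ?_, ?_⟩)⟩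
      · rw [ha, k7]
        convert k1 using 1
        · simp; ring
        · push_cast; ring
      · rw [k7]
        convert k2 using 1
        · simp; ring
        · push_cast; ring
      · rw [meet_iff, ← k3, ← k4, hf]
        refine ⟨k5, b, Z, ?_, rfl, rfl⟩
        rw [k6]; exact k10
      · rw [ha]
        convert k16 using 1
        push_cast; ring
    | true =>
      obtain ⟨x1, g1, n1⟩ := L.runN h1 211 12 12 rfl rfl (by norm_num)
        (fun j _ _ => effn (by omega))
        (s - 199 * q) (t - 199 * T) (by simp [ps]; ring) (by push_cast; ring)
      obtain ⟨y, z, a20, g2, g3, g4⟩ := L.E12R he g1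
      have n2 := An.mk' (pr := pr) (a := x1) T (rfl : t - 199 * (T : ℤ) - T = _)
      obtain ⟨A0, b0, X0, z0, Z, A', aP, aQ, a17, a1', a2', k1, k2, k3, k4, k5, k6, k7, k8, k9, k10,
        k11, k12, k13, k14, k15, k16⟩ := L.diamond he g3 g2 (by ring)
      obtain ⟨x2, m1, o1⟩ := L.runN h2 211 8 8 rfl rfl (by norm_num)
        (fun j _ _ => effn' (by omega) (Or.inr rfl))
        (s + D - 195 * q) (t - 203 * T) (by simp [ps]; ring) (by push_cast; ring)
      obtain ⟨c1, b1, as1, y1, m2, m3, m4⟩ := L.E8R m1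
      have heff : eff ⟨false, 8, true, e⟩ = e := by simp [eff8, he]
      rw [heff] at m4
      obtain ⟨-, u2, u3⟩ := L.uniq' m3 k13 (by ring) (by ring) rfl
      obtain ⟨-, v2, v3⟩ := L.uniq' m2 k14 (by ring) (by ring) rfl
      subst u2 v2
      rw [m4] at k10
      simp only [Option.some.injEq, Prod.mk.injEq] at k10
      obtain ⟨rfl, rfl⟩ := k10
      have ha := (n1.trans (n2.trans k15)).eq (212 * T) (by push_cast; ring)
      have hf : fx A b = A := by
        rw [g4]
        unfold fx
        split_ifs with hr
        · rw [upd_r] at hr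
          apply upd_of_ne
          rw [upd_τ]
          intro h0
          have h5 := k5.2
          rw [k5.1, h0] at h5
          rcases h5 with ⟨_, _, h, _⟩ | ⟨h, _⟩
          · rw [hr] at h; cases h
          · revert h; decide
        · rfl
      have hdA : dir A = true := by rw [g4, dir_upd, k9]
      refine ⟨(fx X0 c1, c1), ?_, Or.inr (Or.inr ⟨(fx A0 b1, b1), (upd A' y1, y1), aP, ?_, ?_, ?_⟩)⟩
      · rw [ha, hdA]
        convert k2 using 1
        · simp; ring
        · push_cast; ring
      · rw [hdA]
        convert k1 using 1
        · simp; ring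
        · push_cast; ring
      · rw [meet_iff, ← k3, ← k4, hf]
        refine ⟨k5, y1, b, ?_, rfl, ?_⟩
        · rw [k6]; exact m4
        · rw [g4]
      · rw [ha]
        convert k16 using 1
        push_cast; ring

end Lev
end UE
namespace UE
open Classical

abbrev Cell := Option St × Option St

noncomputable def place (s : St) : Cell := if dir s.1 = true then (none, some s) else (some s, none)

/-- local rule: `u` arrives from the left, `v` arrives from the right -/
noncomputable def hh : Option St → Option St → Cell
  | none, none => (none, none)
  | some s, none => if need s.1 then (none, none) else place (nx s)
  | none, some s => if need s.1 then (none, none) else place (nx s)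
  | some u, some v =>
    if need u.1 ∧ need v.1 then
      (match meet u v with
        | some p => (some p.1, some p.2)
        | none => (none, none))
    else if ¬ need u.1 ∧ ¬ need v.1 ∧ dir (suc u.1) = false ∧ dir (suc v.1) = true then
      (some (nx u), some (nx v))
    else (none, none)

noncomputable def rdL (c : Cell) : Option St := c.1.bind fun s => if dir s.1 = false then some s else none
noncomputable def rdR (c : Cell) : Option St := c.2.bind fun s => if dir s.1 = true then some s else none

theorem rdL_eq {c : Cell} {σ : St} : rdL c = some σ ↔ c.1 = some σ ∧ dir σ.1 = false := by
  unfold rdL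
  rcases c with ⟨_ | s, c2⟩
  · simp
  · simp only [Option.bind_some, Option.some.injEq]
    split_ifs with h
    · simp only [Option.some.injEq]
      constructor
      · rintro rfl; exact ⟨rfl, h⟩
      · exact fun h => h.1
    · simp only [reduceCtorEq, false_iff]
      rintro ⟨rfl, h'⟩; exact h h'

theorem rdR_eq {c : Cell} {σ : St} : rdR c = some σ ↔ c.2 = some σ ∧ dir σ.1 = true := by
  unfold rdR
  rcases c with ⟨c1, _ | s⟩
  · simp
  · simp only [Option.bind_some, Option.some.injEq]
    split_ifs with h
    · simp only [Option.some.injEq]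
      constructor
      · rintro rfl; exact ⟨rfl, h⟩
      · exact fun h => h.1
    · simp only [reduceCtorEq, false_iff]
      rintro ⟨rfl, h'⟩; exact h h'

theorem hh_R {u v : Option St} {σ' : St} (h : rdR (hh u v) = some σ') :
    (∃ σ, ((u = some σ ∧ v = none) ∨ (u = none ∧ v = some σ)) ∧ ¬ need σ.1 ∧ σ' = nx σ) ∨
    (∃ σu σv, u = some σu ∧ v = some σv ∧
      ((∃ l, meet σu σv = some (l, σ')) ∨ (¬ need σv.1 ∧ σ' = nx σv))) := by
  obtain ⟨h1, h2⟩ := rdR_eq.1 h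
  clear h
  rcases u with _ | u <;> rcases v with _ | v
  · simp [hh] at h1
  · left
    simp only [hh] at h1
    split_ifs at h1 with hn
    refine ⟨v, by simp, hn, ?_⟩
    unfold place at h1
    split_ifs at h1
    · simpa using h1.symm
  · left
    simp only [hh] at h1
    split_ifs at h1 with hn
    refine ⟨u, by simp, hn, ?_⟩
    unfold place at h1
    split_ifs at h1
    · simpa using h1.symm
  · right
    refine ⟨u, v, rfl, rfl, ?_⟩
    simp only [hh] at h1
    split_ifs at h1 with hn hn
    · left
      rcases hm : meet u v with _ | p
      · simp [hm] at h1
      · simp only [hm, Option.some.injEq] at h1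
        exact ⟨p.1, by rw [← h1]⟩
    · right
      exact ⟨hn.2.1, by simpa using h1.symm⟩

theorem hh_L {u v : Option St} {σ' : St} (h : rdL (hh u v) = some σ') :
    (∃ σ, ((u = some σ ∧ v = none) ∨ (u = none ∧ v = some σ)) ∧ ¬ need σ.1 ∧ σ' = nx σ) ∨
    (∃ σu σv, u = some σu ∧ v = some σv ∧
      ((∃ r, meet σu σv = some (σ', r)) ∨ (¬ need σu.1 ∧ σ' = nx σu))) := by
  obtain ⟨h1, h2⟩ := rdL_eq.1 h
  clear h
  rcases u with _ | u <;> rcases v with _ | v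
  · simp [hh] at h1
  · left
    simp only [hh] at h1
    split_ifs at h1 with hn
    refine ⟨v, by simp, hn, ?_⟩
    unfold place at h1
    split_ifs at h1
    · simpa using h1.symm
  · left
    simp only [hh] at h1
    split_ifs at h1 with hn
    refine ⟨u, by simp, hn, ?_⟩
    unfold place at h1
    split_ifs at h1
    · simpa using h1.symm
  · right
    refine ⟨u, v, rfl, rfl, ?_⟩
    simp only [hh] at h1
    split_ifs at h1 with hn hn
    · left
      rcases hm : meet u v with _ | p
      · simp [hm] at h1
      · simp only [hm, Option.some.injEq] at h1
        exact ⟨p.2, by rw [← h1]⟩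
    · right
      exact ⟨hn.1, by simpa using h1.symm⟩

/-- A (bi-infinite) system of arrivals; key `2 * c` is the arrival from the left at column `c`,
key `2 * c + 1` is the arrival from the right at column `c`. -/
structure Sys (w : ℤ → ℤ → Option St) : Prop where
  recR : ∀ t c, w t (2 * c + 2) = rdR (hh (w (t - 1) (2 * c)) (w (t - 1) (2 * c + 1)))
  recL : ∀ t c, w t (2 * c - 1) = rdL (hh (w (t - 1) (2 * c)) (w (t - 1) (2 * c + 1)))
  par : ∀ t a, w t a ≠ none → (a / 2 + t) % 2 = 0

/-- departure cell -/
def dc (a : ℤ) : ℤ := if a % 2 = 0 then a / 2 - 1 else a / 2 + 1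

noncomputable def prd (w : ℤ → ℤ → Option St) (t a : ℤ) : ℤ :=
  if w (t - 1) (2 * dc a) ≠ none ∧ w (t - 1) (2 * dc a + 1) ≠ none then
    (if a % 2 = 0 then 2 * dc a + 1 else 2 * dc a)
  else if w (t - 1) (2 * dc a) ≠ none then 2 * dc a else 2 * dc a + 1

def W0 (w : ℤ → ℤ → Option St) (s t a : ℤ) (σ : St) : Prop := w t a = some σ ∧ s = a / 2

namespace Sys
variable {w : ℤ → ℤ → Option St}

theorem dir_even (H : Sys w) {t a : ℤ} {σ : St} (h : w t a = some σ) (ha : a % 2 = 0) :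
    dir σ.1 = true := by
  have := H.recR t (a / 2 - 1)
  rw [show 2 * (a / 2 - 1) + 2 = a by omega, h] at this
  exact (rdR_eq.1 this.symm).2

theorem dir_odd (H : Sys w) {t a : ℤ} {σ : St} (h : w t a = some σ) (ha : a % 2 ≠ 0) :
    dir σ.1 = false := by
  have := H.recL t (a / 2 + 1)
  rw [show 2 * (a / 2 + 1) - 1 = a by omega, h] at this
  exact (rdL_eq.1 this.symm).2

theorem lev0 (H : Sys w) : Lev (prd w) (W0 w) 1 0 1 (fun _ a as => as = a + 1) where
  uniq := by
    rintro s t a a' σ σ' ⟨h1, h2⟩ ⟨h3, h4⟩ hd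
    have : a = a' := by
      by_cases h5 : a % 2 = 0 <;> by_cases h6 : a' % 2 = 0
      · omega
      · rw [H.dir_even h1 h5, H.dir_odd h3 h6] at hd; cases hd
      · rw [H.dir_odd h1 h5, H.dir_even h3 h6] at hd; cases hd
      · omega
    subst this
    rw [h1] at h3
    simp only [Option.some.injEq] at h3
    exact ⟨h3, rfl⟩
  step := by
    rintro s t a σ' ⟨h1, h2⟩
    simp only [anc, Nat.cast_one]
    have hdiv : ∀ c : ℤ, (2 * c) / 2 = c ∧ (2 * c + 1) / 2 = c := by intro c; omega
    by_cases ha : a % 2 = 0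
    · have hd := H.dir_even h1 ha
      rw [hd]
      have hc : s - 1 * sg true = dc a := by simp [dc, ha, h2]
      rw [hc]
      have h3 := H.recR t (dc a)
      rw [show 2 * (dc a) + 2 = a by unfold dc; rw [if_pos ha]; omega, h1] at h3
      rcases hh_R h3.symm with ⟨σ, h4 | h4, h5, h6⟩ | ⟨σu, σv, h4, h5, h6⟩
      · refine ⟨σ, ⟨?_, ?_⟩, Or.inl ⟨h5, h6⟩⟩
        · simp [prd, h4]
        · simp [prd, h4]
      · refine ⟨σ, ⟨?_, ?_⟩, Or.inl ⟨h5, h6⟩⟩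
        · simp [prd, h4]
        · simp only [prd, h4]; simp; omega
      · have hp : prd w t a = 2 * dc a + 1 := by simp [prd, h4, h5, ha]
        refine ⟨σv, ⟨?_, ?_⟩, ?_⟩
        · rw [hp, h5]
        · rw [hp]; omega
        · rcases h6 with ⟨l, h6⟩ | h6
          · refine Or.inr (Or.inr ⟨σu, l, 2 * dc a, ⟨h4, by omega⟩, h6, by rw [hp]⟩)
          · exact Or.inl h6
    · have hd := H.dir_odd h1 ha
      rw [hd]
      have hc : s - 1 * sg false = dc a := by simp [dc, ha, h2]
      rw [hc]
      have h3 := H.recL t (dc a)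
      rw [show 2 * (dc a) - 1 = a by unfold dc; rw [if_neg ha]; omega, h1] at h3
      rcases hh_L h3.symm with ⟨σ, h4 | h4, h5, h6⟩ | ⟨σu, σv, h4, h5, h6⟩
      · refine ⟨σ, ⟨?_, ?_⟩, Or.inl ⟨h5, h6⟩⟩
        · simp [prd, h4]
        · simp [prd, h4]
      · refine ⟨σ, ⟨?_, ?_⟩, Or.inl ⟨h5, h6⟩⟩
        · simp [prd, h4]
        · simp only [prd, h4]; simp; omega
      · have hp : prd w t a = 2 * dc a := by simp [prd, h4, h5, ha]
        refine ⟨σu, ⟨?_, ?_⟩, ?_⟩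
        · rw [hp, h4]
        · rw [hp]; omega
        · rcases h6 with ⟨l, h6⟩ | h6
          · refine Or.inr (Or.inl ⟨σv, l, 2 * dc a + 1, ⟨h5, by omega⟩, h6, by rw [hp]⟩)
          · exact Or.inl h6

theorem pr_live (H : Sys w) {t a : ℤ} (h : w t a ≠ none) : w (t - 1) (prd w t a) ≠ none := by
  obtain ⟨σ, h1⟩ := Option.ne_none_iff_exists'.1 h
  obtain ⟨σ', ⟨h2, _⟩, _⟩ := H.lev0.step ⟨h1, rfl⟩
  simp only [anc, Nat.cast_one] at h2
  rw [h2]; simp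

theorem pr_cases (w : ℤ → ℤ → Option St) (t a : ℤ) :
    prd w t a = 2 * dc a ∨ prd w t a = 2 * dc a + 1 := by
  unfold prd; split_ifs <;> simp

theorem pr_lt (H : Sys w) {t a b : ℤ} (ha : w t a ≠ none) (hb : w t b ≠ none) (h : a < b) :
    prd w t a < prd w t b := by
  have h1 := H.par t a ha
  have h2 := H.par t b hb
  have hc : dc a < dc b ∨ (dc a = dc b ∧ a % 2 ≠ 0 ∧ b % 2 = 0) := by
    unfold dc; split_ifs <;> omega
  rcases hc with hc | ⟨hc, h3, h4⟩
  · rcases pr_cases w t a with h5 | h5 <;> rcases pr_cases w t b with h6 | h6 <;> omega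
  · -- both arrivals must be present
    have h5 : w (t - 1) (2 * dc a) ≠ none ∧ w (t - 1) (2 * dc a + 1) ≠ none := by
      obtain ⟨σa, ka⟩ := Option.ne_none_iff_exists'.1 ha
      obtain ⟨σb, kb⟩ := Option.ne_none_iff_exists'.1 hb
      have e1 := H.recL t (dc a)
      rw [show 2 * (dc a) - 1 = a by unfold dc; rw [if_neg h3]; omega, ka] at e1
      have e2 := H.recR t (dc b)
      rw [show 2 * (dc b) + 2 = b by unfold dc; rw [if_pos h4]; omega, kb, ← hc] at e2
      have e1' := (rdL_eq.1 e1.symm).1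
      have e2' := (rdR_eq.1 e2.symm).1
      revert e1' e2'
      rcases w (t - 1) (2 * dc a) with _ | u <;> rcases w (t - 1) (2 * dc a + 1) with _ | v
      · simp [hh]
      · simp only [hh, place]; split_ifs <;> simp
      · simp only [hh, place]; split_ifs <;> simp
      · simp
    have h6 : prd w t a = 2 * dc a := by unfold prd; rw [if_pos h5, if_neg h3]
    rw [hc] at h5
    have h7 : prd w t b = 2 * dc b + 1 := by unfold prd; rw [if_pos h5, if_pos h4]
    omega

theorem anc_live (H : Sys w) (k : ℕ) {t a : ℤ} (h : w t a ≠ none) :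
    w (t - k) (anc (prd w) k t a) ≠ none := by
  induction k generalizing t a with
  | zero => simpa [anc] using h
  | succ k ih =>
    have := ih (H.pr_live h)
    simp only [anc]
    rwa [show t - ((k + 1 : ℕ) : ℤ) = t - 1 - k by push_cast; ring]

theorem anc_lt (H : Sys w) (k : ℕ) {t a b : ℤ} (ha : w t a ≠ none) (hb : w t b ≠ none)
    (h : a < b) : anc (prd w) k t a < anc (prd w) k t b := by
  induction k generalizing t a b with
  | zero => simpa [anc] using h
  | succ k ih => exact ih (H.pr_live ha) (H.pr_live hb) (H.pr_lt ha hb h)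

end Sys

/-- ancestor at time `t'` of key `a` at time `t` -/
noncomputable def at' (w : ℤ → ℤ → Option St) (t t' a : ℤ) : ℤ := anc (prd w) (t - t').toNat t a

theorem at_An (w : ℤ → ℤ → Option St) {t t' : ℤ} (a : ℤ) (h : t' ≤ t) :
    An (prd w) t a t' (at' w t t' a) := ⟨_, by omega, rfl⟩

theorem An.at {w : ℤ → ℤ → Option St} {t t' a a' : ℤ} (h : An (prd w) t a t' a') :
    at' w t t' a = a' := by
  obtain ⟨k, hk, h1⟩ := h
  unfold at'
  rw [← h1]; congr 1; omega

theorem An.le {pr : ℤ → ℤ → ℤ} {t t' a a' : ℤ} (h : An pr t a t' a') : t' ≤ t := by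
  obtain ⟨k, hk, h1⟩ := h
  omega

theorem at_at (w : ℤ → ℤ → Option St) {t t' t'' : ℤ} (a : ℤ) (h : t' ≤ t) (h' : t'' ≤ t') :
    at' w t' t'' (at' w t t' a) = at' w t t'' a :=
  ((at_An w a h).trans (at_An w _ h')).at.symm

namespace Sys
variable {w : ℤ → ℤ → Option St}

theorem at_live (H : Sys w) {t t' a : ℤ} (h : t' ≤ t) (ha : w t a ≠ none) :
    w t' (at' w t t' a) ≠ none := by
  have := H.anc_live (t - t').toNat ha
  rwa [show t - ((t - t').toNat : ℤ) = t' by omega] at this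

theorem at_lt (H : Sys w) {t a b : ℤ} (t' : ℤ) (ha : w t a ≠ none) (hb : w t b ≠ none)
    (h : a < b) : at' w t t' a < at' w t t' b := H.anc_lt _ ha hb h

theorem at_le (H : Sys w) {t a b : ℤ} (t' : ℤ) (ha : w t a ≠ none) (hb : w t b ≠ none)
    (h : a ≤ b) : at' w t t' a ≤ at' w t t' b := by
  rcases h.lt_or_eq with h | h
  · exact (H.at_lt t' ha hb h).le
  · rw [h]

theorem at_inj (H : Sys w) {t a b : ℤ} (t' : ℤ) (ha : w t a ≠ none) (hb : w t b ≠ none)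
    (h : at' w t t' a = at' w t t' b) : a = b := by
  rcases lt_trichotomy a b with h1 | h1 | h1
  · exact absurd h (H.at_lt t' ha hb h1).ne
  · exact h1
  · exact absurd h (H.at_lt t' hb ha h1).ne'

end Sys

def qn (n : ℕ) : ℤ := 196 ^ n
def Tn (n : ℕ) : ℕ := 212 ^ n
def Dn : ℕ → ℤ
  | 0 => 0
  | n + 1 => 2 * Dn n + 8 * qn n
def cn : ℕ → ℕ
  | 0 => 0
  | n + 1 => 4 * Tn n + cn n
def Vn (w : ℤ → ℤ → Option St) : ℕ → ℤ → ℤ → ℤ → St → Prop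
  | 0 => W0 w
  | n + 1 => up (Vn w n) (Dn n)
def Sn (w : ℤ → ℤ → Option St) : ℕ → ℤ → ℤ → ℤ → Prop
  | 0 => fun _ a as => as = a + 1
  | n + 1 => upS (prd w) (Vn w n) (Tn n) (Sn w n)

theorem qn_succ (n : ℕ) : qn (n + 1) = 196 * qn n := by unfold qn; ring
theorem Tn_succ (n : ℕ) : Tn (n + 1) = 212 * Tn n := by unfold Tn; ring
theorem qn_pos (n : ℕ) : 0 < qn n := by unfold qn; positivity
theorem Tn_pos (n : ℕ) : 0 < Tn n := by unfold Tn; positivity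
theorem Dn_bd (n : ℕ) : 0 ≤ Dn n ∧ Dn n ≤ qn n := by
  induction n with
  | zero => simp [Dn, qn]
  | succ n ih =>
    have := qn_pos n
    rw [qn_succ]; unfold Dn
    constructor <;> linarith [ih.1, ih.2]
theorem cn_le (n : ℕ) : cn n ≤ Tn n := by
  induction n with
  | zero => simp [cn]
  | succ n ih => rw [Tn_succ]; unfold cn; omega

namespace Sys
variable {w : ℤ → ℤ → Option St}

theorem lev (H : Sys w) (n : ℕ) : Lev (prd w) (Vn w n) (qn n) (Dn n) (Tn n) (Sn w n) := by
  induction n with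
  | zero => simpa [Vn, qn, Dn, Tn, Sn] using H.lev0
  | succ n ih =>
    rw [qn_succ, Tn_succ]
    exact ih.next

theorem V_live {n : ℕ} {s t a : ℤ} {σ : St} (h : Vn w n s t a σ) : w t a ≠ none ∧ s = a / 2 := by
  induction n generalizing σ with
  | zero => exact ⟨by rw [h.1]; simp, h.2⟩
  | succ n ih =>
    obtain ⟨A, d, e, a2, h1, h2, h3⟩ := h
    exact ih h1

theorem V_uniq (H : Sys w) {n : ℕ} {s s' t a : ℤ} {σ σ' : St} (h : Vn w n s t a σ)
    (h' : Vn w n s' t a σ') : σ = σ' := by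
  have hs : s = s' := by rw [(V_live h).2, (V_live h').2]
  subst hs
  induction n generalizing σ σ' with
  | zero =>
    have h1 := h.1
    rw [h'.1] at h1
    simpa using h1.symm
  | succ n ih =>
    obtain ⟨A, d, e, a2, h1, h2, h3⟩ := h
    obtain ⟨A', d', e', a2', h1', h2', h3'⟩ := h'
    have := ih h1 h1'
    simp only [Prod.mk.injEq, Adr.mk.injEq, true_and] at this
    obtain ⟨⟨rfl, rfl⟩, rfl⟩ := this
    have h4 := (H.lev n).uniq h2 h2' rfl
    have h5 : σ.2 = σ'.2 := by simpa using h4.1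
    rw [← h5] at h3'
    exact Prod.ext (by rw [h3, h3']) h5

/-- Separation lemma. -/
theorem sep (H : Sys w) (n : ℕ) {t a as : ℤ} (h : Sn w n t a as) (Z : Finset ℤ)
    (hZ : ∀ z ∈ Z, w (t + cn n) z ≠ none ∧ a ≤ at' w (t + cn n) t z ∧ at' w (t + cn n) t z < as) :
    Z.card ≤ 2 ^ n := by
  induction n generalizing t a as Z with
  | zero =>
    simp only [Sn] at h
    subst h
    have : Z ⊆ {a} := by
      intro z hz
      have := hZ z hz
      simp [cn, at', anc] at this
      simp; omega
    simpa using Finset.card_le_card this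
  | succ n ih =>
    obtain ⟨a2, a', as', h1, h2, h3, h4, ⟨s5, σ5, h5⟩, ⟨s6, σ6, h6⟩⟩ := h
    have l5 := (V_live h5).1
    have l6 := (V_live h6).1
    have ecn : t + (cn (n + 1) : ℤ) = t + 4 * Tn n + cn n := by simp [cn]; ring
    rw [ecn] at hZ
    have hT := Tn_pos n
    rw [pow_succ, mul_two, ← Finset.card_filter_add_card_filter_not
      (fun z => at' w (t + 4 * Tn n + cn n) t z < a2)]
    apply add_le_add
    · have hinj : Set.InjOn (at' w (t + 4 * Tn n + cn n) (t + cn n))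
          (Z.filter (fun z => at' w (t + 4 * Tn n + cn n) t z < a2) : Set ℤ) := by
        intro x hx y hy hxy
        simp only [Finset.coe_filter, Set.mem_setOf_eq] at hx hy
        exact H.at_inj _ (hZ x hx.1).1 (hZ y hy.1).1 hxy
      rw [← Finset.card_image_of_injOn hinj]
      apply ih h1
      intro y hy
      simp only [Finset.mem_image, Finset.mem_filter] at hy
      obtain ⟨z, ⟨hz, hz2⟩, rfl⟩ := hy
      have := hZ z hz
      rw [at_at w _ (by omega) (by omega)]
      exact ⟨H.at_live (by omega) this.1, this.2.1, hz2⟩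
    · apply ih h2
      intro z hz
      simp only [Finset.mem_filter, not_lt] at hz
      obtain ⟨hz, hz2⟩ := hz
      have := hZ z hz
      have hl := H.at_live (t' := t + 4 * Tn n) (by omega) this.1
      have e := at_at w (t := t + 4 * Tn n + cn n) (t' := t + 4 * Tn n) (t'' := t) z (by omega)
        (by omega)
      refine ⟨this.1, ?_, ?_⟩
      · by_contra hc
        have h8 := H.at_lt t hl l5 (not_le.1 hc)
        rw [e, h3.at] at h8
        omega
      · by_contra hc
        have h8 := H.at_le t l6 hl (not_lt.1 hc)
        rw [e, h4.at] at h8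
        omega

end Sys
end UE
namespace UE
open Classical

theorem ps_diff (d : Bool) (k : ℕ) (hk : k ≤ 212) :
    -200 ≤ ps false d 212 - ps false d k ∧ ps false d 212 - ps false d k ≤ 200 := by
  rw [Lev.ps_end]
  unfold ps
  cases d <;> simp only [sg_true, sg_false] <;> split_ifs <;> constructor <;> omega

theorem ps_bd (r d : Bool) (k : ℕ) (hk : k ≤ 212) : -200 ≤ ps r d k ∧ ps r d k ≤ 200 := by
  unfold ps
  cases r <;> cases d <;> simp only [sg_true, sg_false] <;> split_ifs <;> constructor <;> omega

theorem ps_mid (d : Bool) (k : ℕ) (h1 : 12 ≤ k) (h2 : k ≤ 208) : ps true d k = ps false d k + 8 := by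
  unfold ps
  cases d <;> simp only [sg_true, sg_false] <;> split_ifs <;> omega

namespace Sys
variable {w : ℤ → ℤ → Option St}

theorem run'' (H : Sys w) {n : ℕ} {s t a : ℤ} {r d : Bool} {e : Ef} {b : Adr}
    (h : Vn w n s t a (⟨r, 211, d, e⟩, b)) (j : ℕ) (hj : j ≤ 211) :
    ∃ b', Vn w n (s - qn n * (ps r d 212 - ps r d (212 - j))) (t - (j * Tn n : ℕ))
      (anc (prd w) (j * Tn n) t a) (⟨r, ⟨211 - j, by omega⟩, d, e⟩, b') := by
  have := (H.lev n).run' h j ⟨211 - j, by omega⟩ (by simp; omega)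
  rw [show (⟨211 - j, by omega⟩ : Fin 212).val + 1 = 212 - j by simp; omega] at this
  exact this

theorem range (H : Sys w) {n : ℕ} {s t a : ℤ} {σ : St} (h : Vn w n s t a σ) (k : ℕ)
    (hk : k ≤ Tn n) : s - 2 * qn n ≤ anc (prd w) k t a / 2 ∧
      anc (prd w) k t a / 2 ≤ s + 2 * qn n := by
  induction n generalizing s t a σ k with
  | zero =>
    have hs := h.2
    simp only [Tn, pow_zero] at hk
    simp only [qn, pow_zero]
    interval_cases k
    · simp only [anc]; omega
    · simp only [anc]
      rcases pr_cases w t a with h1 | h1 <;> rw [h1] <;> unfold dc <;> split_ifs <;> omega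
  | succ n ih =>
    obtain ⟨A, d, e, a2, h1, h2, h3⟩ := h
    have hT := Tn_pos n
    have hq := qn_pos n
    rw [Tn_succ] at hk
    rw [qn_succ]
    obtain ⟨j, r, hj, hr, rfl⟩ : ∃ j r, j ≤ 211 ∧ r ≤ Tn n ∧ k = j * Tn n + r := by
      rcases hk.lt_or_eq with hk | hk
      · refine ⟨k / Tn n, k % Tn n, ?_, (Nat.mod_lt _ hT).le, ?_⟩
        · have := (Nat.div_lt_iff_lt_mul hT).2 hk
          omega
        · rw [mul_comm]; exact (Nat.div_add_mod _ _).symm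
      · exact ⟨211, Tn n, le_rfl, le_rfl, by rw [hk]; ring⟩
    obtain ⟨b', h4⟩ := H.run'' h1 j hj
    have h5 := ih h4 r hr
    rw [← anc_add] at h5
    have h6 := ps_diff d (212 - j) (by omega)
    constructor <;> nlinarith

theorem phase (H : Sys w) {n : ℕ} {s t a s' t' a' : ℤ} {σ σ' : St} (h : Vn w n s t a σ)
    (h' : Vn w n s' t' a' σ') (h1 : t ≤ t') (h2 : t' < t + Tn n)
    (h3 : An (prd w) t' a' t a) : t = t' := by
  induction n generalizing s t a s' t' a' σ σ' with
  | zero => simp only [Tn, pow_zero] at h2; push_cast at h2; omega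
  | succ n ih =>
    obtain ⟨A, d, e, a2, g1, -, -⟩ := h
    obtain ⟨A', d', e', a2', g1', -, -⟩ := h'
    have hT := Tn_pos n
    rw [Tn_succ] at h2
    obtain ⟨k, hk, hk2⟩ := h3
    obtain ⟨j, r, hj, hr, rfl⟩ : ∃ j r, j ≤ 211 ∧ r < Tn n ∧ k = j * Tn n + r := by
      refine ⟨k / Tn n, k % Tn n, ?_, (Nat.mod_lt _ hT), ?_⟩
      · have := (Nat.div_lt_iff_lt_mul hT (x := k) (y := 212)).2 (by push_cast at h2; omega)
        omega
      · rw [mul_comm]; exact (Nat.div_add_mod _ _).symm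
    obtain ⟨b', h4⟩ := H.run'' g1' j hj
    have h5 : An (prd w) (t' - (j * Tn n : ℕ)) (anc (prd w) (j * Tn n) t' a') t a := by
      refine ⟨r, ?_, ?_⟩
      · rw [hk]; push_cast; ring
      · rw [← anc_add, hk2]
    have h6 := ih g1 h4 (by rw [hk]; push_cast; omega) (by rw [hk]; push_cast; omega) h5
    have h7 : r = 0 := by rw [hk] at h6; push_cast at h6; omega
    subst h7
    have h8 : anc (prd w) (j * Tn n) t' a' = a := by simpa using hk2
    rw [← h6, h8] at h4
    have h9 := H.V_uniq g1 h4
    simp only [Prod.mk.injEq, Adr.mk.injEq, true_and] at h9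
    have h10 := congrArg Fin.val h9.1.1
    simp at h10
    have : j = 0 := by omega
    subst this
    rw [h6]; simp

theorem V_cast {n : ℕ} {s t a s' t' : ℤ} {σ : St} (h : Vn w n s t a σ) (hs : s = s')
    (ht : t = t') : ∃ a σ, Vn w n s' t' a σ := by
  subst hs ht; exact ⟨_, _, h⟩

theorem upl (H : Sys w) {n : ℕ} {s t a : ℤ} {r d : Bool} {τ : Fin 212} {e : Ef} {b : Adr}
    (h : Vn w n s t a (⟨r, τ, d, e⟩, b)) :
    ∃ a' σ', Vn w (n + 1) (s - (if r then Dn n else 0) - qn n * ps r d (τ.val + 1))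
      (t - ((τ.val + 1) * Tn n : ℕ)) a' σ' := by
  obtain ⟨b', h1⟩ := (H.lev n).run' h τ.val 0 (by simp)
  cases r
  · obtain ⟨d', e', A0, b0, as, k1, k2, k3, k4, k5, k6⟩ := (H.lev n).E0L h1
    have e1 : ps false d (((0 : Fin 212)).val + 1) = -1 := by simp [ps]
    have : Vn w (n + 1) _ _ _ (fx A0 b0, b0) := ⟨A0, d', e', as, k1, k2, rfl⟩
    refine V_cast this ?_ ?_
    · rw [e1]; simp; ring
    · push_cast; ring
  · obtain ⟨d', e', A0, as, k1, k2, -⟩ := (H.lev n).E0R h1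
    have e1 : ps true d (((0 : Fin 212)).val + 1) = 1 := by simp [ps]
    have : Vn w (n + 1) _ _ _ (fx A0 b', b') := ⟨A0, d', e', _, k2, by
      rw [sub_add_cancel]; exact k1, rfl⟩
    refine V_cast this ?_ ?_
    · rw [e1]; simp; ring
    · push_cast; ring

end Sys

/-- possible times at column `c` generated by a coarse arrival at `(s,t)` -/
noncomputable def Rc : ℕ → ℤ → ℤ → ℤ → Finset ℤ
  | 0, s, t, c => if s = c then {t} else ∅
  | n + 1, s, t, c => (Finset.univ : Finset (Bool × Bool × Fin 212)).biUnion fun p =>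
      Rc n (s + (if p.1 then Dn n else 0) + qn n * ps p.1 p.2.1 (p.2.2.val + 1))
        (t + (p.2.2.val + 1) * Tn n) c

theorem Rc_near (n : ℕ) {s t c x : ℤ} (h : x ∈ Rc n s t c) :
    s - 2 * qn n ≤ c ∧ c ≤ s + 2 * qn n := by
  induction n generalizing s t with
  | zero =>
    simp only [Rc] at h
    split_ifs at h with h1
    · simp [qn]; omega
    · simp at h
  | succ n ih =>
    simp only [Rc, Finset.mem_biUnion, Finset.mem_univ, true_and] at h
    obtain ⟨⟨r, d, τ⟩, h⟩ := h
    have h1 := ih h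
    simp only at h1
    have h2 := ps_bd r d (τ.val + 1) (by omega)
    have hq := qn_pos n
    have hD := Dn_bd n
    rw [qn_succ]
    have h3 : 0 ≤ (if r = true then Dn n else 0) ∧ (if r = true then Dn n else 0) ≤ qn n := by
      split_ifs <;> constructor <;> linarith
    constructor <;> nlinarith

def sgm (k : ℕ) : Fin 5 :=
  if k ≤ 4 then 0 else if k ≤ 8 then 1 else if k ≤ 12 then 2 else if k ≤ 208 then 3 else 4

theorem ps_inj (r d : Bool) {k k' : ℕ} (h1 : sgm k = sgm k') (h2 : ps r d k = ps r d k') : k = k' := by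
  unfold sgm at h1
  unfold ps at h2
  cases r <;> cases d <;> simp only [sg_true, sg_false] at h2 <;> split_ifs at h1 <;>
    first | (exfalso; revert h1; decide) | (simp only [*] at h2; split_ifs at h2 <;> omega)

theorem Rc_card (n : ℕ) (s t c : ℤ) : (Rc n s t c).card ≤ 100 ^ n := by
  induction n generalizing s t with
  | zero =>
    simp only [Rc]
    split_ifs <;> simp
  | succ n ih =>
    set G : Bool × Bool × Fin 212 → Finset ℤ := fun p =>
      Rc n (s + (if p.1 then Dn n else 0) + qn n * ps p.1 p.2.1 (p.2.2.val + 1))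
        (t + (p.2.2.val + 1) * Tn n) c with hG
    have hq := qn_pos n
    set F := (Finset.univ : Finset (Bool × Bool × Fin 212)).filter (fun p => (G p).Nonempty) with hF
    have e1 : Rc (n + 1) s t c = F.biUnion G := by
      ext x
      simp only [Rc, Finset.mem_biUnion, Finset.mem_univ, true_and, hF, Finset.mem_filter]
      constructor
      · rintro ⟨p, hp⟩; exact ⟨p, ⟨x, hp⟩, hp⟩
      · rintro ⟨p, _, hp⟩; exact ⟨p, hp⟩
    rw [e1]
    have e2 : F.card ≤ 100 := by
      -- base value
      let v : Bool → ℤ := fun r => (c - s - (if r then Dn n else 0) + 2 * qn n) / qn n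
      let ι : Bool × Bool × Fin 212 → Bool × Bool × Fin 5 × ℤ := fun p =>
        (p.1, p.2.1, sgm (p.2.2.val + 1), v p.1 - ps p.1 p.2.1 (p.2.2.val + 1))
      have hmaps : ∀ p ∈ F, ι p ∈ (Finset.univ : Finset Bool) ×ˢ (Finset.univ : Finset Bool) ×ˢ
          (Finset.univ : Finset (Fin 5)) ×ˢ Finset.Ico (0 : ℤ) 5 := by
        rintro ⟨r, d, τ⟩ hp
        simp only [hF, Finset.mem_filter, Finset.mem_univ, true_and] at hp
        obtain ⟨x, hx⟩ := hp
        have h1 := Rc_near n hx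
        simp only at h1
        simp only [ι, Finset.mem_product, Finset.mem_univ, true_and, Finset.mem_Ico]
        have h2 := Int.emod_add_mul_ediv (c - s - (if r then Dn n else 0) + 2 * qn n) (qn n)
        have h3 := Int.emod_nonneg (c - s - (if r then Dn n else 0) + 2 * qn n) hq.ne'
        have h4 := Int.emod_lt_of_pos (c - s - (if r then Dn n else 0) + 2 * qn n) hq
        change _ + qn n * v r = _ at h2
        set P := ps r d (τ.val + 1)
        constructor
        · by_contra hc
          have : v r - P ≤ -1 := by omega
          nlinarith
        · by_contra hc
          have : 5 ≤ v r - P := by omega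
          nlinarith
      have hinj : Set.InjOn ι (F : Set (Bool × Bool × Fin 212)) := by
        rintro ⟨r, d, τ⟩ _ ⟨r', d', τ'⟩ _ h
        simp only [ι, Prod.mk.injEq] at h
        obtain ⟨rfl, rfl, h3, h4⟩ := h
        have := ps_inj r d h3 (by linarith)
        have : τ = τ' := Fin.ext (by omega)
        rw [this]
      have := Finset.card_le_card_of_injOn ι hmaps hinj
      simpa using this
    calc _ ≤ F.card * 100 ^ n := Finset.card_biUnion_le_card_mul _ _ _ (fun p _ => ih _ _)
      _ ≤ 100 * 100 ^ n := Nat.mul_le_mul_right _ e2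
      _ = _ := by ring

namespace Sys
variable {w : ℤ → ℤ → Option St}

theorem cover (H : Sys w) {t a : ℤ} (h : w t a ≠ none) (n : ℕ) :
    ∃ s t' a' σ, Vn w n s t' a' σ ∧ t ∈ Rc n s t' (a / 2) ∧ t - 2 * Tn n ≤ t' ∧ t' ≤ t := by
  induction n with
  | zero =>
    obtain ⟨σ, h1⟩ := Option.ne_none_iff_exists'.1 h
    exact ⟨a / 2, t, a, σ, ⟨h1, rfl⟩, by simp [Rc], by omega, le_rfl⟩
  | succ n ih =>
    obtain ⟨s, t', a', ⟨⟨r, τ, d, e⟩, b⟩, h1, h2, h3, h4⟩ := ih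
    obtain ⟨a'', σ', h5⟩ := H.upl h1
    refine ⟨_, _, a'', σ', h5, ?_, ?_, ?_⟩
    · simp only [Rc, Finset.mem_biUnion, Finset.mem_univ, true_and]
      refine ⟨(r, d, τ), ?_⟩
      convert h2 using 2
      · simp only; ring
      · push_cast; ring
    · rw [Tn_succ]
      have : (τ.val + 1) * Tn n ≤ 212 * Tn n := Nat.mul_le_mul_right _ τ.isLt
      push_cast at *
      zify at this
      linarith
    · have : 0 ≤ ((τ.val + 1) * Tn n : ℕ) := Nat.zero_le _
      omega

end Sys
end UE
namespace UE
open Classical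
namespace Sys
variable {w : ℤ → ℤ → Option St}

theorem local_count (H : Sys w) {n : ℕ} {s t a : ℤ} {σ : St} (h : Vn w (n + 1) s t a σ) {t' : ℤ}
    (h1 : t - 61 * Tn n ≤ t') (h2 : t' ≤ t - 8 * Tn n) (Z : Finset ℤ)
    (hZ : ∀ z ∈ Z, w t' z ≠ none ∧ at' w t t' a ≤ z ∧ z / 2 < at' w t t' a / 2 + 4 * qn n) :
    Z.card ≤ 2 ^ n := by
  obtain ⟨A, d, e, a2, g1, g2, g3⟩ := h
  have hT := Tn_pos n
  have hq := qn_pos n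
  have hD := Dn_bd n
  have hc := cn_le n
  have l1 := (V_live g1).1
  have l2 := (V_live g2).1
  -- the gap
  have hgap : at' w t t' a / 2 + 4 * qn n ≤ at' w t t' a2 / 2 := by
    obtain ⟨k, hk⟩ : ∃ k : ℕ, t = t' + k := ⟨(t - t').toNat, by omega⟩
    obtain ⟨j, r, hj, hj', hr, hkj⟩ : ∃ j r, j ≤ 61 ∧ 8 ≤ j ∧ r ≤ Tn n ∧ k = j * Tn n + r := by
      refine ⟨k / Tn n, k % Tn n, ?_, ?_, (Nat.mod_lt _ hT).le, ?_⟩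
      · have := (Nat.div_le_iff_le_mul_add_pred hT (a := k) (c := 61)).2 (by
          have : (k : ℤ) ≤ 61 * Tn n := by omega
          have : k ≤ 61 * Tn n := by exact_mod_cast this
          rw [mul_comm]; omega)
        exact this
      · exact (Nat.le_div_iff_mul_le hT).2 (by
          have : (8 * Tn n : ℤ) ≤ k := by omega
          exact_mod_cast this)
      · rw [mul_comm]; exact (Nat.div_add_mod _ _).symm
    have ea : ∀ x, at' w t t' x = anc (prd w) k t x := by
      intro x; unfold at'; congr 1; omega
    obtain ⟨b1, k1⟩ := H.run'' g1 j (by omega)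
    obtain ⟨b2, k2⟩ := H.run'' g2 j (by omega)
    have r1 := H.range k1 r hr
    have r2 := H.range k2 r hr
    rw [← anc_add, ← hkj, ← ea] at r1 r2
    have := ps_mid d (212 - j) (by omega) (by omega)
    rw [this] at r2
    rw [Lev.ps_end] at r1 r2
    nlinarith [r1.2, r2.1]
  obtain ⟨b1, k1⟩ := H.run'' g1 211 le_rfl
  obtain ⟨b2, k2⟩ := H.run'' g2 211 le_rfl
  obtain ⟨A0, a0, a20, -, -, -, -, n1, n2, hS⟩ := (H.lev n).int0 k1 k2 (by
    rw [Lev.ps_end, Lev.ps_end]; simp [ps]; ring) _ _ rfl rfl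
  set t0 := t - ((211 * Tn n : ℕ) : ℤ) - (Tn n : ℤ) with ht0
  have ht0' : t0 = t - 212 * Tn n := by rw [ht0]; push_cast; ring
  have m1 : at' w t t0 a = a0 := (((An.mk' _ rfl).trans n1) : An (prd w) t a t0 a0).at
  have m2 : at' w t t0 a2 = a20 := (((An.mk' _ rfl).trans n2) : An (prd w) t a2 t0 a20).at
  have hinj : Set.InjOn (at' w t' (t0 + cn n)) (Z : Set ℤ) := fun x hx y hy hxy =>
    H.at_inj _ (hZ x hx).1 (hZ y hy).1 hxy
  rw [← Finset.card_image_of_injOn hinj]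
  apply H.sep n hS
  intro y hy
  simp only [Finset.mem_image] at hy
  obtain ⟨z, hz, rfl⟩ := hy
  obtain ⟨z1, z2, z3⟩ := hZ z hz
  rw [at_at w _ (by omega) (by omega)]
  refine ⟨H.at_live (by omega) z1, ?_, ?_⟩
  · rw [← m1, ← at_at w a (show t' ≤ t by omega) (show t0 ≤ t' by omega)]
    exact H.at_le _ (H.at_live (by omega) l1) z1 z2
  · rw [← m2, ← at_at w a2 (show t' ≤ t by omega) (show t0 ≤ t' by omega)]
    exact H.at_lt _ z1 (H.at_live (by omega) l2) (by omega)

/-- coarse arrivals near a column in a time window -/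
theorem coarse_count (H : Sys w) (n : ℕ) (c t0 : ℤ) (K : Finset (ℤ × ℤ))
    (hK : ∀ p ∈ K, (∃ a σ, Vn w (n + 1) p.1 p.2 a σ) ∧ p.1 - 2 * qn (n + 1) ≤ c ∧
      c ≤ p.1 + 2 * qn (n + 1) ∧ t0 ≤ p.2 ∧ p.2 < t0 + 53 * Tn n) :
    K.card ≤ 2 ^ n * 393 := by
  have hT := Tn_pos n
  have hq := qn_pos n
  have hK' : ∀ p : ℤ × ℤ, ∃ a, p ∈ K → ∃ σ, Vn w (n + 1) p.1 p.2 a σ := by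
    intro p
    by_cases hp : p ∈ K
    · obtain ⟨a, σ, h⟩ := (hK p hp).1
      exact ⟨a, fun _ => ⟨σ, h⟩⟩
    · exact ⟨0, fun h => absurd h hp⟩
  choose ky hky using hK'
  set ts := t0 - 8 * (Tn n : ℤ) with hts
  let f : ℤ × ℤ → ℤ := fun p => at' w p.2 ts (ky p)
  have hlive : ∀ p ∈ K, w p.2 (ky p) ≠ none := fun p hp => by
    obtain ⟨σ, h⟩ := hky p hp; exact (V_live h).1
  have hfl : ∀ p ∈ K, w ts (f p) ≠ none := fun p hp =>
    H.at_live (by have := hK p hp; omega) (hlive p hp)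
  have hw : ∀ p ∈ K, ∀ p' ∈ K, p.2 ≤ p'.2 → f p = f p' → p = p' := by
    intro p hp p' hp' hle heq
    obtain ⟨σ, h⟩ := hky p hp
    obtain ⟨σ', h'⟩ := hky p' hp'
    have b := hK p hp
    have b' := hK p' hp'
    have e1 : at' w p'.2 p.2 (ky p') = ky p := by
      apply H.at_inj ts (H.at_live hle (hlive p' hp')) (hlive p hp)
      rw [at_at w _ hle (by omega)]
      exact heq.symm
    have e2 : p.2 = p'.2 := by
      apply H.phase h h' hle
      · rw [Tn_succ]; push_cast; omega
      · rw [← e1]; exact at_An w _ hle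
    have e3 : ky p = ky p' := by
      rw [← e1, e2]; simp [at', anc]
    have e4 : p.1 = p'.1 := by
      rw [(V_live h).2, (V_live h').2, e3]
    exact Prod.ext e4 e2
  have hinj : Set.InjOn f (K : Set (ℤ × ℤ)) := by
    intro p hp p' hp' heq
    rcases le_total p.2 p'.2 with hle | hle
    · exact hw p hp p' hp' hle heq
    · exact (hw p' hp' p hp hle heq.symm).symm
  rw [← Finset.card_image_of_injOn hinj]
  let β : ℤ → ℤ := fun z => (z / 2 - c + 784 * qn n) / (4 * qn n)
  have hβ : ∀ z, β z * (4 * qn n) ≤ z / 2 - c + 784 * qn n ∧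
      z / 2 - c + 784 * qn n < (β z + 1) * (4 * qn n) := by
    intro z
    have h2 := Int.emod_add_mul_ediv (z / 2 - c + 784 * qn n) (4 * qn n)
    have h3 := Int.emod_nonneg (z / 2 - c + 784 * qn n) (show 4 * qn n ≠ 0 by omega)
    have h4 := Int.emod_lt_of_pos (z / 2 - c + 784 * qn n) (show 0 < 4 * qn n by omega)
    change _ + 4 * qn n * β z = _ at h2
    constructor <;> nlinarith
  have hmap : ∀ z ∈ K.image f, β z ∈ Finset.Ico (0 : ℤ) 393 := by
    intro z hz
    simp only [Finset.mem_image] at hz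
    obtain ⟨p, hp, rfl⟩ := hz
    obtain ⟨σ, h⟩ := hky p hp
    have b := hK p hp
    have r := H.range h (p.2 - ts).toNat (by rw [Tn_succ]; omega)
    change _ ≤ f p / 2 ∧ f p / 2 ≤ _ at r
    rw [qn_succ] at r b
    have hb := hβ (f p)
    rw [Finset.mem_Ico]
    constructor
    · by_contra hc
      have : β (f p) + 1 ≤ 0 := by omega
      nlinarith
    · by_contra hc
      have : 393 ≤ β (f p) := by omega
      nlinarith
  have := Finset.card_le_mul_card_image_of_maps_to hmap (2 ^ n) (by
    intro b _
    by_cases hne : ((K.image f).filter (fun z => β z = b)).Nonempty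
    · set Z := (K.image f).filter (fun z => β z = b) with hZ
      have hm := Finset.min'_mem Z hne
      have hmem : ∀ x, x ∈ Z ↔ (∃ p ∈ K, f p = x) ∧ β x = b := by
        intro x; rw [hZ, Finset.mem_filter, Finset.mem_image]
      obtain ⟨⟨p, hp, hpf⟩, hpb⟩ := (hmem _).1 hm
      obtain ⟨σ, h⟩ := hky p hp
      have bb := hK p hp
      apply H.local_count h (t' := ts) (by omega) (by omega)
      intro z hz
      have hz1 := Finset.min'_le Z z hz
      obtain ⟨⟨p', hp', rfl⟩, hb'⟩ := (hmem _).1 hz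
      refine ⟨hfl p' hp', ?_, ?_⟩
      · change f p ≤ _
        rw [hpf]; exact hz1
      · change _ < f p / 2 + _
        rw [hpf]
        have u1 := hβ (Z.min' hne)
        have u2 := hβ (f p')
        rw [hpb] at u1
        rw [hb'] at u2
        linarith [u1.1, u2.2]
    · rw [Finset.not_nonempty_iff_eq_empty] at hne
      rw [hne]; simp)
  simpa using this

theorem sparse (H : Sys w) (n : ℕ) (c u : ℤ) :
    ((Finset.Ico u (u + 53 * Tn n)).filter
      (fun t => w t (2 * c) ≠ none ∨ w t (2 * c + 1) ≠ none)).card ≤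
      9 * 393 * 2 ^ n * 100 ^ (n + 1) := by
  have hT := Tn_pos n
  set B : ℕ → Finset (ℤ × ℤ) := fun i =>
    (((Finset.Icc (c - 2 * qn (n + 1)) (c + 2 * qn (n + 1))) ×ˢ
      (Finset.Ico (u - 424 * Tn n + i * (53 * Tn n)) (u - 424 * Tn n + i * (53 * Tn n) + 53 * Tn n))).filter
        (fun p => ∃ a σ, Vn w (n + 1) p.1 p.2 a σ)) with hB
  have hBc : ∀ i, (B i).card ≤ 2 ^ n * 393 := by
    intro i
    apply H.coarse_count n c (u - 424 * Tn n + i * (53 * Tn n))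
    intro p hp
    simp only [hB, Finset.mem_filter, Finset.mem_product, Finset.mem_Icc, Finset.mem_Ico] at hp
    refine ⟨hp.2, ?_, ?_, ?_, ?_⟩ <;> omega
  have hsub : ((Finset.Ico u (u + 53 * Tn n)).filter
      (fun t => w t (2 * c) ≠ none ∨ w t (2 * c + 1) ≠ none)) ⊆
      ((Finset.range 9).biUnion B).biUnion (fun p => Rc (n + 1) p.1 p.2 c) := by
    intro t ht
    simp only [Finset.mem_filter, Finset.mem_Ico] at ht
    obtain ⟨⟨t1, t2⟩, hl⟩ := ht
    obtain ⟨a, ha, hac⟩ : ∃ a, w t a ≠ none ∧ a / 2 = c := by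
      rcases hl with hl | hl
      · exact ⟨_, hl, by omega⟩
      · exact ⟨_, hl, by omega⟩
    obtain ⟨s, t', a', σ, h1, h2, h3, h4⟩ := H.cover ha (n + 1)
    rw [hac] at h2
    have h5 := Rc_near _ h2
    rw [Tn_succ] at h3
    push_cast at h3
    simp only [Finset.mem_biUnion, Finset.mem_range]
    refine ⟨(s, t'), ⟨((t' - (u - 424 * Tn n)) / (53 * Tn n)).toNat, ?_, ?_⟩, h2⟩
    · have : (t' - (u - 424 * Tn n)) / (53 * Tn n) < 9 :=
        Int.ediv_lt_of_lt_mul (by omega) (by omega)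
      omega
    · have g2 := Int.emod_add_mul_ediv (t' - (u - 424 * Tn n)) (53 * Tn n)
      have g3 := Int.emod_nonneg (t' - (u - 424 * Tn n)) (show (53 * Tn n : ℤ) ≠ 0 by omega)
      have g4 := Int.emod_lt_of_pos (t' - (u - 424 * Tn n)) (show 0 < (53 * Tn n : ℤ) by omega)
      have g5 : 0 ≤ (t' - (u - 424 * Tn n)) / (53 * Tn n) :=
        Int.ediv_nonneg (by omega) (by omega)
      simp only [hB, Finset.mem_filter, Finset.mem_product, Finset.mem_Icc, Finset.mem_Ico]
      rw [Int.toNat_of_nonneg g5, mul_comm ((t' - (u - 424 * Tn n)) / (53 * Tn n) : ℤ)]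
      refine ⟨⟨⟨?_, ?_⟩, ?_, ?_⟩, a', σ, h1⟩ <;> omega
  calc _ ≤ _ := Finset.card_le_card hsub
    _ ≤ ((Finset.range 9).biUnion B).card * 100 ^ (n + 1) :=
      Finset.card_biUnion_le_card_mul _ _ _ (fun p _ => Rc_card _ _ _ _)
    _ ≤ ((Finset.range 9).card * (2 ^ n * 393)) * 100 ^ (n + 1) :=
      Nat.mul_le_mul_right _ (Finset.card_biUnion_le_card_mul _ _ _ (fun i _ => hBc i))
    _ = _ := by rw [Finset.card_range]; ring

end Sys
end UE
namespace UE
open Classical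

def efc : Ef → Fin 6
  | Ef.none => 0 | Ef.nop => 1 | Ef.chk => 2 | Ef.adv => 3 | Ef.swap => 4 | Ef.swapfl => 5

instance : Finite Ef := Finite.of_injective efc (by
  intro a b h
  cases a <;> cases b <;> first | rfl | (exfalso; revert h; decide))

instance : Finite Adr :=
  Finite.of_injective (fun a : Adr => (a.r, a.τ, a.d, a.e)) (by
    intro a b h
    simp only [Prod.mk.injEq] at h
    ext1 <;> tauto)

theorem exists_E : ∃ m : ℕ, Nonempty (Cell ≃ Fin (m + 1)) := by
  have h : 0 < Nat.card Cell := Nat.card_pos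
  refine ⟨Nat.card Cell - 1, ⟨?_⟩⟩
  rw [Nat.sub_add_cancel h]
  exact Finite.equivFin Cell

section
variable {m : ℕ} (E : Cell ≃ Fin (m + 1))

noncomputable def Ph (x : ℤ → Fin (m + 1)) : ℤ → Fin (m + 1) := fun i =>
  E (hh (rdR (E.symm (x (i - 1)))) (rdL (E.symm (x (i + 1)))))

noncomputable def Bl : Fin (m + 1) := E (none, none)

theorem Ph_cont : Continuous (Ph E) := by
  apply continuous_pi
  intro i
  have h1 : Continuous (fun x : ℤ → Fin (m + 1) => (x (i - 1), x (i + 1))) := by fun_prop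
  have h2 : Continuous (fun p : Fin (m + 1) × Fin (m + 1) =>
    E (hh (rdR (E.symm p.1)) (rdL (E.symm p.2)))) := continuous_of_discreteTopology
  exact h2.comp h1

theorem Ph_shift (x : ℤ → Fin (m + 1)) :
    Ph E (fun i => x (i + 1)) = fun i => Ph E x (i + 1) := by
  funext i
  simp only [Ph]
  rw [show i - 1 + 1 = i + 1 - 1 by ring]

theorem Ph_blank : Ph E (fun _ => Bl E) = fun _ => Bl E := by
  funext i
  simp [Ph, Bl, rdR, rdL, hh]

/-- limit set -/
def Om : Set (ℤ → Fin (m + 1)) := ⋂ k : ℕ, Set.range (Ph E)^[k]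

theorem range_anti (k : ℕ) : Set.range (Ph E)^[k + 1] ⊆ Set.range (Ph E)^[k] := by
  rintro _ ⟨y, rfl⟩
  exact ⟨Ph E y, by rw [Function.iterate_succ_apply]⟩

theorem range_closed (k : ℕ) : IsClosed (Set.range (Ph E)^[k]) :=
  (isCompact_range ((Ph_cont E).iterate k)).isClosed

theorem Om_pre {x : ℤ → Fin (m + 1)} (hx : x ∈ Om E) : ∃ y ∈ Om E, Ph E y = x := by
  have hc : IsClosed (Ph E ⁻¹' {x}) := isClosed_singleton.preimage (Ph_cont E)
  have := IsCompact.nonempty_iInter_of_sequence_nonempty_isCompact_isClosed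
    (fun k : ℕ => Ph E ⁻¹' {x} ∩ Set.range (Ph E)^[k])
    (fun k => Set.inter_subset_inter_right _ (range_anti E k))
    (fun k => by
      have h := Set.mem_iInter.1 hx (k + 1)
      obtain ⟨y, hy⟩ := h
      rw [Function.iterate_succ_apply'] at hy
      exact ⟨(Ph E)^[k] y, hy, ⟨y, rfl⟩⟩)
    ((hc.inter (range_closed E 0)).isCompact)
    (fun k => hc.inter (range_closed E k))
  obtain ⟨y, hy⟩ := this
  rw [Set.mem_iInter] at hy
  exact ⟨y, Set.mem_iInter.2 fun k => (hy k).2, (hy 0).1⟩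

theorem Om_orbit {x : ℤ → Fin (m + 1)} (hx : x ∈ Om E) :
    ∃ z : ℤ → ℤ → Fin (m + 1), (∀ t, z (t + 1) = Ph E (z t)) ∧
      ∀ t : ℕ, z t = (Ph E)^[t] x := by
  choose g hg1 hg2 using fun x : Om E => Om_pre E x.2
  let p : ℕ → Om E := fun k => (fun y : Om E => (⟨g y, hg1 y⟩ : Om E))^[k] ⟨x, hx⟩
  have hp : ∀ k, Ph E (p (k + 1)).1 = (p k).1 := by
    intro k
    simp only [p, Function.iterate_succ_apply']
    exact hg2 _
  refine ⟨fun t => if 0 ≤ t then (Ph E)^[t.toNat] x else (p (-t).toNat).1, ?_, ?_⟩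
  · intro t
    by_cases h0 : 0 ≤ t
    · have : 0 ≤ t + 1 := by omega
      simp only [h0, this, if_true]
      rw [show (t + 1).toNat = t.toNat + 1 by omega, Function.iterate_succ_apply']
    · by_cases h1 : t = -1
      · subst h1
        simpa [p] using (hp 0).symm
      · have h2 : ¬ 0 ≤ t + 1 := by omega
        simp only [h0, h2, if_false]
        rw [show (-t).toNat = (-(t + 1)).toNat + 1 by omega, hp]
  · intro t
    simp

noncomputable def wz (z : ℤ → ℤ → Fin (m + 1)) (π : ℤ) (t a : ℤ) : Option St :=
  if (a / 2 + t) % 2 = 0 then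
    (if a % 2 = 0 then rdR (E.symm (z (t - 1) (a / 2 + π - 1)))
      else rdL (E.symm (z (t - 1) (a / 2 + π + 1)))) else none

theorem wz_sys {z : ℤ → ℤ → Fin (m + 1)} (hz : ∀ t, z (t + 1) = Ph E (z t)) (π : ℤ) :
    Sys (wz E z π) := by
  have key : ∀ t c, (c + t) % 2 = 0 → hh (wz E z π t (2 * c)) (wz E z π t (2 * c + 1)) =
      E.symm (z t (c + π)) := by
    intro t c h
    have h1 : (2 * c) / 2 = c := by omega
    have h2 : (2 * c + 1) / 2 = c := by omega
    have h3 : (2 * c) % 2 = 0 := by omega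
    have h4 : ¬ (2 * c + 1) % 2 = 0 := by omega
    simp only [wz, h1, h2, h3, h4, h, if_true, if_false]
    have := hz (t - 1)
    rw [sub_add_cancel] at this
    rw [this]
    simp [Ph]
  have key0 : ∀ t c, ¬ (c + t) % 2 = 0 → hh (wz E z π t (2 * c)) (wz E z π t (2 * c + 1)) =
      (none, none) := by
    intro t c h
    have h1 : (2 * c) / 2 = c := by omega
    have h2 : (2 * c + 1) / 2 = c := by omega
    simp only [wz, h1, h2, h, if_false, hh]
  constructor
  · intro t c
    have h1 : (2 * c + 2) / 2 = c + 1 := by omega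
    have h3 : (2 * c + 2) % 2 = 0 := by omega
    by_cases h : (c + (t - 1)) % 2 = 0
    · rw [key _ _ h]
      have : (c + 1 + t) % 2 = 0 := by omega
      simp only [wz, h1, h3, this, if_true]
      rw [show c + 1 + π - 1 = c + π by ring]
    · rw [key0 _ _ h]
      have : ¬ (c + 1 + t) % 2 = 0 := by omega
      simp only [wz, h1, this, if_false]
      simp [rdR]
  · intro t c
    have h1 : (2 * c - 1) / 2 = c - 1 := by omega
    have h3 : ¬ (2 * c - 1) % 2 = 0 := by omega
    by_cases h : (c + (t - 1)) % 2 = 0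
    · rw [key _ _ h]
      have : (c - 1 + t) % 2 = 0 := by omega
      simp only [wz, h1, h3, this, if_true, if_false]
      rw [show c - 1 + π + 1 = c + π by ring]
    · rw [key0 _ _ h]
      have : ¬ (c - 1 + t) % 2 = 0 := by omega
      simp only [wz, h1, this, if_false]
      simp [rdL]
  · intro t a h
    by_contra hc
    simp [wz, hc] at h

theorem wz_live {z : ℤ → ℤ → Fin (m + 1)} (hz : ∀ t, z (t + 1) = Ph E (z t)) {t c : ℤ}
    (h : z t c ≠ Bl E) (π : ℤ) (hp : (c - π + t) % 2 = 0) :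
    wz E z π t (2 * (c - π)) ≠ none ∨ wz E z π t (2 * (c - π) + 1) ≠ none := by
  by_contra hc
  push Not at hc
  apply h
  have := hz (t - 1)
  rw [sub_add_cancel] at this
  rw [this]
  have h1 : (2 * (c - π)) / 2 = c - π := by omega
  have h2 : (2 * (c - π) + 1) / 2 = c - π := by omega
  have h3 : (2 * (c - π)) % 2 = 0 := by omega
  have h4 : ¬ (2 * (c - π) + 1) % 2 = 0 := by omega
  simp only [wz, h1, h2, h3, h4, hp, if_true, if_false, sub_add_cancel] at hc
  simp only [Ph, hc.1, hc.2, hh, Bl]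

theorem count {x : ℤ → Fin (m + 1)} (hx : x ∈ Om E) (n : ℕ) (c : ℤ) :
    ((Finset.range (53 * Tn n)).filter (fun t => (Ph E)^[t] x c ≠ Bl E)).card ≤
      707400 * 200 ^ n := by
  obtain ⟨z, hz, hz2⟩ := Om_orbit E hx
  have s0 := (wz_sys E hz 0).sparse n c 0
  have s1 := (wz_sys E hz 1).sparse n (c - 1) 0
  set F0 := ((Finset.Ico (0 : ℤ) (0 + 53 * Tn n)).filter
      (fun t => wz E z 0 t (2 * c) ≠ none ∨ wz E z 0 t (2 * c + 1) ≠ none)) with hF0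
  set F1 := ((Finset.Ico (0 : ℤ) (0 + 53 * Tn n)).filter
      (fun t => wz E z 1 t (2 * (c - 1)) ≠ none ∨ wz E z 1 t (2 * (c - 1) + 1) ≠ none)) with hF1
  have : ((Finset.range (53 * Tn n)).filter (fun t => (Ph E)^[t] x c ≠ Bl E)).card ≤
      (F0 ∪ F1).card := by
    apply Finset.card_le_card_of_injOn (fun t : ℕ => (t : ℤ))
    · intro t ht
      simp only [Finset.coe_filter, Finset.mem_range, Set.mem_ofPred_eq, ← hz2] at ht
      simp only [Finset.coe_union, Set.mem_union, Finset.mem_coe, hF0, hF1, Finset.mem_filter,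
        Finset.mem_Ico]
      have hr : (0 : ℤ) ≤ t ∧ (t : ℤ) < 0 + 53 * Tn n := by
        have := ht.1; zify at this; omega
      by_cases hp : (c + t) % 2 = 0
      · left
        have := wz_live E hz ht.2 0 (by simpa using hp)
        simp only [sub_zero] at this
        exact ⟨hr, this⟩
      · right
        exact ⟨hr, wz_live E hz ht.2 1 (by omega)⟩
    · intro a _ b _ h
      simpa using h
  calc _ ≤ _ := this
    _ ≤ F0.card + F1.card := Finset.card_union_le _ _
    _ ≤ _ := add_le_add s0 s1
    _ = _ := by
      rw [show (200 : ℕ) = 2 * 100 by norm_num, mul_pow]; ring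

theorem iter_inv (μ : Measure (ℤ → Fin (m + 1)))
    (hμ : ∀ A : Set (ℤ → Fin (m + 1)), MeasurableSet A → μ (Ph E ⁻¹' A) = μ A)
    (k : ℕ) {A : Set (ℤ → Fin (m + 1))} (hA : MeasurableSet A) :
    μ ((Ph E)^[k] ⁻¹' A) = μ A := by
  induction k generalizing A with
  | zero => simp
  | succ k ih =>
    rw [Function.iterate_succ', Set.preimage_comp, ih ((Ph_cont E).measurable hA), hμ A hA]

theorem ae_Om (μ : Measure (ℤ → Fin (m + 1))) [IsProbabilityMeasure μ]
    (hμ : ∀ A : Set (ℤ → Fin (m + 1)), MeasurableSet A → μ (Ph E ⁻¹' A) = μ A)  : ∀ᵐ x ∂μ, x ∈ Om E := by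
  have : ∀ k : ℕ, ∀ᵐ x ∂μ, x ∈ Set.range (Ph E)^[k] := by
    intro k
    have h1 := iter_inv E μ hμ k (range_closed E k).measurableSet
    rw [Set.preimage_range, measure_univ] at h1
    have h1 := h1.symm
    rw [← prob_compl_eq_zero_iff (range_closed E k).measurableSet] at h1
    exact h1
  filter_upwards [ae_all_iff.2 this] with x hx
  exact Set.mem_iInter.2 hx

theorem zero_cell (μ : Measure (ℤ → Fin (m + 1))) [IsProbabilityMeasure μ]
    (hμ : ∀ A : Set (ℤ → Fin (m + 1)), MeasurableSet A → μ (Ph E ⁻¹' A) = μ A) (c : ℤ) : μ {x | x c ≠ Bl E} = 0 := by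
  set A : Set (ℤ → Fin (m + 1)) := {x | x c ≠ Bl E} with hA
  have mA : MeasurableSet A := by
    have : A = (fun x : ℤ → Fin (m + 1) => x c) ⁻¹' {Bl E}ᶜ := by ext; simp [hA]
    rw [this]
    exact (measurable_pi_apply c) (MeasurableSet.of_discrete)
  have bound : ∀ n : ℕ, ((53 * Tn n : ℕ) : ENNReal) * μ A ≤ ((707400 * 200 ^ n : ℕ) : ENNReal) := by
    intro n
    have e1 : ((53 * Tn n : ℕ) : ENNReal) * μ A =
        ∫⁻ x, ∑ t ∈ Finset.range (53 * Tn n), ((Ph E)^[t] ⁻¹' A).indicator 1 x ∂μ := by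
      rw [lintegral_finsetSum]
      · have : ∀ t ∈ Finset.range (53 * Tn n),
            ∫⁻ x, ((Ph E)^[t] ⁻¹' A).indicator 1 x ∂μ = μ A := by
          intro t _
          rw [lintegral_indicator_one (((Ph_cont E).iterate t).measurable mA), iter_inv E μ hμ t mA]
        rw [Finset.sum_congr rfl this]
        simp
      · intro t _
        exact measurable_one.indicator (((Ph_cont E).iterate t).measurable mA)
    rw [e1]
    calc _ ≤ ∫⁻ _, ((707400 * 200 ^ n : ℕ) : ENNReal) ∂μ := by
          apply lintegral_mono_ae
          filter_upwards [ae_Om E μ hμ] with x hx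
          have := count E hx n c
          rw [Finset.card_filter] at this
          calc _ = ((∑ t ∈ Finset.range (53 * Tn n),
                if (Ph E)^[t] x c ≠ Bl E then 1 else 0 : ℕ) : ENNReal) := by
                push_cast
                apply Finset.sum_congr rfl
                intro t _
                simp [Set.indicator_apply, hA]
            _ ≤ _ := by exact_mod_cast this
      _ = _ := by simp
  have hfin : μ A ≠ ⊤ := measure_ne_top μ A
  set r := (μ A).toReal with hr
  have hrr : μ A = ENNReal.ofReal r := (ENNReal.ofReal_toReal hfin).symm
  have r0 : 0 ≤ r := ENNReal.toReal_nonneg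
  have bound2 : ∀ n : ℕ, r ≤ 707400 * (200 / 212 : ℝ) ^ n := by
    intro n
    have h := ENNReal.toReal_mono (ENNReal.natCast_ne_top _) (bound n)
    rw [ENNReal.toReal_mul, ENNReal.toReal_natCast, ENNReal.toReal_natCast] at h
    change ((53 * Tn n : ℕ) : ℝ) * r ≤ _ at h
    rw [div_pow]
    have hp : (0 : ℝ) < 212 ^ n := by positivity
    have : r * 212 ^ n ≤ 707400 * 200 ^ n := by
      simp only [Tn] at h
      push_cast at h
      nlinarith [mul_nonneg r0 hp.le]
    rw [mul_div_assoc', le_div_iff₀ hp]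
    exact this
  have hlim : Filter.Tendsto (fun n : ℕ => 707400 * (200 / 212 : ℝ) ^ n) Filter.atTop (nhds 0) := by
    have := (tendsto_pow_atTop_nhds_zero_of_lt_one (r := (200 / 212 : ℝ)) (by norm_num)
      (by norm_num)).const_mul 707400
    simpa using this
  have : r ≤ 0 := ge_of_tendsto' hlim bound2
  rw [hrr, le_antisymm this r0]; simp

theorem eq_dirac (μ : Measure (ℤ → Fin (m + 1))) [IsProbabilityMeasure μ]
    (hμ : ∀ A : Set (ℤ → Fin (m + 1)), MeasurableSet A → μ (Ph E ⁻¹' A) = μ A)  : μ = Measure.dirac (fun _ => Bl E) := by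
  have h : ∀ᵐ x ∂μ, x = fun _ => Bl E := by
    have : ∀ c : ℤ, ∀ᵐ x ∂μ, x c = Bl E := fun c => zero_cell E μ hμ c
    filter_upwards [ae_all_iff.2 this] with x hx
    exact funext hx
  have h2 : Measure.map id μ = Measure.map (fun _ => (fun _ => Bl E)) μ :=
    Measure.map_congr h
  rw [Measure.map_id, Measure.map_const] at h2
  simpa using h2
end

theorem unique_erg {m : ℕ} (E : Cell ≃ Fin (m + 1)) :
    ∃! μ : Measure (ℤ → Fin (m + 1)), IsProbabilityMeasure μ ∧
      ∀ A : Set (ℤ → Fin (m + 1)), MeasurableSet A → μ (Ph E ⁻¹' A) = μ A := by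
  refine ⟨Measure.dirac (fun _ => Bl E), ⟨inferInstance, ?_⟩, ?_⟩
  · intro A hA
    rw [Measure.dirac_apply' _ hA, Measure.dirac_apply' _ ((Ph_cont E).measurable hA)]
    simp [Set.indicator_apply, Ph_blank]
  · rintro μ ⟨h1, h2⟩
    exact eq_dirac E μ h2

end UE
namespace UE
open Classical

/-- `k` and `k+1` meet at time `j` -/
def isL (pos : ℤ → ℕ → ℤ) (st : ℤ → ℕ → St) (k : ℤ) (j : ℕ) : Prop :=
  pos (k + 1) j = pos k j ∧
    meet (st k j) (st (k + 1) j) = some (st k (j + 1), st (k + 1) (j + 1))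

structure Diag (J : ℕ) (pos : ℤ → ℕ → ℤ) (st : ℤ → ℕ → St) : Prop where
  step : ∀ k j, j < J → pos k (j + 1) = pos k j + sg (dir (st k (j + 1)).1)
  tr : ∀ k j, j < J → (¬ need (st k j).1 ∧ st k (j + 1) = nx (st k j)) ∨ isL pos st k j ∨
    isL pos st (k - 1) j
  ord : ∀ k j, j < J → pos k j ≤ pos (k + 1) j
  ord' : ∀ k j, j < J → pos k j = pos (k + 1) j →
    dir (st k (j + 1)).1 = false ∧ dir (st (k + 1) (j + 1)).1 = true
  par : ∀ k j, j < J → (pos (k + 1) j - pos k j) % 2 = 0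
  init : ∀ k, fx (st k 0).1 (st k 0).2 = (st k 0).1

theorem mc_facts {a b : Adr} (h : mc a b) : eff a = eff b ∧ eff a ≠ Ef.none ∧ dir a = false ∧
    dir b = true ∧ (a.τ = 0 → a.r = false) ∧ (b.τ = 0 → b.r = true) := by
  have h0 := (mc_eff h).1
  refine ⟨?_, h0, ?_⟩
  · obtain ⟨h1, h2⟩ := h
    rcases h2 with ⟨h2 | h2, h3, h4, h5, h6⟩ | ⟨h2 | h2, h3, h4, h5, h6, h7, h8⟩ <;>
      (rw [h2] at h1; simp only [eff, h2, ← h1, Kact])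
    · simp
    · simp [h5, h6]
    · have h9 := h8
      rw [h7] at h9
      simp [h3, h4, h5, h6, h8, h9]
    · have h9 := h8
      rw [h7] at h9
      simp [h3, h4, h5, h6, h8, h9]
  · obtain ⟨h1, h2⟩ := h
    rcases h2 with ⟨h2 | h2, h3, h4, h5, h6⟩ | ⟨h2 | h2, h3, h4, h5, h6, h7, h8⟩ <;>
      (rw [h2] at h1; simp [dir, h2, ← h1, h3, h4, h5, h6])

theorem isL_facts {pos : ℤ → ℕ → ℤ} {st : ℤ → ℕ → St} {k : ℤ} {j : ℕ} (h : isL pos st k j) :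
    mc (suc (st k j).1) (suc (st (k + 1) j).1) ∧
    act (eff (suc (st k j).1)) (st k j).2 (st (k + 1) j).2 =
      some ((st k (j + 1)).2, (st (k + 1) (j + 1)).2) ∧
    (st k (j + 1)).1 = upd (suc (st k j).1) (st k (j + 1)).2 ∧
    (st (k + 1) (j + 1)).1 = upd (suc (st (k + 1) j).1) (st k (j + 1)).2 := by
  obtain ⟨_, h⟩ := h
  obtain ⟨h1, x, y, h2, h3, h4⟩ := (meet_iff (st k j).1 (st k j).2 (st (k + 1) j).1
    (st (k + 1) j).2 _ _).1 h
  rw [h3, h4]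
  exact ⟨h1, h2, rfl, rfl⟩

namespace Diag
variable {J : ℕ} {pos : ℤ → ℕ → ℤ} {st : ℤ → ℕ → St}

theorem mono (H : Diag J pos st) {j : ℕ} (hj : j < J) (k : ℤ) (i : ℕ) :
    pos k j ≤ pos (k + i) j := by
  induction i with
  | zero => simp
  | succ i ih =>
    have := H.ord (k + i) j hj
    rw [add_assoc] at this
    push_cast
    omega

theorem mono' (H : Diag J pos st) {j : ℕ} (hj : j < J) {k k' : ℤ} (h : k ≤ k') :
    pos k j ≤ pos k' j := by
  have := H.mono hj k (k' - k).toNat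
  rwa [show k + ((k' - k).toNat : ℤ) = k' by omega] at this

theorem two (H : Diag J pos st) {j : ℕ} (hj : j < J) {k k' : ℤ} (h : k < k')
    (he : pos k j = pos k' j) : k' = k + 1 := by
  by_contra hc
  have h1 := H.ord k j hj
  have h2 := H.ord (k + 1) j hj
  have h3 := H.mono' hj (show k + 1 + 1 ≤ k' by omega)
  have h4 := (H.ord' k j hj (by omega)).2
  have h5 := (H.ord' (k + 1) j hj (by omega)).1
  rw [h4] at h5; cases h5

theorem uniq (H : Diag J pos st) {j : ℕ} (hj : j < J) {k k' : ℤ}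
    (he : pos k j = pos k' j) (hd : dir (st k (j + 1)).1 = dir (st k' (j + 1)).1) : k = k' := by
  rcases lt_trichotomy k k' with h | h | h
  · obtain rfl := H.two hj h he
    have := H.ord' k j hj he
    rw [this.1, this.2] at hd; cases hd
  · exact h
  · obtain rfl := H.two hj h he.symm
    have := H.ord' k' j hj he.symm
    rw [this.1, this.2] at hd; cases hd

/-- trichotomy of transitions -/
theorem tri (H : Diag J pos st) (k : ℤ) {j : ℕ} (hj : j < J) :
    (¬ need (st k j).1 ∧ st k (j + 1) = nx (st k j) ∧ ¬ isL pos st k j ∧ ¬ isL pos st (k - 1) j) ∨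
    (isL pos st k j ∧ ¬ isL pos st (k - 1) j) ∨ (isL pos st (k - 1) j ∧ ¬ isL pos st k j) := by
  have hex : ¬ (isL pos st k j ∧ isL pos st (k - 1) j) := by
    rintro ⟨h1, h2⟩
    have e1 := h1.1
    have e2 := h2.1
    rw [sub_add_cancel] at e2
    have := H.two hj (show k - 1 < k + 1 by omega) (by omega)
    omega
  have n1 : isL pos st k j → need (st k j).1 := fun h => (mc_eff (isL_facts h).1).1
  have n2 : isL pos st (k - 1) j → need (st k j).1 := fun h => by
    have := (mc_eff (isL_facts h).1).2
    rw [sub_add_cancel] at this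
    exact this
  rcases H.tr k j hj with ⟨h1, h2⟩ | h | h
  · exact Or.inl ⟨h1, h2, fun h => h1 (n1 h), fun h => h1 (n2 h)⟩
  · exact Or.inr (Or.inl ⟨h, fun h' => hex ⟨h, h'⟩⟩)
  · exact Or.inr (Or.inr ⟨h, fun h' => hex ⟨h', h⟩⟩)

end Diag

/-- configuration at time `t` -/
noncomputable def slot (pos : ℤ → ℕ → ℤ) (st : ℤ → ℕ → St) (d : Bool) (t : ℕ) (i : ℤ) : Option St :=
  if h : ∃ k, pos k t = i ∧ dir (st k (t + 1)).1 = d then some (st h.choose (t + 1)) else none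

noncomputable def xs (pos : ℤ → ℕ → ℤ) (st : ℤ → ℕ → St) (t : ℕ) (i : ℤ) : Cell :=
  (slot pos st false t i, slot pos st true t i)

namespace Diag
variable {J : ℕ} {pos : ℤ → ℕ → ℤ} {st : ℤ → ℕ → St}

theorem slot_some (H : Diag J pos st) {t : ℕ} (ht : t < J) {d : Bool} {i k : ℤ}
    (h1 : pos k t = i) (h2 : dir (st k (t + 1)).1 = d) :
    slot pos st d t i = some (st k (t + 1)) := by
  have h : ∃ k, pos k t = i ∧ dir (st k (t + 1)).1 = d := ⟨k, h1, h2⟩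
  unfold slot
  rw [dif_pos h]
  have h3 := h.choose_spec
  have : h.choose = k := H.uniq ht (by rw [h3.1, h1]) (by rw [h3.2, h2])
  rw [this]

theorem slot_none {t : ℕ} {d : Bool} {i : ℤ}
    (h : ∀ k, pos k t = i → dir (st k (t + 1)).1 ≠ d) : slot pos st d t i = none := by
  unfold slot
  rw [dif_neg]
  rintro ⟨k, h1, h2⟩
  exact h k h1 h2

theorem slot_dir {t : ℕ} {d : Bool} {i : ℤ} {σ : St} (h : slot pos st d t i = some σ) :
    dir σ.1 = d := by
  unfold slot at h
  split_ifs at h with h1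
  · have := h1.choose_spec.2
    simp only [Option.some.injEq] at h
    rwa [h] at this

theorem rdR_xs (t : ℕ) (i : ℤ) : rdR (xs pos st t i) = slot pos st true t i := by
  rcases h : slot pos st true t i with _ | σ
  · simp [rdR, xs, h]
  · exact rdR_eq.2 ⟨h, slot_dir h⟩

theorem rdL_xs (t : ℕ) (i : ℤ) : rdL (xs pos st t i) = slot pos st false t i := by
  rcases h : slot pos st false t i with _ | σ
  · simp [rdL, xs, h]
  · exact rdL_eq.2 ⟨h, slot_dir h⟩

theorem evolve (H : Diag J pos st) {t : ℕ} (ht : t + 1 < J) (i : ℤ) :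
    hh (slot pos st true t (i - 1)) (slot pos st false t (i + 1)) = xs pos st (t + 1) i := by
  have ht0 : t < J := by omega
  have hs := fun k => H.step k t ht0
  -- arrivals
  have aR : ∀ k, pos k t = i - 1 → dir (st k (t + 1)).1 = true → pos k (t + 1) = i := by
    intro k h1 h2
    rw [hs k, h2, h1]; simp
  have aL : ∀ k, pos k t = i + 1 → dir (st k (t + 1)).1 = false → pos k (t + 1) = i := by
    intro k h1 h2
    rw [hs k, h2, h1]; simp
  have bR : ∀ k, pos k (t + 1) = i → dir (st k (t + 1)).1 = true → pos k t = i - 1 := by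
    intro k h1 h2
    have := hs k
    rw [h1, h2] at this; simp at this; omega
  have bL : ∀ k, pos k (t + 1) = i → dir (st k (t + 1)).1 = false → pos k t = i + 1 := by
    intro k h1 h2
    have := hs k
    rw [h1, h2] at this; simp at this; omega
  by_cases hex : ∃ k, pos k (t + 1) = i
  swap
  · push Not at hex
    rw [slot_none fun k h1 h2 => hex k (aR k h1 h2), slot_none fun k h1 h2 => hex k (aL k h1 h2)]
    unfold xs
    rw [slot_none fun k h1 _ => hex k h1, slot_none fun k h1 _ => hex k h1]
    rfl
  by_cases htwo : ∃ k, pos k (t + 1) = i ∧ pos (k + 1) (t + 1) = i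
  · obtain ⟨k, h1, h2⟩ := htwo
    have dirs : dir (st k (t + 1)).1 = true ∧ dir (st (k + 1) (t + 1)).1 = false := by
      have e1 := hs k
      have e2 := hs (k + 1)
      have e3 := H.ord k t ht0
      have e4 := H.ord' k t ht0
      rcases h5 : dir (st k (t + 1)).1 <;> rcases h6 : dir (st (k + 1) (t + 1)).1 <;>
        simp [h5, h6] at e1 e2 e4 ⊢ <;> omega
    rw [H.slot_some ht0 (bR k h1 dirs.1) dirs.1, H.slot_some ht0 (bL _ h2 dirs.2) dirs.2]
    have od := H.ord' k (t + 1) ht (by omega)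
    unfold xs
    rw [H.slot_some ht h1 od.1, H.slot_some ht h2 od.2]
    simp only [hh]
    by_cases hL : isL pos st k (t + 1)
    · have f := isL_facts hL
      rw [if_pos (show need (st k (t+1)).1 ∧ need (st (k+1) (t+1)).1 from mc_eff f.1), hL.2]
    · have t1 := H.tri k ht
      have t2 := H.tri (k + 1) ht
      rw [add_sub_cancel_right] at t2
      have s1 : ¬ need (st k (t + 1)).1 ∧ st k (t + 1 + 1) = nx (st k (t + 1)) := by
        rcases t1 with h | h | h
        · exact ⟨h.1, h.2.1⟩
        · exact absurd h.1 hL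
        · have e2 := h.1.1
          rw [sub_add_cancel] at e2
          have := H.two ht (show k - 1 < k + 1 by omega) (by omega)
          omega
      have s2 : ¬ need (st (k + 1) (t + 1)).1 ∧ st (k + 1) (t + 1 + 1) = nx (st (k + 1) (t + 1)) := by
        rcases t2 with h | h | h
        · exact ⟨h.1, h.2.1⟩
        · have e2 := h.1.1
          have := H.two ht (show k < k + 1 + 1 by omega) (by omega)
          omega
        · exact absurd h.1 hL
      rw [if_neg (fun h => s1.1 h.1), if_pos, s1.2, s2.2]
      rw [s1.2, s2.2] at od
      exact ⟨s1.1, s2.1, od.1, od.2⟩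
  · obtain ⟨k, h1⟩ := hex
    push Not at htwo
    have huniq : ∀ k', pos k' (t + 1) = i → k' = k := by
      intro k' h2
      rcases lt_trichotomy k k' with h | h | h
      · obtain rfl := H.two ht h (by omega)
        exact absurd h2 (htwo k h1)
      · exact h.symm
      · obtain rfl := H.two ht h (by omega)
        exact absurd h1 (htwo k' h2)
    have sol : ¬ need (st k (t + 1)).1 ∧ st k (t + 1 + 1) = nx (st k (t + 1)) := by
      rcases H.tri k ht with h | h | h
      · exact ⟨h.1, h.2.1⟩
      · have := huniq (k + 1) (by rw [h.1.1, h1])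
        omega
      · have e2 := h.1.1
        rw [sub_add_cancel] at e2
        have := huniq (k - 1) (by omega)
        omega
    have hx : xs pos st (t + 1) i = place (nx (st k (t + 1))) := by
      unfold xs place
      rcases hd : dir (st k (t + 1 + 1)).1
      · rw [H.slot_some ht h1 hd, slot_none, ← sol.2, if_neg (by simp [hd])]
        intro k' h2
        rw [huniq k' h2, hd]; simp
      · rw [H.slot_some ht h1 hd, slot_none, ← sol.2, if_pos hd]
        intro k' h2
        rw [huniq k' h2, hd]; simp
    rw [hx]
    rcases hd : dir (st k (t + 1)).1
    · rw [H.slot_some ht0 (bL k h1 hd) hd, slot_none]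
      · simp [hh, sol.1]
      · intro k' h2 h3
        have := huniq k' (aR k' h2 h3)
        rw [this, hd] at h3; cases h3
    · rw [H.slot_some ht0 (bR k h1 hd) hd, slot_none]
      · simp [hh, sol.1]
      · intro k' h2 h3
        have := huniq k' (aL k' h2 h3)
        rw [this, hd] at h3; cases h3

theorem alive (H : Diag J pos st) {t : ℕ} (ht : t < J) : xs pos st t (pos 0 t) ≠ (none, none) := by
  intro h
  unfold xs at h
  simp only [Prod.mk.injEq] at h
  rcases hd : dir (st 0 (t + 1)).1
  · rw [H.slot_some ht rfl hd] at h; simp at h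
  · rw [H.slot_some ht rfl hd] at h; simp at h

theorem not_nil (H : Diag J pos st) {m : ℕ} (E : Cell ≃ Fin (m + 1)) {t : ℕ} (ht : t < J) :
    ∃ x, (Ph E)^[t] x ≠ fun _ => Bl E := by
  have key : ∀ s, s < J → (Ph E)^[s] (fun i => E (xs pos st 0 i)) = fun i => E (xs pos st s i) := by
    intro s
    induction s with
    | zero => intro _; rfl
    | succ s ih =>
      intro hs
      rw [Function.iterate_succ_apply', ih (by omega)]
      funext i
      simp only [Ph, Equiv.symm_apply_apply, rdR_xs, rdL_xs]
      rw [H.evolve hs]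
  refine ⟨fun i => E (xs pos st 0 i), fun h => ?_⟩
  rw [key t ht] at h
  have := congrFun h (pos 0 t)
  simp only [Bl, EmbeddingLike.apply_eq_iff_eq] at this
  exact H.alive ht this

end Diag

theorem base : Diag 1 (fun k j => 4 * k + j) (fun _ j =>
    (⟨false, if j = 0 then 13 else 14, true, Ef.none⟩, ⟨false, 13, true, Ef.none⟩)) where
  step := by
    intro k j hj
    have : j = 0 := by omega
    subst this
    simp [dir]
  tr := by
    intro k j hj
    have : j = 0 := by omega
    subst this
    left
    constructor
    · simp [need, suc, eff]
    · simp [nx, suc]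
  ord := by intro k j hj; omega
  ord' := by intro k j hj h; omega
  par := by intro k j hj; omega
  init := by intro k; simp [fx, upd]

end UE
namespace UE
open Classical

theorem gap_in (d : Bool) (e e' : Ef) (i : ℕ) (hi : i < 212) : ps false d i ≤ ps true d i ∧
    (ps false d i = ps true d i →
      dir ⟨false, ⟨i, hi⟩, d, e⟩ = false ∧ dir ⟨true, ⟨i, hi⟩, d, e'⟩ = true) := by
  have key : ps false d i ≤ ps true d i ∧ (ps false d i = ps true d i → i = 0 ∨ i = 8) := by
    unfold ps
    cases d <;> simp only [sg_true, sg_false] <;> split_ifs <;> constructor <;> omega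
  refine ⟨key.1, fun h => ?_⟩
  rcases key.2 h with h | h <;> subst h <;> simp [dir]

theorem gap_out (Δ : ℤ) (d d' : Bool) (e e' : Ef) (i : ℕ) (hi : i < 212) (h0 : 0 ≤ Δ)
    (h2 : Δ % 2 = 0) (hd : Δ = 0 → d = false ∧ d' = true) :
    ps true d i ≤ 196 * Δ + 8 + ps false d' i ∧
    (ps true d i = 196 * Δ + 8 + ps false d' i →
      dir ⟨true, ⟨i, hi⟩, d, e⟩ = false ∧ dir ⟨false, ⟨i, hi⟩, d', e'⟩ = true) := by
  have key : ps true d i ≤ 196 * Δ + 8 + ps false d' i ∧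
      (ps true d i = 196 * Δ + 8 + ps false d' i → i = 4 ∨ (i = 12 ∧ Δ = 0) ∨ i = 208) := by
    rcases eq_or_ne Δ 0 with h | h
    · obtain ⟨rfl, rfl⟩ := hd h
      subst h
      have : ps true false i ≤ 196 * 0 + 8 + ps false true i ∧
          (ps true false i = 196 * 0 + 8 + ps false true i → i = 4 ∨ i = 12) := by
        unfold ps
        simp only [sg_true, sg_false]; split_ifs <;> refine ⟨?_, fun hz => ?_⟩ <;> omega
      exact ⟨this.1, fun hz => (this.2 hz).imp id (fun h => Or.inl ⟨h, rfl⟩)⟩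
    · have : 2 ≤ Δ := by omega
      unfold ps
      cases d <;> cases d' <;> simp only [sg_true, sg_false] <;> split_ifs <;> constructor <;> omega
  refine ⟨key.1, fun h => ?_⟩
  rcases key.2 h with h | ⟨h, h'⟩ | h
  · subst h; simp [dir]
  · obtain ⟨rfl, rfl⟩ := hd h'
    subst i; simp [dir]
  · subst h; simp [dir]

theorem ps_par (r d : Bool) (i : ℕ) : (ps r d i - i) % 2 = 0 := by
  unfold ps
  cases r <;> cases d <;> simp only [sg_true, sg_false] <;> split_ifs <;> omega

section Refinement
variable (pos : ℤ → ℕ → ℤ) (st : ℤ → ℕ → St)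

def Ap (k : ℤ) (j : ℕ) : Adr := suc (st k j).1

noncomputable def pay (k : ℤ) (j : ℕ) (r : Bool) (τ : ℕ) : Adr :=
  if r = false then
    if isL pos st (k - 1) j then
      if τ < 4 then Ap st k j else if τ < 8 then (st (k - 1) j).2
      else if τ < 12 then (st (k - 1) (j + 1)).2 else (st k (j + 1)).1
    else Ap st k j
  else
    if isL pos st k j then
      if τ < 4 then (st k j).2 else if τ < 12 then Ap st (k + 1) j else (st k (j + 1)).2
    else if isL pos st (k - 1) j then
      if τ < 8 then (st k j).2 else (st k (j + 1)).2
    else (st k j).2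

noncomputable def stg (k : ℤ) (r : Bool) : ℕ → St
  | 0 => (⟨r, 211, true, Ef.none⟩, if r then (st k 0).2 else (st k 0).1)
  | n + 1 => (⟨r, ⟨n % 212, Nat.mod_lt _ (by norm_num)⟩, dir (Ap st k (n / 212)),
      eff (Ap st k (n / 212))⟩, pay pos st k (n / 212) r (n % 212))

noncomputable def posg (k : ℤ) (r : Bool) (n : ℕ) : ℤ :=
  196 * pos k (n / 212) + 8 * k + ps r (dir (Ap st k (n / 212))) (n % 212)

noncomputable def stR (κ : ℤ) (n : ℕ) : St := stg pos st (κ / 2) (decide (κ % 2 = 1)) n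
noncomputable def posR (κ : ℤ) (n : ℕ) : ℤ := posg pos st (κ / 2) (decide (κ % 2 = 1)) n

theorem stR_e (k : ℤ) : stR pos st (2 * k) = stg pos st k false := by
  funext n
  unfold stR
  rw [show 2 * k / 2 = k by omega, decide_eq_false (by omega)]
theorem stR_o (k : ℤ) : stR pos st (2 * k + 1) = stg pos st k true := by
  funext n
  unfold stR
  rw [show (2 * k + 1) / 2 = k by omega, decide_eq_true (by omega)]
theorem posR_e (k : ℤ) : posR pos st (2 * k) = posg pos st k false := by
  funext n
  unfold posR
  rw [show 2 * k / 2 = k by omega, decide_eq_false (by omega)]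
theorem posR_o (k : ℤ) : posR pos st (2 * k + 1) = posg pos st k true := by
  funext n
  unfold posR
  rw [show (2 * k + 1) / 2 = k by omega, decide_eq_true (by omega)]
theorem stR_e1 (k : ℤ) : stR pos st (2 * k + 1 + 1) = stg pos st (k + 1) false := by
  rw [← stR_e]; congr 1; ring
theorem posR_e1 (k : ℤ) : posR pos st (2 * k + 1 + 1) = posg pos st (k + 1) false := by
  rw [← posR_e]; congr 1; ring

theorem stg_mid (k : ℤ) (r : Bool) (j i : ℕ) (hi : i < 212) : stg pos st k r (212 * j + i + 1) =
    (⟨r, ⟨i, hi⟩, dir (Ap st k j), eff (Ap st k j)⟩, pay pos st k j r i) := by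
  unfold stg
  have h1 : (212 * j + i) / 212 = j := by omega
  have h2 : (212 * j + i) % 212 = i := by omega
  simp only [h1, h2]

variable {pos} {st} {J : ℕ}

theorem dir_Ap (H : Diag J pos st) (k : ℤ) {j : ℕ} (hj : j < J) :
    dir (st k (j + 1)).1 = dir (Ap st k j) := by
  rcases H.tri k hj with h | h | h
  · rw [h.2.1]; rfl
  · rw [(isL_facts h.1).2.2.1, dir_upd]; rfl
  · have := (isL_facts h.1).2.2.2
    rw [sub_add_cancel] at this
    rw [this, dir_upd]; rfl

theorem posg_mid (H : Diag J pos st) (k : ℤ) (r : Bool) (j i : ℕ) (hj : j < J) (hi : i ≤ 212) :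
    posg pos st k r (212 * j + i) = 196 * pos k j + 8 * k + ps r (dir (Ap st k j)) i := by
  unfold posg
  rcases Nat.lt_or_ge i 212 with h | h
  · have h1 : (212 * j + i) / 212 = j := by omega
    have h2 : (212 * j + i) % 212 = i := by omega
    simp only [h1, h2]
  · have h0 : i = 212 := by omega
    subst h0
    have h1 : (212 * j + 212) / 212 = j + 1 := by omega
    have h2 : (212 * j + 212) % 212 = 0 := by omega
    simp only [h1, h2]
    rw [Lev.ps_end, H.step k j hj, dir_Ap H k hj]
    simp [ps]; ring

theorem fin_true (H : Diag J pos st) (k : ℤ) {j : ℕ} (hj : j < J) :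
    pay pos st k j true 211 = (st k (j + 1)).2 := by
  rcases H.tri k hj with h | h | h
  · simp [pay, h.2.2.1, h.2.2.2, h.2.1, nx]
  · simp [pay, h.1]
  · simp [pay, h.1, h.2]

theorem fin_false (H : Diag J pos st) (k : ℤ) {j : ℕ} (hj : j < J) :
    fx (pay pos st k j false 211) (st k (j + 1)).2 = (st k (j + 1)).1 := by
  rcases H.tri k hj with h | h | h
  · have h0 : eff (Ap st k j) = Ef.none := by
      have := h.1; unfold need at this; exact not_not.1 this
    simp only [pay, h.2.2.2, if_false, if_true]
    rw [fx_of_ne (τ_ne_of_eff h0), h.2.1]; rfl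
  · have f := isL_facts h.1
    have g := (mc_facts f.1).2.2.2.2.1
    simp only [pay, h.2, if_false, if_true]
    rw [f.2.2.1]
    change fx (Ap st k j) _ = upd (Ap st k j) _
    change (Ap st k j).τ = 0 → (Ap st k j).r = false at g
    by_cases h0 : (Ap st k j).τ = 0
    · simp [fx, g h0]
    · rw [fx_of_ne h0, upd_of_ne h0]
  · have f := isL_facts h.1
    rw [sub_add_cancel] at f
    have g := (mc_facts f.1).2.2.2.2.2
    simp only [pay, h.1, if_true]
    norm_num
    by_cases h0 : (st k (j + 1)).1.τ = 0
    · have : (st k (j + 1)).1.r = true := by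
        rw [f.2.2.2, upd_τ] at h0
        rw [f.2.2.2, upd_r]
        exact g h0
      simp [fx, this]
    · rw [fx_of_ne h0]

theorem stg_begin (H : Diag J pos st) (k : ℤ) {j : ℕ} (hj : j ≤ J) :
    ∃ d e p, stg pos st k false (212 * j) = (⟨false, 211, d, e⟩, p) ∧
      stg pos st k true (212 * j) = (⟨true, 211, d, e⟩, (st k j).2) ∧
      fx p (st k j).2 = (st k j).1 := by
  rcases j with _ | j
  · exact ⟨true, Ef.none, (st k 0).1, by simp [stg], by simp [stg], H.init k⟩
  · have h1 := fun r => stg_mid pos st k r j 211 (by norm_num)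
    rw [show 212 * j + 211 + 1 = 212 * (j + 1) by ring] at h1
    refine ⟨_, _, _, h1 false, ?_, fin_false H k hj⟩
    rw [h1 true, fin_true H k hj]; rfl

theorem isL_mk {k : ℤ} {j : ℕ} {a b c e a' b' c' e' : Adr} (hp : pos (k + 1) j = pos k j)
    (h1 : st k j = (a, b)) (h2 : st (k + 1) j = (c, e)) (h3 : st k (j + 1) = (a', b'))
    (h4 : st (k + 1) (j + 1) = (c', e')) (hm : mc (suc a) (suc c))
    (ha : act (eff (suc a)) b e = some (b', e')) (h5 : a' = upd (suc a) b')
    (h6 : c' = upd (suc c) b') : isL pos st k j := by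
  refine ⟨hp, ?_⟩
  rw [h1, h2, h3, h4]
  exact (meet_iff _ _ _ _ _ _).2 ⟨hm, _, _, ha, by rw [h5], by rw [h6]⟩

theorem suc_mid (r d : Bool) (e : Ef) (i : ℕ) (hi : i + 1 < 212) :
    suc ⟨r, ⟨i, by omega⟩, d, e⟩ = ⟨r, ⟨i + 1, hi⟩, d, e⟩ := by
  simp only [suc, Adr.mk.injEq, true_and, and_true]
  apply Fin.ext
  rw [Fin.val_add]
  simp; omega

theorem L0 (H : Diag J pos st) (k : ℤ) {j : ℕ} (hj : j < J) :
    isL (posR pos st) (stR pos st) (2 * k) (212 * j) := by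
  obtain ⟨d, e, p, h1, h2, h3⟩ := stg_begin H k hj.le
  have m := fun r => stg_mid pos st k r j 0 (by norm_num)
  have s : ∀ r, suc ⟨r, 211, d, e⟩ = ⟨r, 0, d, e⟩ := fun r => by simp [suc]
  have p1 : pay pos st k j false 0 = Ap st k j := by simp [pay]
  have p2 : pay pos st k j true 0 = (st k j).2 := by simp [pay]
  refine isL_mk (a := ⟨false, 211, d, e⟩) (c := ⟨true, 211, d, e⟩) (b := p) (e := (st k j).2)
    ?_ (by rw [stR_e, h1]) (by rw [stR_o, h2]) ((congrFun (stR_e _ _ _) _).trans (m false))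
    ((congrFun (stR_o _ _ _) _).trans (m true)) ?_ ?_ ?_ ?_
  · rw [posR_e, posR_o]
    have := fun r => posg_mid H k r j 0 hj (by norm_num)
    simp only [add_zero] at this
    rw [this, this]; simp [ps]
  · rw [s, s]; simp [mc]
  · rw [s, p1, p2]
    simp [eff, act, h3, Ap]
  · rw [s, p1]; simp [upd]
  · rw [s, p1]; simp [upd]

theorem L8 (H : Diag J pos st) (k : ℤ) {j : ℕ} (hj : j < J) :
    isL (posR pos st) (stR pos st) (2 * k) (212 * j + 8) := by
  have m := fun r => stg_mid pos st k r j 7 (by norm_num)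
  have m' := fun r => stg_mid pos st k r j 8 (by norm_num)
  have s : ∀ r d e, suc ⟨r, ⟨7, by norm_num⟩, d, e⟩ = ⟨r, 8, d, e⟩ := fun r d e =>
    suc_mid r d e 7 (by norm_num)
  refine isL_mk ?_ ((congrFun (stR_e _ _ _) _).trans (m false)) ((congrFun (stR_o _ _ _) _).trans (m true))
    ((congrFun (stR_e _ _ _) _).trans (m' false)) ((congrFun (stR_o _ _ _) _).trans (m' true)) ?_ ?_ ?_ ?_
  · rw [posR_e, posR_o, posg_mid H k _ j 8 hj (by norm_num), posg_mid H k _ j 8 hj (by norm_num)]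
    simp [ps]
  · rw [s, s]; simp [mc]
  · rw [s, Lev.eff8]
    rcases H.tri k hj with h | h | h
    · have h0 : eff (Ap st k j) = Ef.none := by
        have := h.1; unfold need at this; exact not_not.1 this
      simp [h0, act, pay, h.2.2.1, h.2.2.2]
    · have f := isL_facts h.1
      have g := mc_facts f.1
      change _ ∧ eff (Ap st k j) ≠ _ ∧ dir (Ap st k j) = _ ∧ _ at g
      have f1 : mc (Ap st k j) (Ap st (k + 1) j) := f.1
      simp [g.2.1, g.2.2.1, act, pay, h.1, h.2, f1]
    · have f := isL_facts h.1
      have g := mc_facts f.1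
      rw [sub_add_cancel] at f g
      change eff (Ap st (k - 1) j) = eff (Ap st k j) ∧ eff (Ap st (k - 1) j) ≠ _ ∧ _ ∧
        dir (Ap st k j) = _ ∧ _ at g
      have f1 := f.2.1
      change act (eff (Ap st (k - 1) j)) _ _ = _ at f1
      have g1 := g.2.1
      rw [g.1] at f1 g1
      simp [g1, g.2.2.2.1, pay, h.1, h.2, f1]
  · rw [s, upd_of_ne (by simp)]; rfl
  · rw [s, upd_of_ne (by simp)]; rfl

theorem eff4 {e : Ef} (h : e ≠ Ef.none) : eff ⟨true, 4, false, e⟩ = Ef.swap := by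
  simp [eff, Kact, h]
theorem eff12 {e : Ef} (h : e ≠ Ef.none) : eff ⟨true, 12, false, e⟩ = Ef.swapfl := by
  simp [eff, Kact, h]

theorem L4 (H : Diag J pos st) (k : ℤ) {j : ℕ} (hj : j < J) (hL : isL pos st k j) :
    isL (posR pos st) (stR pos st) (2 * k + 1) (212 * j + 4) := by
  have m := fun k r => stg_mid pos st k r j 3 (by norm_num)
  have m' := fun k r => stg_mid pos st k r j 4 (by norm_num)
  have s : ∀ r d e, suc ⟨r, ⟨3, by norm_num⟩, d, e⟩ = ⟨r, 4, d, e⟩ := fun r d e =>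
    suc_mid r d e 3 (by norm_num)
  have f := isL_facts hL
  have g := mc_facts f.1
  change eff (Ap st k j) = eff (Ap st (k + 1) j) ∧ eff (Ap st k j) ≠ _ ∧ dir (Ap st k j) = _ ∧
    dir (Ap st (k + 1) j) = _ ∧ _ at g
  refine isL_mk ?_ ((congrFun (stR_o _ _ _) _).trans (m k true)) ((congrFun (stR_e1 _ _ _) _).trans (m (k + 1) false))
    ((congrFun (stR_o _ _ _) _).trans (m' k true)) ((congrFun (stR_e1 _ _ _) _).trans (m' (k + 1) false)) ?_ ?_ ?_ ?_
  · rw [posR_e1, posR_o, posg_mid H _ _ j 4 hj (by norm_num), posg_mid H k _ j 4 hj (by norm_num),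
      hL.1]
    simp [ps]; ring
  · rw [s, s]; simp [mc, g.1, g.2.2.1, g.2.2.2.1]
    rw [← g.1]; exact g.2.1
  · rw [s, g.2.2.1, eff4 g.2.1]
    simp [act, pay, hL]
  · rw [s, upd_of_ne (by simp)]; rfl
  · rw [s, upd_of_ne (by simp)]; rfl

theorem L12 (H : Diag J pos st) (k : ℤ) {j : ℕ} (hj : j < J) (hL : isL pos st k j) :
    isL (posR pos st) (stR pos st) (2 * k + 1) (212 * j + 12) := by
  have m := fun k r => stg_mid pos st k r j 11 (by norm_num)
  have m' := fun k r => stg_mid pos st k r j 12 (by norm_num)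
  have s : ∀ r d e, suc ⟨r, ⟨11, by norm_num⟩, d, e⟩ = ⟨r, 12, d, e⟩ := fun r d e =>
    suc_mid r d e 11 (by norm_num)
  have f := isL_facts hL
  have g := mc_facts f.1
  change eff (Ap st k j) = eff (Ap st (k + 1) j) ∧ eff (Ap st k j) ≠ _ ∧ dir (Ap st k j) = _ ∧
    dir (Ap st (k + 1) j) = _ ∧ _ at g
  refine isL_mk ?_ ((congrFun (stR_o _ _ _) _).trans (m k true)) ((congrFun (stR_e1 _ _ _) _).trans (m (k + 1) false))
    ((congrFun (stR_o _ _ _) _).trans (m' k true)) ((congrFun (stR_e1 _ _ _) _).trans (m' (k + 1) false)) ?_ ?_ ?_ ?_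
  · rw [posR_e1, posR_o, posg_mid H _ _ j 12 hj (by norm_num), posg_mid H k _ j 12 hj (by norm_num),
      hL.1]
    simp [ps]; ring
  · rw [s, s]; simp [mc, g.1, g.2.2.1, g.2.2.2.1]
    rw [← g.1]; exact g.2.1
  · rw [s, g.2.2.1, eff12 g.2.1]
    simp [act, pay, hL, f.2.2.2, Ap]
  · rw [s, upd_of_ne (by simp)]; rfl
  · rw [s, upd_of_ne (by simp)]; rfl

theorem solo_mk (k : ℤ) (r : Bool) (j i : ℕ) (hi : i + 1 < 212)
    (he : eff ⟨r, ⟨i + 1, hi⟩, dir (Ap st k j), eff (Ap st k j)⟩ = Ef.none)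
    (hp : pay pos st k j r (i + 1) = pay pos st k j r i) :
    ¬ need (stg pos st k r (212 * j + (i + 1))).1 ∧
      stg pos st k r (212 * j + (i + 1) + 1) = nx (stg pos st k r (212 * j + (i + 1))) := by
  rw [stg_mid pos st k r j (i + 1) hi, ← add_assoc, stg_mid pos st k r j i (by omega)]
  constructor
  · unfold need
    rw [suc_mid _ _ _ _ hi, he]; simp
  · simp only [nx]
    rw [suc_mid _ _ _ _ hi, hp]

theorem tr_false (H : Diag J pos st) (k : ℤ) {n : ℕ} (hn : n < 212 * J) :
    (¬ need (stg pos st k false n).1 ∧ stg pos st k false (n + 1) = nx (stg pos st k false n)) ∨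
    isL (posR pos st) (stR pos st) (2 * k) n ∨
    isL (posR pos st) (stR pos st) (2 * (k - 1) + 1) n := by
  obtain ⟨j, i, hi, rfl⟩ : ∃ j i, i < 212 ∧ n = 212 * j + i := ⟨n / 212, n % 212, by omega, by omega⟩
  have hj : j < J := by omega
  rcases i with _ | i
  · exact Or.inr (Or.inl (L0 H k hj))
  by_cases h8 : i + 1 = 8
  · rw [h8]; exact Or.inr (Or.inl (L8 H k hj))
  by_cases hR : isL pos st (k - 1) j
  · by_cases h4 : i + 1 = 4
    · rw [h4]; exact Or.inr (Or.inr (L4 H (k - 1) hj hR))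
    by_cases h12 : i + 1 = 12
    · rw [h12]; exact Or.inr (Or.inr (L12 H (k - 1) hj hR))
    left
    apply solo_mk k false j i hi
    · exact effn ⟨by simp, h4, h8, h12⟩
    · simp only [pay, hR, if_true]
      split_ifs <;> first | rfl | omega
  · left
    apply solo_mk k false j i hi
    · apply effn' ⟨by simp, h8⟩
      rcases H.tri k hj with h | h | h
      · left
        have := h.1; unfold need at this; exact not_not.1 this
      · right; exact (mc_facts (isL_facts h.1).1).2.2.1
      · exact absurd h.1 hR
    · simp [pay, hR]

theorem tr_true (H : Diag J pos st) (k : ℤ) {n : ℕ} (hn : n < 212 * J) :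
    (¬ need (stg pos st k true n).1 ∧ stg pos st k true (n + 1) = nx (stg pos st k true n)) ∨
    isL (posR pos st) (stR pos st) (2 * k + 1) n ∨
    isL (posR pos st) (stR pos st) (2 * k) n := by
  obtain ⟨j, i, hi, rfl⟩ : ∃ j i, i < 212 ∧ n = 212 * j + i := ⟨n / 212, n % 212, by omega, by omega⟩
  have hj : j < J := by omega
  rcases i with _ | i
  · exact Or.inr (Or.inr (L0 H k hj))
  by_cases h8 : i + 1 = 8
  · rw [h8]; exact Or.inr (Or.inr (L8 H k hj))
  by_cases hL : isL pos st k j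
  · by_cases h4 : i + 1 = 4
    · rw [h4]; exact Or.inr (Or.inl (L4 H k hj hL))
    by_cases h12 : i + 1 = 12
    · rw [h12]; exact Or.inr (Or.inl (L12 H k hj hL))
    left
    apply solo_mk k true j i hi
    · exact effn ⟨by simp, h4, h8, h12⟩
    · simp only [pay, hL, if_true]
      split_ifs <;> first | rfl | omega
  · left
    apply solo_mk k true j i hi
    · apply effn' ⟨by simp, h8⟩
      rcases H.tri k hj with h | h | h
      · left
        have := h.1; unfold need at this; exact not_not.1 this
      · exact absurd h.1 hL
      · right
        have := (mc_facts (isL_facts h.1).1).2.2.2.1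
        rw [sub_add_cancel] at this
        exact this
    · simp only [pay, hL, if_false, Bool.true_eq_false]
      split_ifs <;> first | rfl | omega

theorem step_g (H : Diag J pos st) (k : ℤ) (r : Bool) {n : ℕ} (hn : n < 212 * J) :
    posg pos st k r (n + 1) = posg pos st k r n + sg (dir (stg pos st k r (n + 1)).1) := by
  obtain ⟨j, i, hi, rfl⟩ : ∃ j i, i < 212 ∧ n = 212 * j + i := ⟨n / 212, n % 212, by omega, by omega⟩
  have hj : j < J := by omega
  rw [stg_mid pos st k r j i hi, posg_mid H k r j i hj hi.le, add_assoc,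
    posg_mid H k r j (i + 1) hj hi]
  have := ps_succ r (dir (Ap st k j)) (eff (Ap st k j)) ⟨i, hi⟩
  simp only at this
  rw [this]; ring

theorem ord_in (H : Diag J pos st) (k : ℤ) {n : ℕ} (hn : n < 212 * J) :
    posg pos st k false n ≤ posg pos st k true n ∧
    (posg pos st k false n = posg pos st k true n → dir (stg pos st k false (n + 1)).1 = false ∧
      dir (stg pos st k true (n + 1)).1 = true) ∧
    (posg pos st k true n - posg pos st k false n) % 2 = 0 := by
  obtain ⟨j, i, hi, rfl⟩ : ∃ j i, i < 212 ∧ n = 212 * j + i := ⟨n / 212, n % 212, by omega, by omega⟩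
  have hj : j < J := by omega
  rw [stg_mid pos st k _ j i hi, stg_mid pos st k _ j i hi, posg_mid H k _ j i hj hi.le,
    posg_mid H k _ j i hj hi.le]
  have g := gap_in (dir (Ap st k j)) (eff (Ap st k j)) (eff (Ap st k j)) i hi
  have p1 := ps_par false (dir (Ap st k j)) i
  have p2 := ps_par true (dir (Ap st k j)) i
  exact ⟨by linarith [g.1], fun h => g.2 (by linarith), by omega⟩

theorem ord_out (H : Diag J pos st) (k : ℤ) {n : ℕ} (hn : n < 212 * J) :
    posg pos st k true n ≤ posg pos st (k + 1) false n ∧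
    (posg pos st k true n = posg pos st (k + 1) false n →
      dir (stg pos st k true (n + 1)).1 = false ∧
      dir (stg pos st (k + 1) false (n + 1)).1 = true) ∧
    (posg pos st (k + 1) false n - posg pos st k true n) % 2 = 0 := by
  obtain ⟨j, i, hi, rfl⟩ : ∃ j i, i < 212 ∧ n = 212 * j + i := ⟨n / 212, n % 212, by omega, by omega⟩
  have hj : j < J := by omega
  rw [stg_mid pos st k _ j i hi, stg_mid pos st _ _ j i hi, posg_mid H k _ j i hj hi.le,
    posg_mid H _ _ j i hj hi.le]
  have o := H.ord k j hj
  have o' := H.ord' k j hj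
  rw [dir_Ap H k hj, dir_Ap H _ hj] at o'
  have g := gap_out (pos (k + 1) j - pos k j) (dir (Ap st k j)) (dir (Ap st (k + 1) j))
    (eff (Ap st k j)) (eff (Ap st (k + 1) j)) i hi (by omega) (H.par k j hj)
    (fun h => o' (by omega))
  have p1 := ps_par false (dir (Ap st (k + 1) j)) i
  have p2 := ps_par true (dir (Ap st k j)) i
  exact ⟨by linarith [g.1], fun h => g.2 (by linarith), by omega⟩

theorem refineD (H : Diag J pos st) : Diag (212 * J) (posR pos st) (stR pos st) where
  step κ n hn := step_g H _ _ hn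
  tr κ n hn := by
    obtain ⟨k, rfl | rfl⟩ : ∃ k, κ = 2 * k ∨ κ = 2 * k + 1 := ⟨κ / 2, by omega⟩
    · have := tr_false H k hn
      rw [stR_e, show 2 * k - 1 = 2 * (k - 1) + 1 by ring]
      exact this
    · rw [stR_o, add_sub_cancel_right]
      exact tr_true H k hn
  ord κ n hn := by
    obtain ⟨k, rfl | rfl⟩ : ∃ k, κ = 2 * k ∨ κ = 2 * k + 1 := ⟨κ / 2, by omega⟩
    · rw [posR_e, posR_o]; exact (ord_in H k hn).1
    · rw [posR_o, posR_e1]; exact (ord_out H k hn).1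
  ord' κ n hn := by
    obtain ⟨k, rfl | rfl⟩ : ∃ k, κ = 2 * k ∨ κ = 2 * k + 1 := ⟨κ / 2, by omega⟩
    · rw [posR_e, posR_o, stR_e, stR_o]; exact (ord_in H k hn).2.1
    · rw [posR_o, posR_e1, stR_o, stR_e1]; exact (ord_out H k hn).2.1
  par κ n hn := by
    obtain ⟨k, rfl | rfl⟩ : ∃ k, κ = 2 * k ∨ κ = 2 * k + 1 := ⟨κ / 2, by omega⟩
    · rw [posR_e, posR_o]; exact (ord_in H k hn).2.2
    · rw [posR_o, posR_e1]; exact (ord_out H k hn).2.2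
  init κ := by
    simp only [stR, stg]
    exact fx_of_ne (by simp)

end Refinement

theorem exists_Diag (n : ℕ) : ∃ pos st, Diag (212 ^ n) pos st := by
  induction n with
  | zero => exact ⟨_, _, by simpa using base⟩
  | succ n ih =>
    obtain ⟨pos, st, H⟩ := ih
    exact ⟨_, _, by rw [pow_succ, mul_comm]; exact refineD H⟩

end UE

/-- There exists a cellular automaton (a continuous, shift-commuting map
on `α^ℤ` for a finite alphabet `α = Fin (m+1)`) with a quiescent state `B` which is
uniquely ergodic but not nilpotent. -/
theorem exists_uniquelyErgodic_not_nilpotent_CA :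
    ∃ (m : ℕ) (B : Fin (m + 1)) (Φ : (ℤ → Fin (m + 1)) → (ℤ → Fin (m + 1))),
      Continuous Φ ∧
      (∀ x : ℤ → Fin (m + 1), Φ (fun i => x (i + 1)) = fun i => Φ x (i + 1)) ∧
      Φ (fun _ => B) = (fun _ => B) ∧
      (∃! μ : Measure (ℤ → Fin (m + 1)), IsProbabilityMeasure μ ∧
          ∀ A : Set (ℤ → Fin (m + 1)), MeasurableSet A → μ (Φ ⁻¹' A) = μ A) ∧
      ¬ (∃ n : ℕ, ∀ x : ℤ → Fin (m + 1), Φ^[n] x = fun _ => B) := by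
  obtain ⟨m, ⟨E⟩⟩ := UE.exists_E
  refine ⟨m, UE.Bl E, UE.Ph E, UE.Ph_cont E, UE.Ph_shift E, UE.Ph_blank E, UE.unique_erg E, ?_⟩
  rintro ⟨n, hn⟩
  obtain ⟨pos, st, H⟩ := UE.exists_Diag n
  obtain ⟨x, hx⟩ := H.not_nil E (Nat.lt_pow_self (by norm_num) : n < 212 ^ n)
  exact hx (hn x)
end
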